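/- arXiv:math/0403181 — 5 statements merged into one kernel-verified Lean document; each statement's English description precedes it below -/
import Mathlib

section
/- On C = ℤ/27ℤ × ℤ/9ℤ × ℤ/3ℤ define the operations a∇₁b = (26a₀+3a₁+2b₀+24b₁+18a₀a₂b₁+9a₀b₁b₂+9a₁a₂b₀+18a₁b₀b₂, 8a₁+3a₂+2b₁+6b₂, 2a₂+2b₂) and a∇₂b = (26a₀+3a₁+2b₀+24b₁+9a₀a₂b₁+18a₀b₁b₂+18a₁a₂b₀+9a₁b₀b₂, 8a₁+3a₂+2b₁+6b₂, 2a₂+2b₂). Then C(∇₁) and C(∇₂) are (up to isomorphism) the only non-medial hamiltonian distributive quasigroups of order 729: every non-medial hamiltonian distributive quasigroup with exactly 729 elements is isomorphic to C(∇₁) or to C(∇₂); moreover C(∇₁) and C(∇₂) are not isomorphic, but they are anti-isomorphic (there is a bijection φ : C → C with φ(a∇₁b) = φ(b)∇₂φ(a) for all a, b). -/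
/-- A (binary operation on a nonempty set is a) quasigroup: all left and right
translations are bijections. -/
def IsQuasigroup {Q : Type*} (mul : Q → Q → Q) : Prop :=
  Nonempty Q ∧ ∀ a : Q,
    Function.Bijective (fun x => mul a x) ∧ Function.Bijective (fun x => mul x a)

/-- A subquasigroup: a nonempty subset closed under multiplication and under both
divisions (the unique solutions of `a·x = b` and `y·a = b` for `a, b ∈ P` lie in `P`). -/
def IsSubquasigroup {Q : Type*} (mul : Q → Q → Q) (P : Set Q) : Prop :=
  P.Nonempty ∧ ∀ a ∈ P, ∀ b ∈ P,
    mul a b ∈ P ∧ (∀ x, mul a x = b → x ∈ P) ∧ (∀ y, mul y a = b → y ∈ P)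

/-- A normal congruence: an equivalence relation satisfying (C1), (C2), (C3). -/
def IsNormalCongruence {Q : Type*} (mul : Q → Q → Q) (r : Q → Q → Prop) : Prop :=
  Equivalence r ∧
  (∀ a b c d, r a b → r c d → r (mul a c) (mul b d)) ∧
  (∀ a b c d, r a b → r (mul a c) (mul b d) → r c d) ∧
  (∀ a b c d, r c d → r (mul a c) (mul b d) → r a b)

/-- A subquasigroup is normal if it is an equivalence class of some normal congruence. -/
def IsNormalSubquasigroup {Q : Type*} (mul : Q → Q → Q) (P : Set Q) : Prop :=
  IsSubquasigroup mul P ∧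
  ∃ r : Q → Q → Prop, IsNormalCongruence mul r ∧ ∃ a : Q, P = {x | r a x}

/-- A quasigroup is hamiltonian if every subquasigroup is normal. -/
def IsHamiltonian {Q : Type*} (mul : Q → Q → Q) : Prop :=
  ∀ P : Set Q, IsSubquasigroup mul P → IsNormalSubquasigroup mul P

/-- The underlying set `C = ℤ/27ℤ × ℤ/9ℤ × ℤ/3ℤ`. -/
abbrev C' : Type := ZMod 27 × ZMod 9 × ZMod 3

/-- The operation `∇₁` on `C`, mixed terms computed by lifting to integers (via `ZMod.val`)
and reducing in the appropriate component. -/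
def nabla₁ (a b : C') : C' :=
  (26 * a.1 + 3 * (a.2.1.val : ZMod 27) + 2 * b.1 + 24 * (b.2.1.val : ZMod 27)
      + 18 * a.1 * (a.2.2.val : ZMod 27) * (b.2.1.val : ZMod 27)
      + 9 * a.1 * (b.2.1.val : ZMod 27) * (b.2.2.val : ZMod 27)
      + 9 * (a.2.1.val : ZMod 27) * (a.2.2.val : ZMod 27) * b.1
      + 18 * (a.2.1.val : ZMod 27) * b.1 * (b.2.2.val : ZMod 27),
   8 * a.2.1 + 3 * (a.2.2.val : ZMod 9) + 2 * b.2.1 + 6 * (b.2.2.val : ZMod 9),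
   2 * a.2.2 + 2 * b.2.2)

/-- The operation `∇₂` on `C`. -/
def nabla₂ (a b : C') : C' :=
  (26 * a.1 + 3 * (a.2.1.val : ZMod 27) + 2 * b.1 + 24 * (b.2.1.val : ZMod 27)
      + 9 * a.1 * (a.2.2.val : ZMod 27) * (b.2.1.val : ZMod 27)
      + 18 * a.1 * (b.2.1.val : ZMod 27) * (b.2.2.val : ZMod 27)
      + 18 * (a.2.1.val : ZMod 27) * (a.2.2.val : ZMod 27) * b.1
      + 9 * (a.2.1.val : ZMod 27) * b.1 * (b.2.2.val : ZMod 27),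
   8 * a.2.1 + 3 * (a.2.2.val : ZMod 9) + 2 * b.2.1 + 6 * (b.2.2.val : ZMod 9),
   2 * a.2.2 + 2 * b.2.2)

universe u

/-!
In a distributive quasigroup the operation `(x · e) ∔ (e · y) = x · y` is a commutative loop with
the inverse property (Belousov), and `x · y = f x ∔ g y` for automorphisms `f`, `g` with `x ∔ f x`
and `x ∔ g x` central. Hamiltonicity makes the associator `A` of this loop central, trilinear and
alternating, and forces `A x y z` into every `f`-invariant group of central elements that contains
`x ∔ x ∔ x` and `x ∔ f x`. At order 729 with `A ≠ 0`, counting with the map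
`x ↦ (x ∔ x ∔ x, x ∔ f x)` shows that the centre has order 27 and that points `e₀`, `e₁`, `e₂` with
prescribed defects exist. In the coordinates they give, the multiplication is determined up to the
sign of `A e₀ e₁ e₂`.

This sign is an invariant: an isomorphism fixing the base point acts on `e₀`, `e₁`, `e₂`
triangularly with the same diagonal entry `p` modulo 3, so it multiplies the associator by
`p ^ 3 ≡ p`, just as it multiplies the cyclic group containing the associator. Reversing the
multiplication changes the sign.
-/

/-- A quasigroup whose left and right translations are automorphisms. -/
structure IsDistributiveQuasigroup {Q : Type*} (mul : Q → Q → Q) : Prop where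
  bijective_left : ∀ a : Q, Function.Bijective (fun x => mul a x)
  bijective_right : ∀ a : Q, Function.Bijective (fun x => mul x a)
  left_distrib : ∀ x a b : Q, mul x (mul a b) = mul (mul x a) (mul x b)
  right_distrib : ∀ x a b : Q, mul (mul a b) x = mul (mul a x) (mul b x)

/-! ### Belousov's loop -/

section GroupIdentities

variable {G : Type*} [Group G] {a b a' b' : G}

theorem inv_mul_eq_inv_mul_of_twisted (h₁ : a * b = b' * a) (h₂ : b' * a' = a * b') :
    a⁻¹ * a' = b⁻¹ * b' := by
  have hb' : b' = a * b * a⁻¹ := eq_mul_inv_of_mul_eq h₁.symm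
  have ha' : a' = b'⁻¹ * (a * b') := eq_inv_mul_of_mul_eq h₂
  subst ha' hb'
  group

theorem commute_left_inv_mul_of_twisted (h₁ : a * b = b' * a)
    (h₃ : a * b * a * b⁻¹ = a * b' * a * b'⁻¹) : Commute a (b⁻¹ * b') := by
  have hb' : b' = a * b * a⁻¹ := eq_mul_inv_of_mul_eq h₁.symm
  subst hb'
  have hconj : Commute a (b * a * b⁻¹) := by
    have : a * (b * a * b⁻¹) = a * (a * (b * a * b⁻¹) * a⁻¹) := by
      simpa only [mul_assoc, mul_inv_rev, inv_inv, inv_mul_cancel_left] using h₃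
    exact (eq_mul_inv_iff_mul_eq.1 (mul_left_cancel this)).symm
  have hconj' : Commute (b⁻¹ * a * b) a := by
    simpa [mul_assoc] using (Commute.conj_iff b⁻¹).2 hconj
  simpa only [mul_assoc] using hconj'.symm.mul_right (Commute.refl a).inv_right

theorem commute_right_inv_mul_of_twisted (h₁ : a * b = b' * a) (h₂ : b' * a' = a * b')
    (h₄ : a * b * b' * a⁻¹ = a * b' * b' * a'⁻¹) : Commute b (b⁻¹ * b') := by
  have hb' : b' = a * b * a⁻¹ := eq_mul_inv_of_mul_eq h₁.symm
  have ha' : a' = b'⁻¹ * (a * b') := eq_inv_mul_of_mul_eq h₂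
  have hcomm : Commute b b' := by
    have : a * (b * b') * a⁻¹ = a * (b' * b) * a⁻¹ := by
      rw [← mul_assoc, h₄, ha', hb']
      group
    exact mul_left_cancel (mul_right_cancel this)
  exact (Commute.refl b).inv_right.mul_right hcomm

end GroupIdentities

namespace IsDistributiveQuasigroup

variable {Q : Type*} {mul : Q → Q → Q}

theorem mul_self (h : IsDistributiveQuasigroup mul) (x : Q) : mul x x = x :=
  ((h.bijective_right (mul x x)).1 (h.left_distrib x x x)).symm

/-- The left translation `x ↦ a · x`. -/
noncomputable def leftPerm (h : IsDistributiveQuasigroup mul) (a : Q) : Equiv.Perm Q :=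
  Equiv.ofBijective _ (h.bijective_left a)

/-- The right translation `x ↦ x · a`. -/
noncomputable def rightPerm (h : IsDistributiveQuasigroup mul) (a : Q) : Equiv.Perm Q :=
  Equiv.ofBijective _ (h.bijective_right a)

theorem leftPerm_apply (h : IsDistributiveQuasigroup mul) (a x : Q) :
    h.leftPerm a x = mul a x := rfl

theorem rightPerm_apply (h : IsDistributiveQuasigroup mul) (a x : Q) :
    h.rightPerm a x = mul x a := rfl

/-- The automorphism group of the multiplication, as a group of permutations. -/
def mulAut (mul : Q → Q → Q) : Subgroup (Equiv.Perm Q) where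
  carrier := {s | ∀ x y, s (mul x y) = mul (s x) (s y)}
  mul_mem' := fun {s s'} hs hs' x y => (congrArg s (hs' x y)).trans (hs _ _)
  one_mem' := fun _ _ => rfl
  inv_mem' := fun {s} hs x y => Equiv.Perm.inv_eq_iff_eq.2 (by simp [hs _ _])

theorem leftPerm_mem_mulAut (h : IsDistributiveQuasigroup mul) (a : Q) :
    h.leftPerm a ∈ mulAut mul := h.left_distrib a

theorem rightPerm_mem_mulAut (h : IsDistributiveQuasigroup mul) (a : Q) :
    h.rightPerm a ∈ mulAut mul := h.right_distrib a

section Loop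

variable (h : IsDistributiveQuasigroup mul) (e : Q)

/-- Belousov's loop with neutral element `e`: the principal isotope
`(x · e) ∔ (e · y) = x · y` of the quasigroup. -/
noncomputable def loopAdd (x y : Q) : Q := mul ((h.rightPerm e)⁻¹ x) ((h.leftPerm e)⁻¹ y)

/-- The permutation `y ↦ x ∔ y` of the loop. -/
noncomputable def addLeft (x : Q) : Equiv.Perm Q :=
  h.leftPerm ((h.rightPerm e)⁻¹ x) * (h.leftPerm e)⁻¹

/-- The permutation `y ↦ y ∔ x` of the loop. -/
noncomputable def addRight (x : Q) : Equiv.Perm Q :=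
  h.rightPerm ((h.leftPerm e)⁻¹ x) * (h.rightPerm e)⁻¹

local notation "L" => leftPerm h e
local notation "R" => rightPerm h e
local notation "ℓ" => addLeft h e
local notation "ρ" => addRight h e
local notation:65 x:65 " ∔ " y:66 => loopAdd h e x y

theorem leftPerm_base : L e = e := h.mul_self e

theorem rightPerm_base : R e = e := h.mul_self e

theorem loopAdd_base (x : Q) : x ∔ e = x := by
  rw [loopAdd, Equiv.Perm.inv_eq_iff_eq.2 (h.leftPerm_base e).symm]
  exact (R).apply_symm_apply x

theorem base_loopAdd (x : Q) : e ∔ x = x := by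
  rw [loopAdd, Equiv.Perm.inv_eq_iff_eq.2 (h.rightPerm_base e).symm]
  exact (L).apply_symm_apply x

theorem addLeft_base : ℓ e = 1 := Equiv.ext (h.base_loopAdd e)

theorem addRight_base : ρ e = 1 := Equiv.ext (h.loopAdd_base e)

theorem mul_eq_loopAdd (x y : Q) : mul x y = R x ∔ L y := by
  simp [loopAdd]

theorem map_loopAdd {s : Equiv.Perm Q} (hs : s ∈ mulAut mul) (hse : s e = e) (x y : Q) :
    s (x ∔ y) = s x ∔ s y := by
  have hR : ∀ x, s (R x) = R (s x) := fun x => by rw [rightPerm_apply, hs, hse]; rfl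
  have hL : ∀ x, s (L x) = L (s x) := fun x => by rw [leftPerm_apply, hs, hse]; rfl
  obtain ⟨x, rfl⟩ := (R).surjective x
  obtain ⟨y, rfl⟩ := (L).surjective y
  rw [← mul_eq_loopAdd, hR, hL, ← mul_eq_loopAdd, hs]

theorem leftPerm_loopAdd (x y : Q) : L (x ∔ y) = L x ∔ L y :=
  h.map_loopAdd e (h.leftPerm_mem_mulAut e) (h.leftPerm_base e) x y

theorem rightPerm_loopAdd (x y : Q) : R (x ∔ y) = R x ∔ R y :=
  h.map_loopAdd e (h.rightPerm_mem_mulAut e) (h.rightPerm_base e) x y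

theorem rightPerm_leftPerm (x : Q) : R (L x) = L (R x) := by
  simp only [rightPerm_apply, leftPerm_apply]
  rw [h.left_distrib, h.mul_self e]

theorem loopAdd_loopAdd_eq_left (x a b : Q) : x ∔ (a ∔ b) = (R x ∔ a) ∔ (L x ∔ b) := by
  obtain ⟨x, rfl⟩ := (R).surjective x
  obtain ⟨a, rfl⟩ := (L).surjective a
  obtain ⟨a, rfl⟩ := (R).surjective a
  obtain ⟨b, rfl⟩ := (L).surjective b
  obtain ⟨b, rfl⟩ := (L).surjective b
  rw [← leftPerm_loopAdd h e (R a), ← mul_eq_loopAdd, ← mul_eq_loopAdd, ← rightPerm_leftPerm h e a,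
    ← rightPerm_loopAdd, ← leftPerm_loopAdd, ← mul_eq_loopAdd, ← mul_eq_loopAdd,
    ← mul_eq_loopAdd, ← h.left_distrib]

theorem loopAdd_loopAdd_eq_right (x a b : Q) : (a ∔ b) ∔ x = (a ∔ R x) ∔ (b ∔ L x) := by
  obtain ⟨x, rfl⟩ := (L).surjective x
  obtain ⟨a, rfl⟩ := (R).surjective a
  obtain ⟨a, rfl⟩ := (R).surjective a
  obtain ⟨b, rfl⟩ := (R).surjective b
  obtain ⟨b, rfl⟩ := (L).surjective b
  rw [← rightPerm_loopAdd h e (R a) (L b), ← mul_eq_loopAdd, ← mul_eq_loopAdd,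
    rightPerm_leftPerm h e b, ← rightPerm_loopAdd, ← leftPerm_loopAdd, ← mul_eq_loopAdd,
    ← mul_eq_loopAdd, ← mul_eq_loopAdd, ← h.right_distrib]

theorem addLeft_loopAdd_mul_addLeft (x a : Q) : ℓ (R x ∔ a) * ℓ (L x) = ℓ x * ℓ a :=
  Equiv.ext fun b => (h.loopAdd_loopAdd_eq_left e x a b).symm

theorem addRight_loopAdd_mul_addLeft (x b : Q) : ρ (L x ∔ b) * ℓ (R x) = ℓ x * ρ b :=
  Equiv.ext fun a => (h.loopAdd_loopAdd_eq_left e x a b).symm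

theorem addRight_loopAdd_mul_addRight (x b : Q) : ρ (b ∔ L x) * ρ (R x) = ρ x * ρ b :=
  Equiv.ext fun a => (h.loopAdd_loopAdd_eq_right e x a b).symm

theorem addLeft_loopAdd_mul_addRight (x a : Q) : ℓ (a ∔ R x) * ρ (L x) = ρ x * ℓ a :=
  Equiv.ext fun b => (h.loopAdd_loopAdd_eq_right e x a b).symm

theorem addLeft_rightPerm_mul_addLeft_leftPerm (x : Q) : ℓ (R x) * ℓ (L x) = ℓ x := by
  simpa only [loopAdd_base, addLeft_base, mul_one] using h.addLeft_loopAdd_mul_addLeft e x e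

theorem addRight_leftPerm_mul_addLeft_rightPerm (x : Q) : ρ (L x) * ℓ (R x) = ℓ x := by
  simpa only [loopAdd_base, addRight_base, mul_one] using h.addRight_loopAdd_mul_addLeft e x e

theorem addRight_leftPerm_mul_addRight_rightPerm (x : Q) : ρ (L x) * ρ (R x) = ρ x := by
  simpa only [base_loopAdd, addRight_base, mul_one] using h.addRight_loopAdd_mul_addRight e x e

theorem addLeft_rightPerm_mul_addRight_leftPerm (x : Q) : ℓ (R x) * ρ (L x) = ρ x := by
  simpa only [base_loopAdd, addLeft_base, mul_one] using h.addLeft_loopAdd_mul_addRight e x e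

/-- The permutation measuring non-commutativity of the loop at `x`: it sends `y` to the `z` with
`x ∔ z = y ∔ x`. -/
noncomputable def swapPerm (x : Q) : Equiv.Perm Q := (ℓ x)⁻¹ * ρ x

local notation "σ" => swapPerm h e

theorem swapPerm_leftPerm (x : Q) : σ (L x) = σ x := by
  have hℓ := h.addLeft_rightPerm_mul_addLeft_leftPerm e x
  have hρ := h.addLeft_rightPerm_mul_addRight_leftPerm e x
  rw [swapPerm, swapPerm, ← hℓ, ← hρ]
  group

theorem swapPerm_rightPerm (x : Q) : σ (R x) = σ x := by
  rw [← swapPerm_leftPerm h e x]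
  refine inv_mul_eq_inv_mul_of_twisted ?_ ?_
  · rw [addLeft_rightPerm_mul_addLeft_leftPerm, addRight_leftPerm_mul_addLeft_rightPerm]
  · rw [addRight_leftPerm_mul_addRight_rightPerm, addLeft_rightPerm_mul_addRight_leftPerm]

theorem commute_addLeft_rightPerm_swapPerm (x : Q) : Commute (ℓ (R x)) (σ x) := by
  rw [← swapPerm_leftPerm h e x]
  refine commute_left_inv_mul_of_twisted ?_ ?_
  · rw [addLeft_rightPerm_mul_addLeft_leftPerm, addRight_leftPerm_mul_addLeft_rightPerm]
  · rw [addLeft_rightPerm_mul_addLeft_leftPerm, addLeft_rightPerm_mul_addRight_leftPerm,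
      ← addLeft_loopAdd_mul_addLeft h e x (R x), ← addLeft_loopAdd_mul_addRight h e x (R x)]
    simp

theorem commute_addLeft_leftPerm_swapPerm (x : Q) : Commute (ℓ (L x)) (σ x) := by
  rw [← swapPerm_leftPerm h e x]
  refine commute_right_inv_mul_of_twisted (a := ℓ (R x)) (a' := ρ (R x)) ?_ ?_ ?_
  · rw [addLeft_rightPerm_mul_addLeft_leftPerm, addRight_leftPerm_mul_addLeft_rightPerm]
  · rw [addRight_leftPerm_mul_addRight_rightPerm, addLeft_rightPerm_mul_addRight_leftPerm]
  · rw [addLeft_rightPerm_mul_addLeft_leftPerm, addLeft_rightPerm_mul_addRight_leftPerm,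
      ← addRight_loopAdd_mul_addLeft h e x (L x), ← addRight_loopAdd_mul_addRight h e x (L x)]
    simp

theorem commute_addLeft_swapPerm (x : Q) : Commute (ℓ x) (σ x) := by
  rw [← addLeft_rightPerm_mul_addLeft_leftPerm h e x]
  exact (h.commute_addLeft_rightPerm_swapPerm e x).mul_left
    (h.commute_addLeft_leftPerm_swapPerm e x)

/-- The right inverse of `x` in the loop. -/
noncomputable def loopNeg (x : Q) : Q := (ℓ x)⁻¹ e

local notation "ν" => loopNeg h e

theorem loopAdd_loopNeg (x : Q) : x ∔ ν x = e := (ℓ x).apply_symm_apply e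

theorem addRight_loopNeg (x : Q) : ρ (ν x) = (ℓ x)⁻¹ := by
  obtain ⟨x, rfl⟩ := (L).surjective x
  have hr := h.addRight_loopAdd_mul_addLeft e x (ν (L x))
  rw [loopAdd_loopNeg, addRight_base, one_mul, ← addLeft_rightPerm_mul_addLeft_leftPerm h e x,
    mul_assoc] at hr
  exact eq_inv_of_mul_eq_one_right (left_eq_mul.1 hr)

theorem addLeft_loopNeg (x : Q) : ℓ (ν x) = (ℓ x * σ x)⁻¹ := by
  obtain ⟨x, rfl⟩ := (R).surjective x
  have hℓ := h.addLeft_loopAdd_mul_addLeft e x (ν (R x))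
  rw [loopAdd_loopNeg, addLeft_base, one_mul, ← addLeft_rightPerm_mul_addLeft_leftPerm h e x] at hℓ
  have hσ : σ x = (ℓ (L x))⁻¹ * (ℓ (R x) * ℓ (L x) * (ℓ (R x))⁻¹) := by
    rw [← swapPerm_leftPerm, swapPerm, addLeft_rightPerm_mul_addLeft_leftPerm h e x,
      ← addRight_leftPerm_mul_addLeft_rightPerm h e x, mul_inv_cancel_right]
  rw [swapPerm_rightPerm, (h.commute_addLeft_rightPerm_swapPerm e x).eq, hσ,
    eq_inv_mul_of_mul_eq hℓ.symm]
  group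

theorem swapPerm_loopNeg (x : Q) : σ (ν x) = σ x := by
  rw [swapPerm, addLeft_loopNeg, addRight_loopNeg, inv_inv, (h.commute_addLeft_swapPerm e x).eq,
    mul_inv_cancel_right]

theorem swapPerm_mem_mulAut (x : Q) : σ x ∈ mulAut mul := by
  have hσ : σ x = L * ((h.leftPerm ((R)⁻¹ x))⁻¹ * h.rightPerm ((L)⁻¹ x)) * (R)⁻¹ := by
    rw [swapPerm, addLeft, addRight]
    group
  rw [hσ]
  exact mul_mem (mul_mem (h.leftPerm_mem_mulAut e) (mul_mem (inv_mem (h.leftPerm_mem_mulAut _))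
    (h.rightPerm_mem_mulAut _))) (inv_mem (h.rightPerm_mem_mulAut e))

theorem loopAdd_swapPerm (x y : Q) : x ∔ σ x y = y ∔ x := (ℓ x).apply_symm_apply (ρ x y)

theorem swapPerm_self (x : Q) : σ x x = x :=
  (ℓ x).symm_apply_apply x

theorem swapPerm_base (x : Q) : σ x e = e :=
  (ℓ x).symm_apply_eq.2 ((h.base_loopAdd e x).trans (h.loopAdd_base e x).symm)

theorem swapPerm_loopAdd (x y z : Q) : σ x (y ∔ z) = σ x y ∔ σ x z :=
  h.map_loopAdd e (h.swapPerm_mem_mulAut e x) (h.swapPerm_base e x) y z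

theorem swapPerm_loopAdd_self (x y : Q) : σ x (x ∔ y) = y ∔ x := by
  rw [swapPerm_loopAdd, swapPerm_self, loopAdd_swapPerm]

theorem swapPerm_swapPerm_loopAdd (x y : Q) : σ y (σ x (x ∔ y)) = x ∔ y := by
  rw [swapPerm_loopAdd_self, swapPerm_loopAdd_self]

/-- Expanding `x = (p ∔ (-p)) ∔ x` by right distributivity writes `x` as a sum of two elements
fixed by `σ x * σ p`. -/
theorem swapPerm_eq_one (p : Q) : σ p = 1 := by
  ext x
  have hx : (p ∔ R x) ∔ (ν p ∔ L x) = x := by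
    rw [← loopAdd_loopAdd_eq_right, loopAdd_loopNeg, base_loopAdd]
  have hfix₁ : σ x (σ p (p ∔ R x)) = p ∔ R x := by
    rw [← swapPerm_rightPerm, swapPerm_swapPerm_loopAdd]
  have hfix₂ : σ x (σ p (ν p ∔ L x)) = ν p ∔ L x := by
    rw [← swapPerm_leftPerm h e x, ← swapPerm_loopNeg h e p, swapPerm_swapPerm_loopAdd]
  have hfix : σ x (σ p x) = σ x x := by
    rw [swapPerm_self]
    nth_rw 2 [← hx]
    rw [swapPerm_loopAdd, swapPerm_loopAdd, hfix₁, hfix₂, hx]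
  exact (σ x).injective hfix

theorem loopAdd_comm (x y : Q) : x ∔ y = y ∔ x := by
  simpa only [swapPerm_eq_one, Equiv.Perm.one_apply] using h.loopAdd_swapPerm e x y

end Loop

end IsDistributiveQuasigroup

/-! ### Commutative inverse property loops -/

/-- A commutative loop with the inverse property, written additively; it need not be associative. -/
class CommIPLoop (Q : Type*) extends AddZeroClass Q, AddCommMagma Q, Neg Q where
  protected neg_add_cancel_left : ∀ x y : Q, -x + (x + y) = y

/-- The centre of a commutative loop: the elements associating with all others. -/
abbrev LoopCenter (Q : Type*) [CommIPLoop Q] : Type _ := AddSubmonoid.center Q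

namespace CommIPLoop

variable {Q : Type*} [CommIPLoop Q]

protected theorem neg_add_self (x : Q) : -x + x = 0 := by
  simpa only [add_zero] using CommIPLoop.neg_add_cancel_left x 0

instance : IsLeftCancelAdd Q where
  add_left_cancel x y z h := by
    rw [← CommIPLoop.neg_add_cancel_left x y, ← CommIPLoop.neg_add_cancel_left x z]
    exact congrArg (-x + ·) h

instance : InvolutiveNeg Q where
  neg_neg x := by
    rw [← add_zero (- -x), ← CommIPLoop.neg_add_self x, CommIPLoop.neg_add_cancel_left]

instance : NegZeroClass Q where
  neg_zero := by rw [← add_zero (-0), CommIPLoop.neg_add_self]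

protected theorem add_neg_cancel_left (x y : Q) : x + (-x + y) = y := by
  simpa only [neg_neg] using CommIPLoop.neg_add_cancel_left (-x) y

protected theorem add_neg_self (x : Q) : x + -x = 0 := by
  rw [add_comm, CommIPLoop.neg_add_self]

protected theorem neg_add (x y : Q) : -(x + y) = -x + -y := by
  have hx : y + -(x + y) = -x :=
    calc y + -(x + y) = -(x + y) + (x + y + -x) := by
          rw [add_comm (x + y), CommIPLoop.neg_add_cancel_left, add_comm]
      _ = -x := CommIPLoop.neg_add_cancel_left _ _
  rw [← hx, add_comm _ (-y), CommIPLoop.neg_add_cancel_left]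

protected theorem map_neg {P : Type*} [CommIPLoop P] (F : Q →+ P) (x : Q) : F (-x) = -F x :=
  add_left_cancel (a := F x)
    (by rw [← map_add, CommIPLoop.add_neg_self, CommIPLoop.add_neg_self, map_zero])

theorem map_neg_of_group {G : Type*} [AddGroup G] (F : Q →+ G) (x : Q) : F (-x) = -F x :=
  eq_neg_of_add_eq_zero_left (by rw [← map_add, CommIPLoop.neg_add_self, map_zero])

theorem mem_center_iff {c : Q} :
    c ∈ AddSubmonoid.center Q ↔ ∀ x y : Q, x + (c + y) = c + (x + y) := by
  refine ⟨fun hc x y => ?_, fun hc => ⟨fun x => add_comm c x, fun x y => ?_, fun x y => ?_⟩⟩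
  · rw [add_comm x (c + y), ← hc.left_assoc, add_comm y]
  · rw [add_comm (c + x), hc, add_comm x]
  · rw [add_comm _ c, add_comm y, hc]

theorem neg_mem_center {c : Q} (hc : c ∈ AddSubmonoid.center Q) : -c ∈ AddSubmonoid.center Q :=
  mem_center_iff.2 fun x y => add_left_cancel (a := c) (by
    rw [← mem_center_iff.1 hc, CommIPLoop.add_neg_cancel_left, CommIPLoop.add_neg_cancel_left])

instance : Neg (LoopCenter Q) := ⟨fun z => ⟨-z, neg_mem_center z.2⟩⟩

instance : AddCommGroup (LoopCenter Q) :=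
  { AddSubmonoid.center.addCommMonoid' with
    zsmul := zsmulRec
    neg_add_cancel := fun z => Subtype.ext (CommIPLoop.neg_add_self (z : Q)) }

instance : AddAction (LoopCenter Q) Q where
  zero_vadd := zero_add
  add_vadd := fun z w x => (z.2.left_assoc w x).symm

instance : VAddAssocClass (LoopCenter Q) Q Q where
  vadd_assoc z x y := (z.2.left_assoc x y).symm

instance : VAddCommClass (LoopCenter Q) Q Q where
  vadd_comm z x y := (mem_center_iff.1 z.2 x y).symm

theorem coe_vadd (z : LoopCenter Q) (x : Q) : z +ᵥ x = z + x := rfl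

theorem vadd_zero (z : LoopCenter Q) : z +ᵥ (0 : Q) = z := add_zero _

theorem neg_vadd (z : LoopCenter Q) (x : Q) : -(z +ᵥ x) = -z +ᵥ -x :=
  CommIPLoop.neg_add (z : Q) x

theorem vadd_left_injective (x : Q) : Function.Injective (fun z : LoopCenter Q => z +ᵥ x) :=
  fun z w h => Subtype.ext (add_left_cancel (a := x) (by
    rw [add_comm x, add_comm x]
    exact h))

end CommIPLoop

theorem commute_mul_of_twisted {G : Type*} [Group G] {x a w q : G} (h₁ : w * q = x * a)
    (h₂ : w⁻¹ * q⁻¹ = x⁻¹ * a⁻¹) (hcomm : Commute x q) : Commute a (x * q) := by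
  have hw : w = x * a * q⁻¹ := eq_mul_inv_of_mul_eq h₁
  have hconj : q * x * a * q⁻¹ = a * x := by
    have := congrArg (·⁻¹) h₂
    simp only [mul_inv_rev, inv_inv] at this
    rw [← this, hw]
    group
  calc a * (x * q) = q * x * a * q⁻¹ * q := by rw [hconj, mul_assoc]
    _ = x * q * a := by rw [inv_mul_cancel_right, ← hcomm.eq]

namespace CommIPLoop

variable {Q : Type*} [CommIPLoop Q]

/-- The translation `y ↦ x + y` of a commutative loop. -/
def addPerm (x : Q) : Equiv.Perm Q where
  toFun := (x + ·)
  invFun := (-x + ·)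
  left_inv := CommIPLoop.neg_add_cancel_left x
  right_inv := CommIPLoop.add_neg_cancel_left x

theorem addPerm_apply (x y : Q) : addPerm x y = x + y := rfl

theorem addPerm_neg (x : Q) : addPerm (-x) = (addPerm x)⁻¹ := Equiv.ext fun _ => rfl

theorem apply_zero_mem_center {s : Equiv.Perm Q} (hs : ∀ a : Q, Commute (addPerm a) s) :
    s 0 ∈ AddSubmonoid.center Q := by
  have hcomm : ∀ a y : Q, a + s y = s (a + y) := fun a => Equiv.ext_iff.1 (hs a).eq
  have hs_apply : ∀ y, s 0 + y = s y := fun y => by rw [add_comm, hcomm, add_zero]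
  exact mem_center_iff.2 fun x y => by rw [hs_apply, hs_apply, hcomm]

end CommIPLoop

open CommIPLoop

/-! ### Distributive quasigroups as linear forms over loops -/

/-- A linear representation `x · y = f x + g y` of a distributive quasigroup over a commutative
loop. The last field expresses that the translations of the loop distribute over `·`. -/
structure DistributiveForm {Q : Type*} [CommIPLoop Q] (mul : Q → Q → Q) where
  leftHom : Q →+ Q
  rightHom : Q →+ Q
  leftHom_surjective : Function.Surjective leftHom
  rightHom_surjective : Function.Surjective rightHom
  mul_eq : ∀ x y, mul x y = leftHom x + rightHom y
  add_add_eq : ∀ x a b, x + (a + b) = (leftHom x + a) + (rightHom x + b)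

namespace DistributiveForm

variable {Q : Type*} [CommIPLoop Q] {mul : Q → Q → Q} (D : DistributiveForm mul)

/-- The form of the opposite quasigroup. -/
def swap : DistributiveForm (fun x y => mul y x) where
  leftHom := D.rightHom
  rightHom := D.leftHom
  leftHom_surjective := D.rightHom_surjective
  rightHom_surjective := D.leftHom_surjective
  mul_eq x y := by rw [D.mul_eq, add_comm]
  add_add_eq x a b := by rw [add_comm a, D.add_add_eq, add_comm]

theorem addPerm_leftHom_add_mul (x a : Q) :
    addPerm (D.leftHom x + a) * addPerm (D.rightHom x) = addPerm x * addPerm a :=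
  Equiv.ext fun b => (D.add_add_eq x a b).symm

theorem addPerm_leftHom_mul (x : Q) :
    addPerm (D.leftHom x) * addPerm (D.rightHom x) = addPerm x :=
  Equiv.ext fun b => by
    have := D.add_add_eq x 0 b
    rw [zero_add, add_zero] at this
    exact this.symm

theorem leftHom_add_rightHom (x : Q) : D.leftHom x + D.rightHom x = x := by
  have := D.add_add_eq x 0 0
  simpa only [add_zero] using this.symm

theorem commute_addPerm_leftHom_rightHom (x : Q) :
    Commute (addPerm (D.leftHom x)) (addPerm (D.rightHom x)) :=
  (D.addPerm_leftHom_mul x).trans (D.swap.addPerm_leftHom_mul x).symm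

theorem add_rightHom_mem_center (x : Q) : x + D.rightHom x ∈ AddSubmonoid.center Q := by
  have hcomm : Commute (addPerm x) (addPerm (D.rightHom x)) := by
    rw [← D.addPerm_leftHom_mul x]
    exact (D.commute_addPerm_leftHom_rightHom x).mul_left (Commute.refl _)
  have hcenter : ∀ a, Commute (addPerm a) (addPerm x * addPerm (D.rightHom x)) := fun a => by
    refine commute_mul_of_twisted (D.addPerm_leftHom_add_mul x a) ?_ hcomm
    simpa only [← addPerm_neg, CommIPLoop.neg_add, CommIPLoop.map_neg] using
      D.addPerm_leftHom_add_mul (-x) (-a)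
  simpa only [Equiv.Perm.mul_apply, addPerm_apply, add_zero] using apply_zero_mem_center hcenter

theorem add_leftHom_mem_center (x : Q) : x + D.leftHom x ∈ AddSubmonoid.center Q :=
  D.swap.add_rightHom_mem_center x

theorem leftHom_eq_vadd_neg (x : Q) (hx : x + D.leftHom x ∈ AddSubmonoid.center Q) :
    D.leftHom x = (⟨_, hx⟩ : LoopCenter Q) +ᵥ -x := by
  rw [coe_vadd, add_comm, CommIPLoop.neg_add_cancel_left]

/-- The central defect `x + f x`, which is additive because `f x = (x + f x) +ᵥ -x` is. -/
def leftDefect : Q →+ LoopCenter Q where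
  toFun x := ⟨x + D.leftHom x, D.add_leftHom_mem_center x⟩
  map_zero' := Subtype.ext ((zero_add _).trans (map_zero D.leftHom))
  map_add' x y := by
    refine vadd_left_injective (-(x + y)) ?_
    change _ +ᵥ _ = (_ + _) +ᵥ _
    rw [← leftHom_eq_vadd_neg, CommIPLoop.neg_add, ← vadd_add_vadd_comm, ← leftHom_eq_vadd_neg,
      ← leftHom_eq_vadd_neg, map_add]

/-- The central defect `x + g x`. -/
def rightDefect : Q →+ LoopCenter Q := D.swap.leftDefect

/-- The central element `x + (x + x)`, see `add_self`. -/
def triple : Q →+ LoopCenter Q where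
  toFun x := D.leftDefect x + D.rightDefect x
  map_zero' := by rw [map_zero, map_zero, add_zero]
  map_add' x y := by rw [map_add, map_add, add_add_add_comm]

theorem leftHom_eq (x : Q) : D.leftHom x = D.leftDefect x +ᵥ -x := D.leftHom_eq_vadd_neg x _

theorem rightHom_eq (x : Q) : D.rightHom x = D.rightDefect x +ᵥ -x := D.swap.leftHom_eq x

theorem rightDefect_eq (x : Q) : D.rightDefect x = D.triple x - D.leftDefect x :=
  (add_sub_cancel_left _ _).symm

theorem mul_eq_vadd (x y : Q) :
    mul x y = (D.leftDefect x + (D.triple y - D.leftDefect y)) +ᵥ -(x + y) := by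
  rw [D.mul_eq, leftHom_eq, rightHom_eq, vadd_add_vadd_comm, ← CommIPLoop.neg_add, rightDefect_eq]

theorem triple_vadd_neg_add_neg (x : Q) : D.triple x +ᵥ (-x + -x) = x := by
  have := D.leftHom_add_rightHom x
  rwa [leftHom_eq, rightHom_eq, vadd_add_vadd_comm] at this

theorem add_self (x : Q) : x + x = D.triple x +ᵥ -x := by
  have := congrArg (fun y : Q => D.triple x +ᵥ -y) (D.triple_vadd_neg_add_neg x)
  simpa only [neg_vadd, CommIPLoop.neg_add, neg_neg, vadd_vadd, add_neg_cancel,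
    zero_vadd] using this

include D in
theorem add_self_add (x y : Q) : x + x + y = x + (x + y) := by
  obtain ⟨x, rfl⟩ := D.leftHom_surjective x
  have hdouble : addPerm (D.leftHom x + D.leftHom x) =
      addPerm (D.leftHom x) * addPerm (D.leftHom x) :=
    mul_right_cancel (b := addPerm (D.rightHom x)) <| by
      rw [addPerm_leftHom_add_mul, ← addPerm_leftHom_mul, mul_assoc, mul_assoc,
        (D.commute_addPerm_leftHom_rightHom x).eq]
  exact congrArg (· y) hdouble

end DistributiveForm

namespace IsDistributiveQuasigroup

variable {Q : Type*} {mul : Q → Q → Q} (h : IsDistributiveQuasigroup mul) (e : Q)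

/-- Belousov's loop of a distributive quasigroup at the base point `e`. -/
@[reducible] noncomputable def commIPLoop : CommIPLoop Q where
  zero := e
  add := h.loopAdd e
  neg := h.loopNeg e
  zero_add := h.base_loopAdd e
  add_zero := h.loopAdd_base e
  add_comm := h.loopAdd_comm e
  neg_add_cancel_left x y := by
    change h.addLeft e (h.loopNeg e x) (h.addLeft e x y) = y
    rw [addLeft_loopNeg, swapPerm_eq_one, mul_one]
    exact (h.addLeft e x).symm_apply_apply y

/-- The representation `x · y = (x · e) ∔ (e · y)` over Belousov's loop. -/
noncomputable def distributiveForm :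
    letI := h.commIPLoop e
    DistributiveForm mul :=
  letI := h.commIPLoop e
  { leftHom :=
      { toFun := h.rightPerm e
        map_zero' := h.rightPerm_base e
        map_add' := h.rightPerm_loopAdd e }
    rightHom :=
      { toFun := h.leftPerm e
        map_zero' := h.leftPerm_base e
        map_add' := h.leftPerm_loopAdd e }
    leftHom_surjective := (h.rightPerm e).surjective
    rightHom_surjective := (h.leftPerm e).surjective
    mul_eq := h.mul_eq_loopAdd e
    add_add_eq := h.loopAdd_loopAdd_eq_left e }

end IsDistributiveQuasigroup

namespace DistributiveForm

variable {Q : Type*} [CommIPLoop Q] {mul : Q → Q → Q} (D : DistributiveForm mul)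

/-- The restriction of `leftDefect` to the centre. -/
def centerDefect : LoopCenter Q →+ LoopCenter Q :=
  D.leftDefect.comp (AddSubmonoid.center Q).subtype

theorem leftDefect_vadd (z : LoopCenter Q) (x : Q) :
    D.leftDefect (z +ᵥ x) = D.centerDefect z + D.leftDefect x := map_add D.leftDefect (z : Q) x

theorem triple_coe (z : LoopCenter Q) : D.triple z = 3 • z := by
  refine vadd_left_injective (-(z : Q)) ?_
  change D.triple z +ᵥ _ = _ +ᵥ _
  rw [← D.add_self, coe_vadd]
  exact congrArg Subtype.val (show z + z = 3 • z + -z by abel)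

theorem triple_vadd (z : LoopCenter Q) (x : Q) : D.triple (z +ᵥ x) = 3 • z + D.triple x := by
  rw [coe_vadd, map_add, triple_coe]

theorem centerDefect_triple (x : Q) : D.centerDefect (D.triple x) = 3 • D.leftDefect x := by
  have h := congrArg D.leftDefect (D.add_self x)
  rw [map_add, leftDefect_vadd, CommIPLoop.map_neg_of_group] at h
  rw [succ_nsmul, two_nsmul, h, neg_add_cancel_right]

include D in
theorem addPerm_mem_mulAut (x : Q) : addPerm x ∈ IsDistributiveQuasigroup.mulAut mul :=
  fun a b => by
  rw [addPerm_apply, addPerm_apply, addPerm_apply, D.mul_eq, D.mul_eq, map_add, map_add,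
    D.add_add_eq]

include D in
theorem map_add_of_mem_mulAut {s : Equiv.Perm Q} (hs : s ∈ IsDistributiveQuasigroup.mulAut mul)
    (hs₀ : s 0 = 0) (x y : Q) : s (x + y) = s x + s y := by
  have hleft : ∀ x, s (D.leftHom x) = D.leftHom (s x) := fun x => by
    simpa only [D.mul_eq, hs₀, map_zero, add_zero] using hs x 0
  have hright : ∀ x, s (D.rightHom x) = D.rightHom (s x) := fun x => by
    simpa only [D.mul_eq, hs₀, map_zero, zero_add] using hs 0 x
  obtain ⟨x, rfl⟩ := D.leftHom_surjective x
  obtain ⟨y, rfl⟩ := D.rightHom_surjective y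
  rw [hleft, hright, ← D.mul_eq, ← D.mul_eq, hs]

end DistributiveForm

theorem isSubquasigroup_of_mul_mem {Q : Type*} [Finite Q] {mul : Q → Q → Q}
    (hmul : ∀ a, Function.Injective (fun x => mul a x) ∧ Function.Injective (fun x => mul x a))
    {P : Set Q} (hne : P.Nonempty) (hP : ∀ a ∈ P, ∀ b ∈ P, mul a b ∈ P) :
    IsSubquasigroup mul P := by
  have mem_of_apply_mem : ∀ s : Q → Q, Function.Injective s → Set.MapsTo s P P →
      ∀ x, s x ∈ P → x ∈ P := fun s hs hsP x hx => by
    obtain ⟨⟨y, hy⟩, hyx⟩ :=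
      Finite.surjective_of_injective (hsP.restrict_inj.2 hs.injOn) ⟨s x, hx⟩
    exact hs (congrArg Subtype.val hyx) ▸ hy
  refine ⟨hne, fun a ha b hb => ⟨hP a ha b hb, fun x hx => ?_, fun x hx => ?_⟩⟩
  · exact mem_of_apply_mem _ (hmul a).1 (fun y hy => hP a ha y hy) x (hx ▸ hb)
  · exact mem_of_apply_mem _ (hmul a).2 (fun y hy => hP y hy a ha) x (hx ▸ hb)

namespace CommIPLoop

variable {Q : Type*} [CommIPLoop Q]

/-- The union of the orbits of `0`, `x` and `-x` under a group `B` of central elements; it is the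
subloop generated by `B` and `x` as soon as `x + (x + x) ∈ B`. -/
def centralSpan (B : AddSubgroup (LoopCenter Q)) (x : Q) : Set Q :=
  {w | ∃ b ∈ B, w = b +ᵥ (0 : Q) ∨ w = b +ᵥ x ∨ w = b +ᵥ -x}

variable {B : AddSubgroup (LoopCenter Q)} {x w v : Q}

theorem zero_mem_centralSpan : (0 : Q) ∈ centralSpan B x :=
  ⟨0, zero_mem _, Or.inl (zero_vadd _ _).symm⟩

theorem self_mem_centralSpan : x ∈ centralSpan B x :=
  ⟨0, zero_mem _, Or.inr (Or.inl (zero_vadd _ _).symm)⟩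

theorem vadd_mem_centralSpan {b : LoopCenter Q} (hb : b ∈ B) (hw : w ∈ centralSpan B x) :
    b +ᵥ w ∈ centralSpan B x := by
  obtain ⟨c, hc, hw⟩ := hw
  refine ⟨b + c, add_mem hb hc, ?_⟩
  rcases hw with rfl | rfl | rfl <;> simp only [add_vadd, true_or, or_true]

theorem neg_mem_centralSpan (hw : w ∈ centralSpan B x) : -w ∈ centralSpan B x := by
  obtain ⟨c, hc, hw⟩ := hw
  refine ⟨-c, neg_mem hc, ?_⟩
  rcases hw with rfl | rfl | rfl <;> simp only [neg_vadd, neg_neg, neg_zero, true_or, or_true]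

/-- The associator `(x + y) + z - (x + (y + z))` as an element of the loop. -/
def associatorDefect (x y z : Q) : Q := x + y + z + -(x + (y + z))

theorem associatorDefect_reverse (x y z : Q) :
    associatorDefect z y x = -associatorDefect x y z := by
  rw [associatorDefect, associatorDefect, CommIPLoop.neg_add _ (-_), neg_neg, add_comm z y,
    add_comm y x, add_comm z, add_comm _ x, add_comm]

theorem add_add_eq_of_associatorDefect_eq {x y z : Q} {a : LoopCenter Q}
    (h : associatorDefect x y z = a) : x + y + z = a +ᵥ (x + (y + z)) := by
  rw [coe_vadd, ← h, associatorDefect, add_comm _ (x + (y + z)), add_comm (x + y + z),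
    CommIPLoop.add_neg_cancel_left]

theorem associatorDefect_eq_of_add_add_eq {x y z : Q} {a : LoopCenter Q}
    (h : x + y + z = a +ᵥ (x + (y + z))) : associatorDefect x y z = a := by
  rw [associatorDefect, h, vadd_add_assoc, CommIPLoop.add_neg_self, vadd_zero]

theorem associatorDefect_vadd (c : LoopCenter Q) (x y z : Q) :
    associatorDefect (c +ᵥ x) y z = associatorDefect x y z := by
  simp only [associatorDefect, vadd_add_assoc, neg_vadd, add_vadd_comm, vadd_vadd, neg_add_cancel,
    zero_vadd]

theorem associatorDefect_self (y z : Q) : associatorDefect z y z = 0 := by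
  rw [associatorDefect, add_comm z y, add_comm z, CommIPLoop.add_neg_self]

theorem associatorDefect_neg_self (y z : Q) : associatorDefect (-z) y z = 0 := by
  rw [associatorDefect, add_comm y z, CommIPLoop.neg_add_cancel_left, add_comm _ z,
    CommIPLoop.add_neg_cancel_left, CommIPLoop.add_neg_self]

/-- If `x` and `z` agree up to sign modulo the centre then `(x + y) + z = x + (y + z)`; otherwise
their spans with the centre only meet in the centre. -/
theorem associatorDefect_mem_center {x y z : Q}
    (hx : associatorDefect x y z ∈ centralSpan ⊤ x)
    (hz : associatorDefect x y z ∈ centralSpan ⊤ z) :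
    ∃ a : LoopCenter Q, associatorDefect x y z = a := by
  obtain ⟨b, -, hb | hb⟩ := hx
  · exact ⟨b, hb.trans (vadd_zero b)⟩
  obtain ⟨c, -, hc | hc⟩ := hz
  · exact ⟨c, hc.trans (vadd_zero c)⟩
  have hx : ∃ b : LoopCenter Q,
      x = b +ᵥ associatorDefect x y z ∨ x = b +ᵥ -associatorDefect x y z := by
    rcases hb with hb | hb
    · exact ⟨-b, Or.inl (by rw [hb, neg_vadd_vadd])⟩
    · exact ⟨b, Or.inr (by rw [hb, neg_vadd, neg_neg, vadd_neg_vadd])⟩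
  have hxz : ∃ c : LoopCenter Q, x = c +ᵥ z ∨ x = c +ᵥ -z := by
    obtain ⟨b, hb | hb⟩ := hx <;> rcases hc with hc | hc <;> rw [hc] at hb
    · exact ⟨b + c, Or.inl (by rw [hb, vadd_vadd])⟩
    · exact ⟨b + c, Or.inr (by rw [hb, vadd_vadd])⟩
    · exact ⟨b + -c, Or.inr (by rw [hb, neg_vadd, vadd_vadd])⟩
    · exact ⟨b + -c, Or.inl (by rw [hb, neg_vadd, neg_neg, vadd_vadd])⟩
  refine ⟨0, ?_⟩
  obtain ⟨c, rfl | rfl⟩ := hxz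
  · rw [associatorDefect_vadd, associatorDefect_self]; rfl
  · rw [associatorDefect_vadd, associatorDefect_neg_self]; rfl

end CommIPLoop

namespace DistributiveForm

variable {Q : Type*} [CommIPLoop Q] {mul : Q → Q → Q} (D : DistributiveForm mul)
  {B : AddSubgroup (LoopCenter Q)} {x w v : Q}

theorem add_mem_centralSpan (hx : D.triple x ∈ B) (hw : w ∈ centralSpan B x)
    (hv : v ∈ centralSpan B x) : w + v ∈ centralSpan B x := by
  have hself : x + x ∈ centralSpan B x := by
    rw [D.add_self]
    exact vadd_mem_centralSpan hx (neg_mem_centralSpan self_mem_centralSpan)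
  have hneg : -x + -x ∈ centralSpan B x := by
    rw [← CommIPLoop.neg_add]
    exact neg_mem_centralSpan hself
  obtain ⟨b, hb, hw⟩ := hw
  obtain ⟨c, hc, hv⟩ := hv
  rcases hw with rfl | rfl | rfl <;> rcases hv with rfl | rfl | rfl <;>
    rw [vadd_add_vadd_comm] <;> apply vadd_mem_centralSpan (add_mem hb hc) <;>
    simp only [zero_add, add_zero, CommIPLoop.add_neg_self, CommIPLoop.neg_add_self, hself, hneg,
      zero_mem_centralSpan, self_mem_centralSpan, neg_mem_centralSpan self_mem_centralSpan]

theorem triple_mem_of_mem_centralSpan (hx : D.triple x ∈ B) (hw : w ∈ centralSpan B x) :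
    D.triple w ∈ B := by
  obtain ⟨b, hb, hw⟩ := hw
  rcases hw with rfl | rfl | rfl <;> rw [triple_vadd] <;>
    refine add_mem (nsmul_mem hb 3) ?_
  · rw [map_zero]; exact zero_mem B
  · exact hx
  · rw [map_neg_of_group]; exact neg_mem hx

theorem leftDefect_mem_of_mem_centralSpan (hB : ∀ z ∈ B, D.centerDefect z ∈ B)
    (hx : D.leftDefect x ∈ B) (hw : w ∈ centralSpan B x) : D.leftDefect w ∈ B := by
  obtain ⟨b, hb, hw⟩ := hw
  rcases hw with rfl | rfl | rfl <;> rw [leftDefect_vadd] <;>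
    refine add_mem (hB b hb) ?_
  · rw [map_zero]; exact zero_mem B
  · exact hx
  · rw [map_neg_of_group]; exact neg_mem hx

theorem mul_mem_centralSpan (hB : ∀ z ∈ B, D.centerDefect z ∈ B) (ht : D.triple x ∈ B)
    (hn : D.leftDefect x ∈ B) (hw : w ∈ centralSpan B x) (hv : v ∈ centralSpan B x) :
    mul w v ∈ centralSpan B x := by
  have mem_leftDefect := fun u => D.leftDefect_mem_of_mem_centralSpan hB hn (w := u)
  rw [D.mul_eq_vadd]
  exact vadd_mem_centralSpan (add_mem (mem_leftDefect w hw)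
    (sub_mem (D.triple_mem_of_mem_centralSpan ht hv) (mem_leftDefect v hv)))
    (neg_mem_centralSpan (D.add_mem_centralSpan ht hw hv))

include D in
/-- Modulo the congruence `x` vanishes, so both sides of the associative law reduce to `y + z`. -/
theorem associatorDefect_mem_of_isNormalSubquasigroup {P : Set Q}
    (hP : IsNormalSubquasigroup mul P) (h0 : 0 ∈ P) (hx : x ∈ P) (y z : Q) :
    associatorDefect x y z ∈ P := by
  obtain ⟨-, r, ⟨hr, hmul, hright, hleft⟩, a, rfl⟩ := hP
  have hadd : ∀ {u v w t}, r u v → r w t → r (u + w) (v + t) := fun {u v w t} huv hwt => by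
    obtain ⟨u, rfl⟩ := D.leftHom_surjective u
    obtain ⟨v, rfl⟩ := D.leftHom_surjective v
    obtain ⟨w, rfl⟩ := D.rightHom_surjective w
    obtain ⟨t, rfl⟩ := D.rightHom_surjective t
    rw [← D.mul_eq, ← D.mul_eq]
    refine hmul _ _ _ _ (hleft _ _ 0 0 (hr.refl 0) ?_) (hright 0 0 _ _ (hr.refl 0) ?_)
    · simpa only [D.mul_eq, map_zero, add_zero] using huv
    · simpa only [D.mul_eq, map_zero, zero_add] using hwt
  have hx0 : r x 0 := hr.trans (hr.symm hx) h0
  have hsum_left : r (x + y + z) (y + z) := by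
    simpa only [zero_add] using hadd (hadd hx0 (hr.refl y)) (hr.refl z)
  have hsum_right : r (x + (y + z)) (y + z) := by
    simpa only [zero_add] using hadd hx0 (hr.refl (y + z))
  have hdefect := hadd (hr.trans hsum_left (hr.symm hsum_right)) (hr.refl (-(x + (y + z))))
  rw [CommIPLoop.add_neg_self] at hdefect
  exact hr.trans h0 (hr.symm hdefect)

end DistributiveForm

/-- `A x y z` is the central associator `(x + y) + z - (x + (y + z))`. -/
def IsCentralAssociator {Q : Type*} [CommIPLoop Q] (A : Q → Q → Q → LoopCenter Q) : Prop :=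
  ∀ x y z, x + y + z = A x y z +ᵥ (x + (y + z))

namespace IsCentralAssociator

variable {Q : Type*} [CommIPLoop Q] {A : Q → Q → Q → LoopCenter Q} (hA : IsCentralAssociator A)

include hA

theorem reverse (x y z : Q) : A z y x = -A x y z := by
  have h := hA z y x
  rw [add_comm (z + y), add_comm z y, add_comm z, add_comm y x, hA x y z, vadd_vadd] at h
  refine eq_neg_of_add_eq_zero_left (vadd_left_injective (x + (y + z)) ?_)
  exact h.symm.trans (zero_vadd _ _).symm

theorem cyclic (x y z : Q) : A x y z + A y z x + A z x y = 0 := by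
  have h := hA x y z
  rw [add_comm x (y + z), hA y z x, add_comm y (z + x), hA z x y, add_comm z, vadd_vadd,
    vadd_vadd] at h
  refine vadd_left_injective (x + y + z) ?_
  change _ +ᵥ _ = _ +ᵥ _
  rw [zero_vadd]
  exact h.symm

theorem add_right {mul : Q → Q → Q} (D : DistributiveForm mul) (x y z w : Q) :
    A x y (z + w) = A x y z + A x y w := by
  have hinner : ∀ z, (addPerm (x + y))⁻¹ (addPerm x (addPerm y z)) = -A x y z +ᵥ z := fun z => by
    rw [Equiv.Perm.inv_eq_iff_eq]
    simp only [addPerm_apply, add_vadd_comm, hA x y z, neg_vadd_vadd]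
  have hzw := D.map_add_of_mem_mulAut (s := (addPerm (x + y))⁻¹ * (addPerm x * addPerm y))
    (mul_mem (inv_mem (D.addPerm_mem_mulAut _))
      (mul_mem (D.addPerm_mem_mulAut x) (D.addPerm_mem_mulAut y)))
    (by
      rw [Equiv.Perm.mul_apply, Equiv.Perm.inv_eq_iff_eq]
      simp only [Equiv.Perm.mul_apply, addPerm_apply, add_zero]) z w
  simp only [Equiv.Perm.mul_apply, hinner, vadd_add_vadd_comm] at hzw
  have := vadd_left_injective _ hzw
  rw [← neg_inj, this, neg_add]

theorem add_left {mul : Q → Q → Q} (D : DistributiveForm mul) (x w y z : Q) :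
    A (x + w) y z = A x y z + A w y z := by
  rw [hA.reverse, hA.add_right D, hA.reverse x, hA.reverse w, neg_add, neg_neg, neg_neg]

theorem add_middle {mul : Q → Q → Q} (D : DistributiveForm mul) (x y w z : Q) :
    A x (y + w) z = A x y z + A x w z := by
  have hcyclic : ∀ y, A x y z = -(A y z x + A z x y) := fun y =>
    eq_neg_of_add_eq_zero_left ((add_assoc _ _ _).symm.trans (hA.cyclic x y z))
  rw [hcyclic, hcyclic y, hcyclic w, hA.add_left D, hA.add_right D, ← neg_add, add_add_add_comm]

end IsCentralAssociator

/-- A map from a unital magma to a group preserving addition, as a homomorphism. -/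
def homOfMapAdd {Q G : Type*} [AddZeroClass Q] [AddGroup G] (F : Q → G)
    (hF : ∀ x y, F (x + y) = F x + F y) : Q →+ G where
  toFun := F
  map_zero' := by simpa using hF 0 0
  map_add' := hF

/-- A distributive form whose loop has central, trilinear associators, together with the trace
`associator_mem` of the hamiltonian property. -/
structure HamiltonianForm {Q : Type*} [CommIPLoop Q] (mul : Q → Q → Q) extends
    DistributiveForm mul where
  associator : Q →+ Q →+ Q →+ LoopCenter Q
  add_add : ∀ x y z, x + y + z = associator x y z +ᵥ (x + (y + z))
  associator_mem : ∀ B : AddSubgroup (LoopCenter Q),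
    (∀ z ∈ B, toDistributiveForm.centerDefect z ∈ B) → ∀ x, toDistributiveForm.triple x ∈ B →
      toDistributiveForm.leftDefect x ∈ B → ∀ y z, associator x y z ∈ B

namespace DistributiveForm

variable {Q : Type*} [CommIPLoop Q] {mul : Q → Q → Q} (D : DistributiveForm mul)

theorem associatorDefect_mem_centralSpan [Finite Q]
    (hmul : ∀ a, Function.Injective (fun x => mul a x) ∧ Function.Injective (fun x => mul x a))
    (hham : IsHamiltonian mul) {B : AddSubgroup (LoopCenter Q)} {x : Q}
    (hB : ∀ z ∈ B, D.centerDefect z ∈ B) (ht : D.triple x ∈ B) (hn : D.leftDefect x ∈ B) (y z : Q) :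
    associatorDefect x y z ∈ centralSpan B x :=
  D.associatorDefect_mem_of_isNormalSubquasigroup
    (hham _ (isSubquasigroup_of_mul_mem hmul ⟨0, zero_mem_centralSpan⟩ fun _ ha _ hb =>
      D.mul_mem_centralSpan hB ht hn ha hb))
    zero_mem_centralSpan self_mem_centralSpan y z

include D in
theorem exists_isCentralAssociator [Finite Q]
    (hmul : ∀ a, Function.Injective (fun x => mul a x) ∧ Function.Injective (fun x => mul x a))
    (hham : IsHamiltonian mul) : ∃ A : Q → Q → Q → LoopCenter Q, IsCentralAssociator A := by
  have hmem : ∀ x y z : Q, associatorDefect x y z ∈ centralSpan ⊤ x := fun x y z =>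
    D.associatorDefect_mem_centralSpan hmul hham (fun _ _ => AddSubgroup.mem_top _)
      (AddSubgroup.mem_top _) (AddSubgroup.mem_top _) y z
  have hcenter : ∀ x y z : Q, ∃ a : LoopCenter Q, associatorDefect x y z = a := fun x y z => by
    refine associatorDefect_mem_center (hmem x y z) ?_
    rw [associatorDefect_reverse z]
    exact neg_mem_centralSpan (hmem z y x)
  choose A hA using hcenter
  exact ⟨A, fun x y z => add_add_eq_of_associatorDefect_eq (hA x y z)⟩

include D in
theorem nonempty_hamiltonianForm [Finite Q]
    (hmul : ∀ a, Function.Injective (fun x => mul a x) ∧ Function.Injective (fun x => mul x a))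
    (hham : IsHamiltonian mul) : Nonempty (HamiltonianForm mul) := by
  obtain ⟨A, hA⟩ := D.exists_isCentralAssociator hmul hham
  refine ⟨D, homOfMapAdd (fun x => homOfMapAdd (fun y => homOfMapAdd (A x y)
    (hA.add_right D x y)) fun y w => AddMonoidHom.ext fun z => hA.add_middle D x y w z)
    fun x w => AddMonoidHom.ext fun y => AddMonoidHom.ext fun z => hA.add_left D x w y z,
    hA, fun B hB x ht hn y z => ?_⟩
  change A x y z ∈ B
  have hvanish : ∀ c : LoopCenter Q, x = c → A x y z = 0 := fun c hc => Subtype.ext <| by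
    rw [← associatorDefect_eq_of_add_add_eq (hA x y z), hc, ← CommIPLoop.vadd_zero,
      associatorDefect_vadd, associatorDefect, zero_add, zero_add, CommIPLoop.add_neg_self]
    rfl
  obtain ⟨b, hb, h⟩ := D.associatorDefect_mem_centralSpan hmul hham hB ht hn y z
  rw [associatorDefect_eq_of_add_add_eq (hA x y z)] at h
  rcases h with h | h | h
  · rw [CommIPLoop.vadd_zero] at h
    rwa [Subtype.ext h]
  · rw [hvanish (-b + A x y z)
      (show x = -b +ᵥ (A x y z : Q) by rw [h, neg_vadd_vadd])]
    exact zero_mem B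
  · rw [hvanish (b + -A x y z)
      (show x = b +ᵥ -(A x y z : Q) by rw [h, neg_vadd, neg_neg, vadd_neg_vadd])]
    exact zero_mem B

end DistributiveForm

namespace HamiltonianForm

variable {Q : Type*} [CommIPLoop Q] {mul : Q → Q → Q} (H : HamiltonianForm mul)

theorem centerDefect_associator (x y z : Q) : H.centerDefect (H.associator x y z) = 0 := by
  have h := congrArg H.leftDefect (H.add_add x y z)
  rw [H.leftDefect_vadd] at h
  simp only [map_add] at h
  rw [_root_.add_assoc] at h
  exact right_eq_add.1 h

theorem three_nsmul_associator (x y z : Q) : 3 • H.associator x y z = 0 := by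
  have h := congrArg H.triple (H.add_add x y z)
  rw [H.triple_vadd] at h
  simp only [map_add] at h
  rw [_root_.add_assoc] at h
  exact right_eq_add.1 h

theorem isCentralAssociator : IsCentralAssociator (fun x y z => H.associator x y z) := H.add_add

theorem associator_reverse (x y z : Q) : H.associator z y x = -H.associator x y z :=
  H.isCentralAssociator.reverse x y z

theorem associator_self_left (x z : Q) : H.associator x x z = 0 := by
  refine vadd_left_injective (x + (x + z)) ?_
  change _ +ᵥ _ = _ +ᵥ _
  rw [← H.add_add, H.add_self_add, zero_vadd]

theorem associator_swap_left (x y z : Q) : H.associator y x z = -H.associator x y z := by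
  have h := H.associator_self_left (x + y) z
  simp only [map_add, AddMonoidHom.add_apply, associator_self_left, zero_add, add_zero] at h
  exact eq_neg_of_add_eq_zero_left h

theorem associator_swap_right (x y z : Q) : H.associator x z y = -H.associator x y z := by
  rw [H.associator_swap_left z x y, H.associator_reverse y x z, H.associator_swap_left x y z,
    neg_neg]

theorem associator_self_right (x y : Q) : H.associator x y y = 0 := by
  rw [H.associator_reverse, associator_self_left, neg_zero]

theorem associator_self_outer (x y : Q) : H.associator x y x = 0 := by
  rw [H.associator_swap_right, associator_self_left, neg_zero]

theorem associator_coe (c : LoopCenter Q) : H.associator (c : Q) = 0 :=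
  AddMonoidHom.ext fun y => AddMonoidHom.ext fun z => by
    refine vadd_left_injective ((c : Q) + (y + z)) ?_
    change _ +ᵥ _ = _ +ᵥ _
    rw [← H.add_add, AddMonoidHom.zero_apply, AddMonoidHom.zero_apply, zero_vadd,
      ← c.2.left_assoc]

theorem mem_center_of_associator_eq_zero {x : Q} (hx : H.associator x = 0) :
    x ∈ AddSubmonoid.center Q := mem_center_iff.2 fun y z => by
  have h := H.add_add y x z
  rw [H.associator_swap_left, hx, AddMonoidHom.zero_apply, AddMonoidHom.zero_apply, neg_zero,
    zero_vadd, add_comm y x, H.add_add x, hx, AddMonoidHom.zero_apply, AddMonoidHom.zero_apply,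
    zero_vadd] at h
  exact h.symm

theorem add_add_add_comm (w x y z : Q) : (w + x) + (y + z) =
    (-H.associator w x y + H.associator w x z - H.associator w y z + H.associator x y z) +ᵥ
      ((w + y) + (x + z)) := by
  have add_add' : ∀ x y z, x + (y + z) = -H.associator x y z +ᵥ (x + y + z) := fun x y z => by
    rw [H.add_add, neg_vadd_vadd]
  rw [H.add_add w x, add_add' x y z, add_comm x y, H.add_add y x z, add_vadd_comm, add_vadd_comm,
    add_add' w y, vadd_vadd, vadd_vadd, vadd_vadd]
  congr 1
  have hxyz := H.three_nsmul_associator x y z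
  have hwxy := H.three_nsmul_associator w x y
  rw [map_add, map_add, H.associator_swap_left x y z, H.associator_swap_right w x y]
  linear_combination (norm := module) hwxy - hxyz

theorem medial_of_associator_eq_zero (hA : H.associator = 0) (x y u v : Q) :
    mul (mul x y) (mul u v) = mul (mul x u) (mul y v) := by
  simp only [H.mul_eq_vadd, H.leftDefect_vadd, H.triple_vadd, vadd_add_vadd_comm, neg_vadd,
    CommIPLoop.neg_add, neg_neg, map_add, map_neg_of_group, map_sub, vadd_vadd]
  rw [H.add_add_add_comm x y u v]
  simp only [hA, AddMonoidHom.zero_apply, vadd_vadd]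
  congr 1
  simp only [H.centerDefect_triple]
  module

end HamiltonianForm

/-! ### Counting with associators and central defects -/

section ExponentThree

variable {G : Type*} [AddCommGroup G] {a c : G}

theorem zsmul_eq_zero_iff_three_dvd (h3 : 3 • a = 0) (h0 : a ≠ 0) (k : ℤ) :
    k • a = 0 ↔ 3 ∣ k := by
  rw [← addOrderOf_dvd_iff_zsmul_eq_zero, addOrderOf_eq_prime h3 h0, Nat.cast_ofNat]

theorem eq_or_eq_neg_of_mem_zmultiples (h3 : 3 • a = 0) (hc : c ∈ AddSubgroup.zmultiples a) :
    c = 0 ∨ c = a ∨ c = -a := by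
  obtain ⟨k, rfl⟩ := AddSubgroup.mem_zmultiples_iff.1 hc
  have h3' : (3 : ℤ) • a = 0 := (natCast_zsmul a 3).trans h3
  have hmod : k • a = (k % 3) • a := by
    conv_lhs => rw [← Int.emod_add_mul_ediv k 3, add_zsmul, mul_zsmul', h3', zsmul_zero, add_zero]
  have : k % 3 = 0 ∨ k % 3 = 1 ∨ k % 3 = 2 := by lia
  rw [hmod]
  rcases this with h | h | h <;> rw [h]
  · exact Or.inl (zero_zsmul a)
  · exact Or.inr (Or.inl (one_zsmul a))
  · exact Or.inr (Or.inr (eq_neg_of_add_eq_zero_left (by rw [← h3]; module)))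

theorem card_zmultiples_eq_three (h3 : 3 • a = 0) (h0 : a ≠ 0) :
    Nat.card (AddSubgroup.zmultiples a) = 3 := by
  rw [Nat.card_zmultiples, addOrderOf_eq_prime h3 h0]

end ExponentThree

theorem card_range_mul_card_ker {G G' : Type*} [AddCommGroup G] [AddCommGroup G']
    (F : G →+ G') : Nat.card F.range * Nat.card F.ker = Nat.card G := by
  rw [← AddSubgroup.index_ker, AddSubgroup.index_mul_card]

namespace CommIPLoop

variable {Q : Type*} [CommIPLoop Q]

theorem card_eq_card_range_mul_card_mker {G : Type*} [AddGroup G] (F : Q →+ G) :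
    Nat.card Q = Nat.card (Set.range F) * Nat.card (AddMonoidHom.mker F) := by
  choose s hs using fun r : Set.range F => r.2
  have hker : ∀ x : Q, -s ⟨F x, x, rfl⟩ + x ∈ AddMonoidHom.mker F := fun x => by
    rw [AddMonoidHom.mem_mker, map_add, map_neg_of_group, hs, neg_add_cancel]
  rw [← Nat.card_prod]
  refine Nat.card_congr
    { toFun := fun x => (⟨F x, x, rfl⟩, ⟨_, hker x⟩)
      invFun := fun p => s p.1 + p.2
      left_inv := fun x => CommIPLoop.add_neg_cancel_left _ x
      right_inv := fun ⟨r, k, hk⟩ => ?_ }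
  have hr : (⟨F (s r + k), _, rfl⟩ : Set.range F) = r :=
    Subtype.ext ((map_add F _ _).trans (by rw [hs, AddMonoidHom.mem_mker.1 hk, add_zero]))
  refine Prod.ext hr (Subtype.ext ?_)
  change -s ⟨F (s r + k), _, rfl⟩ + (s r + k) = k
  rw [hr, CommIPLoop.neg_add_cancel_left]

theorem card_eq_card_range_mul_card_center {G : Type*} [AddGroup G] (F : Q →+ G)
    (hF : ∀ x, F x = 0 → x ∈ AddSubmonoid.center Q) :
    Nat.card Q = Nat.card (Set.range F) * Nat.card {z : LoopCenter Q // F z = 0} := by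
  rw [card_eq_card_range_mul_card_mker F]
  congr 1
  exact Nat.card_congr
    { toFun := fun x => ⟨⟨x, hF x x.2⟩, x.2⟩
      invFun := fun z => ⟨z.1, z.2⟩
      left_inv := fun _ => rfl
      right_inv := fun _ => rfl }

end CommIPLoop

namespace HamiltonianForm

variable {Q : Type*} [CommIPLoop Q] {mul : Q → Q → Q} (H : HamiltonianForm mul)

theorem associator_eq_zero_of_defects_eq_zero {x : Q} (ht : H.triple x = 0)
    (hn : H.leftDefect x = 0) : H.associator x = 0 :=
  AddMonoidHom.ext fun y => AddMonoidHom.ext fun z =>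
    H.associator_mem ⊥ (fun z hz => by rw [AddSubgroup.mem_bot.1 hz, map_zero]; exact zero_mem _) x
      ht hn y z

theorem associator_eq_of_defects_eq {x y : Q} (ht : H.triple x = H.triple y)
    (hn : H.leftDefect x = H.leftDefect y) : H.associator x = H.associator y := by
  have h := H.associator_eq_zero_of_defects_eq_zero (x := -y + x)
    (by rw [map_add, map_neg_of_group, ht, neg_add_cancel])
    (by rw [map_add, map_neg_of_group, hn, neg_add_cancel])
  rw [map_add, map_neg_of_group] at h
  exact (neg_add_eq_zero.1 h).symm

theorem card_eq_card_range_associator :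
    Nat.card Q = Nat.card (Set.range H.associator) * Nat.card (LoopCenter Q) := by
  rw [card_eq_card_range_mul_card_center H.associator
    fun _ => H.mem_center_of_associator_eq_zero]
  exact congrArg _ (Nat.card_congr (Equiv.subtypeUnivEquiv H.associator_coe))

theorem associator_cycle (x y z : Q) : H.associator y z x = H.associator x y z := by
  rw [H.associator_swap_right y x z, H.associator_swap_left, neg_neg]

/-- The associator vanishes whenever two arguments agree, so evaluating at two of `x, y, z`
recovers the coefficient of the third. -/
theorem injective_nsmul_associator {x y z : Q} (h0 : H.associator x y z ≠ 0) :
    Function.Injective fun p : Fin 3 × Fin 3 × Fin 3 =>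
      (p.1 : ℕ) • H.associator x + (p.2.1 : ℕ) • H.associator y + (p.2.2 : ℕ) • H.associator z := by
  have hcoeff : ∀ i j : Fin 3,
      (i : ℕ) • H.associator x y z = (j : ℕ) • H.associator x y z → i = j := fun i j hij => by
    have := (zsmul_eq_zero_iff_three_dvd (H.three_nsmul_associator x y z) h0 (i - j)).1
      (by rw [sub_zsmul, natCast_zsmul, natCast_zsmul, hij, add_neg_cancel])
    lia
  rintro ⟨i, j, k⟩ ⟨i', j', k'⟩ h
  have heval := fun u v => congrArg (fun F : Q →+ Q →+ LoopCenter Q => F u v) h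
  simp only [AddMonoidHom.add_apply, AddMonoidHom.nsmul_apply] at heval
  have hi := heval y z
  have hj := heval z x
  have hk := heval x y
  simp only [associator_self_left, associator_self_outer, nsmul_zero,
    add_zero, zero_add, H.associator_cycle x y z, H.associator_cycle y z x] at hi hj hk
  rw [hcoeff _ _ hi, hcoeff _ _ hj, hcoeff _ _ hk]

end HamiltonianForm

section Monolith

variable {G : Type*} [AddCommGroup G] (f : G →+ G)

/-- The map `z ↦ (3 z, f z)`. Applied to the central defect, it describes `(triple, leftDefect)`
on the centre. -/
def diagonal : G →+ G × G := (3 • AddMonoidHom.id G).prod f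

/-- The map `(p, q) ↦ f p - 3 q`, whose kernel contains every pair `(triple x, leftDefect x)`. -/
def pairDefect : G × G →+ G := f.comp (AddMonoidHom.fst G G) - 3 • AddMonoidHom.snd G G

/-- `a` lies in every nonzero `f`-invariant subgroup. -/
def IsMonolith (a : G) : Prop :=
  a ≠ 0 ∧ ∀ B : AddSubgroup G, (∀ z ∈ B, f z ∈ B) → B ≠ ⊥ → a ∈ B

variable {f} {a : G}

theorem diagonal_apply (z : G) : diagonal f z = (3 • z, f z) := rfl

theorem pairDefect_apply (p q : G) : pairDefect f (p, q) = f p - 3 • q := rfl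

theorem diagonal_eq_zero_iff {z : G} : diagonal f z = 0 ↔ 3 • z = 0 ∧ f z = 0 := Prod.mk_eq_zero

theorem map_mem_zmultiples {b : G} (hb : f b = 0) {z : G} (hz : z ∈ AddSubgroup.zmultiples b) :
    f z ∈ AddSubgroup.zmultiples b := by
  obtain ⟨k, rfl⟩ := AddSubgroup.mem_zmultiples_iff.1 hz
  rw [map_zsmul, hb, zsmul_zero]
  exact zero_mem _

theorem map_mem_range_pairDefect {z : G} (hz : z ∈ (pairDefect f).range) :
    f z ∈ (pairDefect f).range := by
  obtain ⟨⟨p, q⟩, rfl⟩ := hz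
  exact ⟨(f p, f q), by simp only [pairDefect_apply, map_sub, map_nsmul]⟩

theorem fst_mem_range_pairDefect {p : G × G} (hp : p ∈ (diagonal f).range) :
    p.1 ∈ (pairDefect f).range := by
  obtain ⟨z, rfl⟩ := hp
  exact ⟨(0, -z), by rw [pairDefect_apply, map_zero, smul_neg, sub_neg_eq_add, zero_add]; rfl⟩

theorem snd_mem_range_pairDefect {p : G × G} (hp : p ∈ (diagonal f).range) :
    p.2 ∈ (pairDefect f).range := by
  obtain ⟨z, rfl⟩ := hp
  exact ⟨(z, 0), by rw [pairDefect_apply, nsmul_zero, sub_zero]; rfl⟩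

theorem diagonal_eq_zero_of_pairDefect_eq_zero (h : pairDefect f = 0) : diagonal f = 0 :=
  AddMonoidHom.ext fun z => by
    have hrange : (pairDefect f).range = ⊥ := by rw [h, AddMonoidHom.range_zero]
    have hz : diagonal f z ∈ (diagonal f).range := ⟨z, rfl⟩
    have h₁ := fst_mem_range_pairDefect hz
    have h₂ := snd_mem_range_pairDefect hz
    rw [hrange, AddSubgroup.mem_bot] at h₁ h₂
    exact Prod.ext h₁ h₂

namespace IsMonolith

theorem ker_diagonal (ha : IsMonolith f a) (hker : diagonal f a = 0) :
    (diagonal f).ker = AddSubgroup.zmultiples a := by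
  refine le_antisymm (fun z hz => ?_) ((AddSubgroup.zmultiples_le).2 hker)
  by_cases h0 : z = 0
  · rw [h0]
    exact zero_mem _
  obtain ⟨h3, hf⟩ := diagonal_eq_zero_iff.1 hz
  have haz : a ∈ AddSubgroup.zmultiples z :=
    ha.2 _ (fun w => map_mem_zmultiples hf) (AddSubgroup.zmultiples_ne_bot.2 h0)
  obtain h | rfl | h := eq_or_eq_neg_of_mem_zmultiples h3 haz
  · exact absurd h ha.1
  · exact AddSubgroup.mem_zmultiples a
  · rw [← neg_neg z, ← h]
    exact neg_mem (AddSubgroup.mem_zmultiples a)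

theorem card_ker_diagonal (ha : IsMonolith f a) (hker : diagonal f a = 0) :
    Nat.card (diagonal f).ker = 3 := by
  rw [ha.ker_diagonal hker, card_zmultiples_eq_three (diagonal_eq_zero_iff.1 hker).1 ha.1]

theorem zmultiples_le_range_pairDefect (ha : IsMonolith f a) (h : pairDefect f ≠ 0) :
    AddSubgroup.zmultiples a ≤ (pairDefect f).range :=
  AddSubgroup.zmultiples_le.2 <| ha.2 _ (fun _ => map_mem_range_pairDefect)
    (mt AddMonoidHom.range_eq_bot_iff.1 h)

end IsMonolith

end Monolith

namespace DistributiveForm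

variable {Q : Type*} [CommIPLoop Q] {mul : Q → Q → Q} (D : DistributiveForm mul)

/-- The pair of central defects `(t x, n x)`, which determines the associators of `x`. -/
def defects : Q →+ LoopCenter Q × LoopCenter Q := D.triple.prod D.leftDefect

theorem defects_apply (x : Q) : D.defects x = (D.triple x, D.leftDefect x) := rfl

theorem defects_coe (z : LoopCenter Q) : D.defects z = diagonal D.centerDefect z :=
  Prod.ext (D.triple_coe z) rfl

theorem pairDefect_defects (x : Q) : pairDefect D.centerDefect (D.defects x) = 0 := by
  rw [defects_apply, pairDefect_apply, centerDefect_triple, sub_self]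

end DistributiveForm

namespace HamiltonianForm

variable {Q : Type*} [CommIPLoop Q] {mul : Q → Q → Q} (H : HamiltonianForm mul)
  {G : Type*} [AddCommGroup G] {f : G →+ G} {π : LoopCenter Q →+ G}

theorem diagonal_associator (x y z : Q) : diagonal H.centerDefect (H.associator x y z) = 0 :=
  diagonal_eq_zero_iff.2 ⟨H.three_nsmul_associator x y z, H.centerDefect_associator x y z⟩

theorem card_mul_card_range_diagonal (hπ : Function.Surjective π)
    (hf : ∀ z, f (π z) = π (H.centerDefect z))
    (hA : ∀ x y z, π (H.associator x y z) = 0 → H.associator x y z = 0) :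
    Nat.card Q * Nat.card (diagonal f).range =
      Nat.card (Set.range ((π.prodMap π).comp H.defects)) * Nat.card (LoopCenter Q) := by
  have hker : ∀ x, (π.prodMap π).comp H.defects x = 0 → x ∈ AddSubmonoid.center Q := fun x hx =>
    H.mem_center_of_associator_eq_zero <| AddMonoidHom.ext fun y => AddMonoidHom.ext fun z =>
      hA x y z <| H.associator_mem π.ker
        (fun z hz => by rw [AddMonoidHom.mem_ker, ← hf, AddMonoidHom.mem_ker.1 hz, map_zero]) x
        (congrArg Prod.fst hx) (congrArg Prod.snd hx) y z
  have hcenter : ∀ z : LoopCenter Q,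
      (π.prodMap π).comp H.defects z = (diagonal f).comp π z := fun z => by
    rw [AddMonoidHom.comp_apply, H.defects_coe, diagonal_apply, AddMonoidHom.comp_apply,
      diagonal_apply, hf, ← map_nsmul]
    rfl
  have hrange : ((diagonal f).comp π).range = (diagonal f).range := by
    rw [AddMonoidHom.range_comp, AddMonoidHom.range_eq_top.2 hπ, ← AddMonoidHom.range_eq_map]
  rw [CommIPLoop.card_eq_card_range_mul_card_center _ hker, ← card_range_mul_card_ker
    ((diagonal f).comp π), hrange]
  simp only [hcenter]
  rw [_root_.mul_assoc, mul_comm (Nat.card (diagonal f).range)]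
  rfl

theorem range_map_defects_subset (hf : ∀ z, f (π z) = π (H.centerDefect z)) :
    Set.range ((π.prodMap π).comp H.defects) ⊆ (pairDefect f).ker := by
  rintro _ ⟨x, rfl⟩
  change f (π _) - 3 • π _ = 0
  rw [hf, ← map_nsmul, ← map_sub]
  exact (congrArg π (H.pairDefect_defects x)).trans (map_zero π)

end HamiltonianForm

theorem isMonolith_mk {G : Type*} [AddCommGroup G] {f : G →+ G} {a : G} {B : AddSubgroup G}
    (hB : ∀ z ∈ B, f z ∈ B) (haB : a ∉ B)
    (hmax : ∀ C : AddSubgroup G, (∀ z ∈ C, f z ∈ C) → B < C → a ∈ C) :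
    IsMonolith (QuotientAddGroup.map B B f hB) (QuotientAddGroup.mk' B a) := by
  let π := QuotientAddGroup.mk' B
  have hker : ∀ z, π z = 0 ↔ z ∈ B := QuotientAddGroup.eq_zero_iff
  refine ⟨(hker a).not.2 haB, fun C hC hC0 => hmax (C.comap π) (fun z hz => hC _ hz) ?_⟩
  have hbot : (⊥ : AddSubgroup (G ⧸ B)).comap π = B :=
    AddSubgroup.ext fun z => (AddSubgroup.mem_comap.trans AddSubgroup.mem_bot).trans (hker z)
  exact hbot.symm.trans_lt <| (AddSubgroup.comap_lt_comap_of_surjective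
    (QuotientAddGroup.mk'_surjective B)).2 (bot_lt_iff_ne_bot.2 hC0)

namespace CommIPLoop

theorem map_nsmulRec {Q G : Type*} [CommIPLoop Q] [AddMonoid G] (F : Q →+ G) (k : ℕ) (x : Q) :
    F (nsmulRec k x) = k • F x := by
  induction k with
  | zero => rw [zero_nsmul]; exact map_zero F
  | succ k ih => rw [succ_nsmul, ← ih]; exact map_add F _ _

end CommIPLoop

namespace HamiltonianForm

variable {Q : Type*} [CommIPLoop Q] [Finite Q] {mul : Q → Q → Q} (H : HamiltonianForm mul)
  {G : Type*} [AddCommGroup G] {f : G →+ G} {π : LoopCenter Q →+ G} {b : G}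

theorem card_eq_of_isMonolith (hQ : Nat.card Q = 729) (hZ : Nat.card (LoopCenter Q) = 27)
    (hπ : Function.Surjective π) (hf : ∀ z, f (π z) = π (H.centerDefect z))
    (hA : ∀ x y z, π (H.associator x y z) = 0 → H.associator x y z = 0)
    (hb : IsMonolith f b) (hb₀ : diagonal f b = 0) :
    Nat.card G = 27 ∧ Nat.card (pairDefect f).range = 3 := by
  have : Finite G := Finite.of_surjective π hπ
  have hQG := H.card_mul_card_range_diagonal hπ hf hA
  have hle := Nat.card_mono (Set.toFinite _) (H.range_map_defects_subset hf)
  have hdiag := card_range_mul_card_ker (diagonal f)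
  have hpair := card_range_mul_card_ker (pairDefect f)
  have hG : Nat.card G ≤ 27 := hZ ▸ Nat.card_le_card_of_surjective π hπ
  rw [hb.card_ker_diagonal hb₀] at hdiag
  rw [hQ, hZ] at hQG
  rw [Nat.card_prod, ← hdiag] at hpair
  have hpair_ne : pairDefect f ≠ 0 := fun h => by
    rw [diagonal_eq_zero_of_pairDefect_eq_zero h, AddMonoidHom.range_zero,
      AddSubgroup.card_bot] at hQG hpair
    rw [h, AddMonoidHom.range_zero, AddSubgroup.card_bot] at hpair
    rw [h] at hle
    change _ ≤ Nat.card (0 : G × G →+ G).ker at hle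
    lia
  have hpair_ge := AddSubgroup.card_le_of_le (hb.zmultiples_le_range_pairDefect hpair_ne)
  rw [card_zmultiples_eq_three (diagonal_eq_zero_iff.1 hb₀).1 hb.1] at hpair_ge
  change _ ≤ Nat.card (pairDefect f).ker at hle
  generalize Nat.card (diagonal f).range = d at *
  generalize Nat.card (pairDefect f).range = p at *
  have hp : 27 * p ≤ 9 * d := by
    have : d * (27 * p) ≤ d * (9 * d) := by nlinarith
    refine Nat.le_of_mul_le_mul_left this (by_contra fun hd => ?_)
    obtain rfl : d = 0 := by lia
    exact absurd hdiag (by have := Nat.card_pos (α := G); lia)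
  lia

/-- The quotient by an invariant subgroup that is maximal among those avoiding `a` has monolith
`a`. By `card_eq_of_isMonolith` this quotient is the whole centre. -/
theorem isMonolith_associator (hQ : Nat.card Q = 729) (hZ : Nat.card (LoopCenter Q) = 27)
    {x y z : Q} (h0 : H.associator x y z ≠ 0)
    (hA : ∀ u v w, H.associator u v w ∈ AddSubgroup.zmultiples (H.associator x y z)) :
    IsMonolith H.centerDefect (H.associator x y z) := by
  set a := H.associator x y z
  have h3 : 3 • a = 0 := H.three_nsmul_associator x y z
  obtain ⟨B, ⟨hB, haB⟩, hmax⟩ := (Set.toFinite {B : AddSubgroup (LoopCenter Q) |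
    (∀ z ∈ B, H.centerDefect z ∈ B) ∧ a ∉ B}).exists_maximal
      ⟨⊥, fun z hz => by rw [AddSubgroup.mem_bot.1 hz, map_zero]; exact zero_mem _, h0⟩
  have hmem : ∀ C : AddSubgroup (LoopCenter Q), (∀ z ∈ C, H.centerDefect z ∈ C) → B < C → a ∈ C :=
    fun C hC hBC => by_contra fun haC => hBC.not_ge (hmax ⟨hC, haC⟩ hBC.le)
  have hmono := isMonolith_mk hB haB hmem
  have hA_ker : ∀ u v w, QuotientAddGroup.mk' B (H.associator u v w) = 0 →
      H.associator u v w = 0 := fun u v w h => by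
    obtain ⟨k, hk⟩ := AddSubgroup.mem_zmultiples_iff.1 (hA u v w)
    rw [← hk, map_zsmul, zsmul_eq_zero_iff_three_dvd (by rw [← map_nsmul, h3, map_zero]) hmono.1,
      ← zsmul_eq_zero_iff_three_dvd h3 h0] at h
    rw [← hk, h]
  have ha_diag : diagonal (QuotientAddGroup.map B B H.centerDefect hB)
      (QuotientAddGroup.mk' B a) = 0 :=
    diagonal_eq_zero_iff.2 ⟨by rw [← map_nsmul, h3, map_zero],
      (congrArg (QuotientAddGroup.mk' B) (H.centerDefect_associator x y z)).trans (map_zero _)⟩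
  have hcard := (H.card_eq_of_isMonolith hQ hZ (QuotientAddGroup.mk'_surjective B) (fun _ => rfl)
    hA_ker hmono ha_diag).1
  have hBbot : B = ⊥ := AddSubgroup.card_eq_one.1 (by
    have := B.card_eq_card_quotient_mul_card_addSubgroup
    lia)
  exact ⟨h0, fun C hC hC0 => hmem C hC (hBbot ▸ bot_lt_iff_ne_bot.2 hC0)⟩

omit [Finite Q] in
theorem nsmul_associator_mem_range (x y z : Q) (p : Fin 3 × Fin 3 × Fin 3) :
    (p.1 : ℕ) • H.associator x + (p.2.1 : ℕ) • H.associator y + (p.2.2 : ℕ) • H.associator z ∈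
      Set.range H.associator :=
  ⟨nsmulRec p.1 x + nsmulRec p.2.1 y + nsmulRec p.2.2 z, by
    simp only [map_add, CommIPLoop.map_nsmulRec]⟩

theorem exists_associator_eq (hA : Nat.card (Set.range H.associator) = 27) {x y z : Q}
    (h0 : H.associator x y z ≠ 0) (w : Q) : ∃ i j k : ℕ,
      H.associator w = i • H.associator x + j • H.associator y + k • H.associator z := by
  have hcard : Nat.card (Fin 3 × Fin 3 × Fin 3) = Nat.card (Set.range H.associator) := by
    simp only [Nat.card_eq_fintype_card, Fintype.card_prod, Fintype.card_fin, hA]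
  obtain ⟨p, hp⟩ := ((H.injective_nsmul_associator h0).codRestrict
    (H.nsmul_associator_mem_range x y z)).bijective_of_nat_card_le hcard.ge |>.2 ⟨_, w, rfl⟩
  exact ⟨p.1, p.2.1, p.2.2, (congrArg Subtype.val hp).symm⟩

theorem associator_mem_zmultiples (hA : Nat.card (Set.range H.associator) = 27) {x y z : Q}
    (h0 : H.associator x y z ≠ 0) (u v w : Q) :
    H.associator u v w ∈ AddSubgroup.zmultiples (H.associator x y z) := by
  set S := AddSubgroup.zmultiples (H.associator x y z)
  have span : ∀ {v w}, H.associator x v w ∈ S → H.associator y v w ∈ S →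
      H.associator z v w ∈ S → ∀ u, H.associator u v w ∈ S := fun hx hy hz u => by
    obtain ⟨i, j, k, hu⟩ := H.exists_associator_eq hA h0 u
    rw [hu]
    exact add_mem (add_mem (nsmul_mem hx i) (nsmul_mem hy j)) (nsmul_mem hz k)
  have hself : ∀ u v, H.associator u u v ∈ S := fun u v => by
    rw [associator_self_left]; exact zero_mem S
  have houter : ∀ u v, H.associator u v u ∈ S := fun u v => by
    rw [associator_self_outer]; exact zero_mem S
  have hcycle : ∀ {u v w}, H.associator u v w ∈ S → H.associator v w u ∈ S := fun h => by
    rwa [associator_cycle]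
  have hswap : ∀ {u v w}, H.associator u v w ∈ S → H.associator u w v ∈ S := fun h => by
    rw [associator_swap_right]; exact neg_mem h
  have hyz := span (AddSubgroup.mem_zmultiples _) (hself y z) (houter z y)
  have hzx := span (houter x z) (hcycle (AddSubgroup.mem_zmultiples _)) (hself z x)
  have hxy := span (hself x y) (houter y x) (hcycle (hcycle (AddSubgroup.mem_zmultiples _)))
  have hx := fun v u => hcycle (span (hself x u) (hcycle (hswap (hxy u))) (hcycle (hzx u)) v)
  have hy := fun v u => hcycle (span (hcycle (hxy u)) (hself y u) (hcycle (hswap (hyz u))) v)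
  have hz := fun v u => hcycle (span (hcycle (hswap (hzx u))) (hcycle (hyz u)) (hself z u) v)
  exact span (hx w v) (hy w v) (hz w v) u

end HamiltonianForm

theorem IsMonolith.range_diagonal_eq_prod {G : Type*} [AddCommGroup G] [Finite G] {f : G →+ G}
    {a : G} (ha : IsMonolith f a) (hG : Nat.card G = 27) (hker : diagonal f a = 0)
    (hpair : Nat.card (pairDefect f).range = 3) :
    (diagonal f).range = (AddSubgroup.zmultiples a).prod (AddSubgroup.zmultiples a) := by
  have hzmult := card_zmultiples_eq_three (diagonal_eq_zero_iff.1 hker).1 ha.1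
  have hrange : AddSubgroup.zmultiples a = (pairDefect f).range :=
    AddSubgroup.eq_of_le_of_card_ge
      (ha.zmultiples_le_range_pairDefect fun h => by
        rw [h, AddMonoidHom.range_zero, AddSubgroup.card_bot] at hpair
        lia)
      (hpair.trans hzmult.symm).le
  refine AddSubgroup.eq_of_le_of_card_ge (fun p hp => ?_) ?_
  · rw [hrange]
    exact ⟨fst_mem_range_pairDefect hp, snd_mem_range_pairDefect hp⟩
  · have hdiag := card_range_mul_card_ker (diagonal f)
    rw [ha.card_ker_diagonal hker, hG] at hdiag
    rw [Nat.card_congr (AddSubgroup.prodEquiv _ _).toEquiv, Nat.card_prod, hzmult]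
    lia

/-! ### Frames at order 729 -/

/-- A frame of a hamiltonian form: generators `u`, `v` of the centre and points `e₀`, `e₁`, `e₂`
whose defects span all pairs compatible with the central defect. All associators are multiples of
the central element `3 • v`. -/
structure HamiltonianForm.Frame {Q : Type*} [CommIPLoop Q] {mul : Q → Q → Q}
    (H : HamiltonianForm mul) where
  (u v : LoopCenter Q)
  (e₀ e₁ e₂ : Q)
  three_nsmul_u : 3 • u = 0
  centerDefect_u : H.centerDefect u = 3 • v
  centerDefect_v : H.centerDefect v = 0
  three_nsmul_v_ne_zero : 3 • v ≠ 0
  three_nsmul_three_nsmul_v : 3 • 3 • v = 0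
  defects_e₀ : H.defects e₀ = (v, 0)
  defects_e₁ : H.defects e₁ = (u, v)
  defects_e₂ : H.defects e₂ = (0, u)
  associator_mem_zmultiples : ∀ x y z, H.associator x y z ∈ AddSubgroup.zmultiples (3 • v)

namespace HamiltonianForm

variable {Q : Type*} [CommIPLoop Q] {mul : Q → Q → Q} (H : HamiltonianForm mul)

theorem associator_eq_zero_of_mem_zmultiples {F G : Q →+ LoopCenter Q}
    (hFG : ∀ x y, F x = F y → G x = G y → H.associator x = H.associator y)
    (hF : ∀ x, 3 • F x = 0)
    (hmem : ∀ x, G x = 0 → ∀ y z, H.associator x y z ∈ AddSubgroup.zmultiples (F x))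
    {p q : Q} (hp : G p = 0) (hq : G q = 0) (r : Q) : H.associator p q r = 0 := by
  by_contra h0
  have hpq : F p = F q ∨ F p = F (-q) := by
    have hqr : -H.associator p q r ∈ AddSubgroup.zmultiples (F q) :=
      H.associator_swap_left p q r ▸ hmem q hq p r
    rw [CommIPLoop.map_neg_of_group]
    obtain h | h | h := eq_or_eq_neg_of_mem_zmultiples (hF p) (hmem p hp q r) <;>
      obtain h' | h' | h' := eq_or_eq_neg_of_mem_zmultiples (hF q) (neg_mem_iff.1 hqr) <;>
      first
      | exact absurd h h0
      | exact absurd h' h0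
      | exact Or.inl (h.symm.trans h')
      | exact Or.inl (neg_injective (h.symm.trans h'))
      | exact Or.inr (h.symm.trans h')
      | exact Or.inr (neg_eq_iff_eq_neg.1 (h.symm.trans h'))
  refine h0 (hpq.elim (fun h => ?_) fun h => ?_)
  · rw [hFG p q h (hp.trans hq.symm), associator_self_left]
  · rw [hFG p (-q) h (by rw [hp, CommIPLoop.map_neg_of_group, hq, neg_zero]),
      CommIPLoop.map_neg_of_group, AddMonoidHom.neg_apply, AddMonoidHom.neg_apply,
      associator_self_left, neg_zero]

/-- If the defects take all values, a point splits into a part with `t = 0` and a part with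
`n = 0`. Two arguments of the same kind kill the associator, and among three arguments two are of
the same kind. -/
theorem associator_eq_zero_of_diagonal_eq_zero (hdiag : diagonal H.centerDefect = 0)
    (hsurj : Function.Surjective H.defects) : H.associator = 0 := by
  have h3 : ∀ z : LoopCenter Q, 3 • z = 0 := fun z =>
    (diagonal_eq_zero_iff.1 (DFunLike.congr_fun hdiag z)).1
  have hnZ : ∀ z, H.centerDefect z = 0 := fun z =>
    (diagonal_eq_zero_iff.1 (DFunLike.congr_fun hdiag z)).2
  have hmem : ∀ {x a}, H.triple x ∈ AddSubgroup.zmultiples a →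
      H.leftDefect x ∈ AddSubgroup.zmultiples a →
      ∀ y z, H.associator x y z ∈ AddSubgroup.zmultiples a := fun ht hn =>
    H.associator_mem _ (fun z _ => by rw [hnZ]; exact zero_mem _) _ ht hn
  have hnn : ∀ {p q}, H.leftDefect p = 0 → H.leftDefect q = 0 → ∀ r, H.associator p q r = 0 :=
    H.associator_eq_zero_of_mem_zmultiples (fun _ _ ht hn => H.associator_eq_of_defects_eq ht hn)
      (fun _ => h3 _) fun x hx => hmem (AddSubgroup.mem_zmultiples _) (hx ▸ zero_mem _)
  have htt : ∀ {p q}, H.triple p = 0 → H.triple q = 0 → ∀ r, H.associator p q r = 0 :=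
    H.associator_eq_zero_of_mem_zmultiples (fun _ _ hn ht => H.associator_eq_of_defects_eq ht hn)
      (fun _ => h3 _) fun x hx => hmem (hx ▸ zero_mem _) (AddSubgroup.mem_zmultiples _)
  have hsplit : ∀ x, ∃ p q, H.leftDefect p = 0 ∧ H.triple q = 0 ∧
      H.associator x = H.associator p + H.associator q := fun x => by
    obtain ⟨p, hp⟩ := hsurj (H.triple x, 0)
    obtain ⟨q, hq⟩ := hsurj (0, H.leftDefect x)
    obtain ⟨htp, hnp⟩ := Prod.mk.inj hp
    obtain ⟨htq, hnq⟩ := Prod.mk.inj hq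
    refine ⟨p, q, hnp, htq, ?_⟩
    rw [← map_add, H.associator_eq_of_defects_eq]
    · rw [map_add, htp, htq, add_zero]
    · rw [map_add, hnp, hnq, zero_add]
  refine AddMonoidHom.ext fun x => AddMonoidHom.ext fun y => AddMonoidHom.ext fun z => ?_
  obtain ⟨p, q, hp, hq, hx⟩ := hsplit x
  obtain ⟨p', q', hp', hq', hy⟩ := hsplit y
  obtain ⟨p'', q'', hp'', hq'', hz⟩ := hsplit z
  rw [hx, ← map_add, ← H.associator_cycle, hy, ← map_add, ← H.associator_cycle, hz]
  have houter : ∀ {a b : Q}, (∀ r, H.associator a b r = 0) → ∀ r, H.associator b r a = 0 :=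
    fun h r => (H.associator_cycle _ _ _).trans (h r)
  have hright : ∀ {a b : Q}, (∀ r, H.associator a b r = 0) → ∀ r, H.associator r a b = 0 :=
    fun h r => (H.associator_cycle _ _ _).symm.trans (h r)
  simp only [map_add, AddMonoidHom.add_apply, hnn hp'' hp, htt hq'' hq, hright (hnn hp hp'),
    hright (htt hq hq'), houter (hnn hp' hp''), houter (htt hq' hq''), add_zero,
    AddMonoidHom.zero_apply]

theorem card_mul_card_range_diagonal_centerDefect :
    Nat.card Q * Nat.card (diagonal H.centerDefect).range =
      Nat.card (Set.range H.defects) * Nat.card (LoopCenter Q) :=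
  H.card_mul_card_range_diagonal (π := AddMonoidHom.id _) Function.surjective_id (fun _ => rfl)
    fun _ _ _ => id

variable [Finite Q]

theorem card_center_ne_nine (hQ : Nat.card Q = 729) (h0 : H.associator ≠ 0) :
    Nat.card (LoopCenter Q) ≠ 9 := fun hZ => by
  have hcard := H.card_mul_card_range_diagonal_centerDefect
  have hle := Finite.card_subtype_le (· ∈ Set.range H.defects)
  have hpos : 0 < Nat.card (diagonal H.centerDefect).range := Nat.card_pos
  change Nat.card (Set.range H.defects) ≤ _ at hle
  rw [hQ, hZ] at hcard
  rw [Nat.card_prod, hZ] at hle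
  refine h0 (H.associator_eq_zero_of_diagonal_eq_zero ?_ ?_)
  · exact AddMonoidHom.range_eq_bot_iff.1 (AddSubgroup.card_eq_one.1 (by lia))
  · refine Set.range_eq_univ.1 (Set.eq_of_subset_of_ncard_le (Set.subset_univ _) ?_)
    rw [Set.ncard_univ, Nat.card_prod, hZ, ← Nat.card_coe_set_eq]
    lia

omit [Finite Q] in
theorem exists_associator_ne_zero (h0 : H.associator ≠ 0) :
    ∃ x y z, H.associator x y z ≠ 0 := by
  by_contra! h
  exact h0 (AddMonoidHom.ext fun x => AddMonoidHom.ext fun y => AddMonoidHom.ext (h x y))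

theorem card_center (hQ : Nat.card Q = 729) (h0 : H.associator ≠ 0) :
    Nat.card (LoopCenter Q) = 27 := by
  obtain ⟨x, y, z, hxyz⟩ := H.exists_associator_ne_zero h0
  have hA : 27 ≤ Nat.card (Set.range H.associator) := by
    have := Nat.card_le_card_of_injective _
      ((H.injective_nsmul_associator hxyz).codRestrict (H.nsmul_associator_mem_range x y z))
    simpa only [Nat.card_eq_fintype_card, Fintype.card_prod, Fintype.card_fin] using this
  have hcard := H.card_eq_card_range_associator
  have hdefects := H.card_mul_card_range_diagonal_centerDefect
  have hle := Finite.card_subtype_le (· ∈ Set.range H.defects)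
  have hpos : 0 < Nat.card (diagonal H.centerDefect).range := Nat.card_pos
  change Nat.card (Set.range H.defects) ≤ _ at hle
  rw [Nat.card_prod] at hle
  obtain ⟨k, -, hk⟩ := (Nat.dvd_prime_pow Nat.prime_three).1
    (show Nat.card (LoopCenter Q) ∣ 3 ^ 6 from Dvd.intro_left _ (hcard.symm.trans hQ))
  have hne := H.card_center_ne_nine hQ h0
  rw [hQ] at hcard hdefects
  have hle27 : Nat.card (LoopCenter Q) ≤ 27 := by nlinarith
  have hge9 : 9 ≤ Nat.card (LoopCenter Q) := by
    by_contra! hlt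
    have hlt_sq : Nat.card (LoopCenter Q) * Nat.card (LoopCenter Q) ≤ 8 * 8 := by gcongr <;> lia
    nlinarith
  have hk3 : k ≤ 3 := (Nat.pow_le_pow_iff_right (a := 3) (by lia)).1 (hk ▸ hle27)
  have hk2 : 2 ≤ k := (Nat.pow_le_pow_iff_right (a := 3) (by lia)).1 (hk ▸ hge9)
  obtain rfl | rfl : k = 2 ∨ k = 3 := by lia
  · exact absurd hk hne
  · exact hk

theorem range_defects_eq (hQ : Nat.card Q = 729) (hZ : Nat.card (LoopCenter Q) = 27)
    {a : LoopCenter Q} (ha : IsMonolith H.centerDefect a) (hker : diagonal H.centerDefect a = 0)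
    (hpair : Nat.card (pairDefect H.centerDefect).range = 3) :
    Set.range H.defects = (pairDefect H.centerDefect).ker := by
  refine Set.eq_of_subset_of_ncard_le (Set.range_subset_iff.2 H.pairDefect_defects) ?_
  have hpair_card := card_range_mul_card_ker (pairDefect H.centerDefect)
  have hdiag_card := card_range_mul_card_ker (diagonal H.centerDefect)
  have hdefects_card := H.card_mul_card_range_diagonal_centerDefect
  rw [ha.card_ker_diagonal hker, hZ] at hdiag_card
  rw [hpair, Nat.card_prod, hZ] at hpair_card
  rw [hQ, hZ] at hdefects_card
  rw [← Nat.card_coe_set_eq, ← Nat.card_coe_set_eq]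
  change Nat.card (pairDefect H.centerDefect).ker ≤ _
  lia

theorem nonempty_frame (hQ : Nat.card Q = 729) (h0 : H.associator ≠ 0) : Nonempty H.Frame := by
  obtain ⟨x, y, z, hxyz⟩ := H.exists_associator_ne_zero h0
  have hZ := H.card_center hQ h0
  have hA := H.associator_mem_zmultiples
    (by have := H.card_eq_card_range_associator; rw [hQ, hZ] at this; lia) hxyz
  have ha := H.isMonolith_associator hQ hZ hxyz hA
  have ha_diag := H.diagonal_associator x y z
  set a := H.associator x y z
  have hpair := (H.card_eq_of_isMonolith hQ hZ (π := AddMonoidHom.id _) Function.surjective_id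
    (fun _ => rfl) (fun _ _ _ => id) ha ha_diag).2
  have hdiag := ha.range_diagonal_eq_prod hZ ha_diag hpair
  have hdefects := H.range_defects_eq hQ hZ ha ha_diag hpair
  obtain ⟨v, hv⟩ : (a, 0) ∈ (diagonal H.centerDefect).range :=
    hdiag ▸ ⟨AddSubgroup.mem_zmultiples a, zero_mem _⟩
  obtain ⟨u, hu⟩ : (0, a) ∈ (diagonal H.centerDefect).range :=
    hdiag ▸ ⟨zero_mem _, AddSubgroup.mem_zmultiples a⟩
  obtain ⟨hv3, hvn⟩ := Prod.mk.inj hv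
  obtain ⟨hu3, hun⟩ := Prod.mk.inj hu
  have hexists : ∀ p q, H.centerDefect p = 3 • q → ∃ x, H.defects x = (p, q) := fun p q hpq =>
    hdefects.ge (show pairDefect H.centerDefect (p, q) = 0 by rw [pairDefect_apply, hpq, sub_self])
  obtain ⟨e₀, h₀⟩ := hexists v 0 (hvn.trans (nsmul_zero 3).symm)
  obtain ⟨e₁, h₁⟩ := hexists u v (hun.trans hv3.symm)
  obtain ⟨e₂, h₂⟩ := hexists 0 u ((map_zero _).trans hu3.symm)
  have hva : 3 • v = a := hv3
  exact ⟨{  u := u, v := v, e₀ := e₀, e₁ := e₁, e₂ := e₂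
            three_nsmul_u := hu3
            centerDefect_u := hun.trans hv3.symm
            centerDefect_v := hvn
            three_nsmul_v_ne_zero := hva ▸ hxyz
            three_nsmul_three_nsmul_v := hva ▸ H.three_nsmul_associator x y z
            defects_e₀ := h₀
            defects_e₁ := h₁
            defects_e₂ := h₂
            associator_mem_zmultiples := hva ▸ hA }⟩

end HamiltonianForm

/-! ### The quasigroups on `C'` -/

theorem natCast_val_intCast {R : Type*} [CommRing R] (n : ℕ) [NeZero n] (y : ℤ) :
    ((y : ZMod n).val : R) = y - n * ((y / n : ℤ) : R) := by
  rw [← Int.cast_natCast, ZMod.val_intCast, Int.emod_def]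
  push_cast
  rfl

/-- The point of `C'` with given integer coordinates. -/
def ofInt (x y z : ℤ) : C' := (x, y, z)

theorem ofInt_eq_iff {x y z x' y' z' : ℤ} :
    ofInt x y z = ofInt x' y' z' ↔ 27 ∣ x - x' ∧ 9 ∣ y - y' ∧ 3 ∣ z - z' := by
  simp only [ofInt, Prod.mk.injEq]
  rw [eq_comm, ZMod.intCast_eq_intCast_iff_dvd_sub, @eq_comm (ZMod 9),
    ZMod.intCast_eq_intCast_iff_dvd_sub, @eq_comm (ZMod 3), ZMod.intCast_eq_intCast_iff_dvd_sub]
  rfl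

theorem ofInt_val (p : C') : ofInt p.1.val p.2.1.val p.2.2.val = p := by
  simp only [ofInt, Int.cast_natCast, ZMod.natCast_zmod_val]

theorem ofInt_zero : ofInt 0 0 0 = 0 := by simp only [ofInt, Int.cast_zero, Prod.mk_zero_zero]

theorem exists_ofInt_eq (p : C') : ∃ x y z, ofInt x y z = p := ⟨_, _, _, ofInt_val p⟩

/-- The common form of `∇₁` (for `ε = 1`) and `∇₂` (for `ε = -1`). For `ε = 0` it is the linear
operation `-a + 2b + N (a - b)` with `N (x, y, z) = (3y, 3z, 0)`. -/
def twistedMul (ε : ℤ) (a b : C') : C' :=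
  (-a.1 + 3 * (a.2.1.val : ZMod 27) + 2 * b.1 - 3 * (b.2.1.val : ZMod 27)
      + 9 * ε * ((a.1 * (b.2.1.val : ZMod 27) - (a.2.1.val : ZMod 27) * b.1)
        * ((b.2.2.val : ZMod 27) - (a.2.2.val : ZMod 27))),
    -a.2.1 + 3 * (a.2.2.val : ZMod 9) + 2 * b.2.1 - 3 * (b.2.2.val : ZMod 9),
    -a.2.2 + 2 * b.2.2)

theorem nabla₁_eq_twistedMul : nabla₁ = twistedMul 1 := by
  funext a b
  simp only [nabla₁, twistedMul, Prod.mk.injEq]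
  push_cast
  exact ⟨by grind, by grind, by grind⟩

theorem nabla₂_eq_twistedMul : nabla₂ = twistedMul (-1) := by
  funext a b
  simp only [nabla₂, twistedMul, Prod.mk.injEq]
  push_cast
  exact ⟨by grind, by grind, by grind⟩

theorem card_C' : Nat.card C' = 729 := by
  simp only [Nat.card_prod, Nat.card_zmod]

section TwistedMul

variable {ε : ℤ}

theorem twistedMul_ofInt (a₀ a₁ a₂ b₀ b₁ b₂ : ℤ) :
    twistedMul ε (ofInt a₀ a₁ a₂) (ofInt b₀ b₁ b₂) =
      ofInt (-a₀ + 3 * a₁ + 2 * b₀ - 3 * b₁ + 9 * ε * ((a₀ * b₁ - a₁ * b₀) * (b₂ - a₂)))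
        (-a₁ + 3 * a₂ + 2 * b₁ - 3 * b₂) (-a₂ + 2 * b₂) := by
  simp only [twistedMul, ofInt, natCast_val_intCast, Prod.mk.injEq]
  push_cast
  exact ⟨by grind, by grind, by ring⟩

theorem twistedMul_left_distrib (x a b : C') :
    twistedMul ε x (twistedMul ε a b) = twistedMul ε (twistedMul ε x a) (twistedMul ε x b) := by
  obtain ⟨x₀, x₁, x₂, rfl⟩ := exists_ofInt_eq x
  obtain ⟨a₀, a₁, a₂, rfl⟩ := exists_ofInt_eq a
  obtain ⟨b₀, b₁, b₂, rfl⟩ := exists_ofInt_eq b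
  simp only [twistedMul_ofInt]
  simp only [ofInt, Prod.mk.injEq]
  push_cast
  exact ⟨by grind, by ring, by ring⟩

theorem twistedMul_right_distrib (x a b : C') :
    twistedMul ε (twistedMul ε a b) x = twistedMul ε (twistedMul ε a x) (twistedMul ε b x) := by
  obtain ⟨x₀, x₁, x₂, rfl⟩ := exists_ofInt_eq x
  obtain ⟨a₀, a₁, a₂, rfl⟩ := exists_ofInt_eq a
  obtain ⟨b₀, b₁, b₂, rfl⟩ := exists_ofInt_eq b
  simp only [twistedMul_ofInt]
  simp only [ofInt, Prod.mk.injEq]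
  push_cast
  exact ⟨by grind, by ring, by ring⟩

theorem injective_twistedMul_left (a : C') : Function.Injective (fun x => twistedMul ε a x) := by
  intro x y h
  obtain ⟨a₀, a₁, a₂, rfl⟩ := exists_ofInt_eq a
  obtain ⟨x₀, x₁, x₂, rfl⟩ := exists_ofInt_eq x
  obtain ⟨y₀, y₁, y₂, rfl⟩ := exists_ofInt_eq y
  simp only [twistedMul_ofInt, ofInt_eq_iff, mul_assoc] at h
  rw [ofInt_eq_iff]
  have h₀ : x₀ ≡ y₀ [ZMOD 3] := Int.modEq_iff_dvd.2 (by omega)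
  have h₁ : x₁ ≡ y₁ [ZMOD 3] := Int.modEq_iff_dvd.2 (by omega)
  have h₂ : x₂ ≡ y₂ [ZMOD 3] := Int.modEq_iff_dvd.2 (by omega)
  have hcorr : ε * ((a₀ * x₁ - a₁ * x₀) * (x₂ - a₂)) ≡ ε * ((a₀ * y₁ - a₁ * y₀) * (y₂ - a₂))
      [ZMOD 3] := by gcongr
  have := Int.modEq_iff_dvd.1 hcorr
  omega

theorem twistedMul_zero_medial (x y u v : C') :
    twistedMul 0 (twistedMul 0 x y) (twistedMul 0 u v) =
      twistedMul 0 (twistedMul 0 x u) (twistedMul 0 y v) := by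
  obtain ⟨x₀, x₁, x₂, rfl⟩ := exists_ofInt_eq x
  obtain ⟨y₀, y₁, y₂, rfl⟩ := exists_ofInt_eq y
  obtain ⟨u₀, u₁, u₂, rfl⟩ := exists_ofInt_eq u
  obtain ⟨v₀, v₁, v₂, rfl⟩ := exists_ofInt_eq v
  simp only [twistedMul_ofInt]
  congr 1 <;> ring

theorem three_dvd_of_twistedMul_medial
    (h : ∀ x y u v, twistedMul ε (twistedMul ε x y) (twistedMul ε u v) =
      twistedMul ε (twistedMul ε x u) (twistedMul ε y v)) : 3 ∣ ε := by
  have := h (ofInt 0 0 0) (ofInt 1 0 0) (ofInt 0 1 0) (ofInt 0 0 1)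
  simp only [twistedMul_ofInt, ofInt_eq_iff] at this
  ring_nf at this
  omega

/-- A bijection of `C'` reversing `twistedMul ε`. -/
def reverse (ε : ℤ) (p : C') : C' :=
  (p.1 + 9 * ε * (p.1 ^ 2 * p.2.1.val - p.1 * p.2.1.val ^ 2), p.1.val - p.2.1,
    p.1.val + p.2.1.val + p.2.2)

theorem reverse_ofInt (x y z : ℤ) :
    reverse ε (ofInt x y z) =
      ofInt (x + 9 * ε * (x ^ 2 * y - x * y ^ 2)) (x - y) (x + y + z) := by
  simp only [reverse, ofInt, natCast_val_intCast, Prod.mk.injEq]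
  push_cast
  exact ⟨by grind, by grind, by grind⟩

theorem reverse_twistedMul (a b : C') :
    reverse ε (twistedMul ε a b) = twistedMul (-ε) (reverse ε b) (reverse ε a) := by
  obtain ⟨a₀, a₁, a₂, rfl⟩ := exists_ofInt_eq a
  obtain ⟨b₀, b₁, b₂, rfl⟩ := exists_ofInt_eq b
  simp only [twistedMul_ofInt, reverse_ofInt]
  simp only [ofInt, Prod.mk.injEq]
  push_cast
  exact ⟨by grind, by grind, by grind⟩

theorem injective_reverse : Function.Injective (reverse ε) := by
  intro x y h
  obtain ⟨x₀, x₁, x₂, rfl⟩ := exists_ofInt_eq x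
  obtain ⟨y₀, y₁, y₂, rfl⟩ := exists_ofInt_eq y
  simp only [reverse_ofInt, ofInt_eq_iff, mul_assoc] at h
  rw [ofInt_eq_iff]
  have h₀ : x₀ ≡ y₀ [ZMOD 3] := Int.modEq_iff_dvd.2 (by omega)
  have h₁ : x₁ ≡ y₁ [ZMOD 3] := Int.modEq_iff_dvd.2 (by omega)
  have hcorr : ε * (x₀ ^ 2 * x₁ - x₀ * x₁ ^ 2) ≡ ε * (y₀ ^ 2 * y₁ - y₀ * y₁ ^ 2) [ZMOD 3] := by
    gcongr
  have := Int.modEq_iff_dvd.1 hcorr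
  omega

theorem injective_twistedMul_right (a : C') : Function.Injective (fun x => twistedMul ε x a) :=
  fun x y h => injective_reverse <| injective_twistedMul_left (ε := -ε) (reverse ε a) <| by
    simpa only [reverse_twistedMul] using congrArg (reverse ε) h

theorem isDistributiveQuasigroup_twistedMul : IsDistributiveQuasigroup (twistedMul ε) where
  bijective_left a := Finite.injective_iff_bijective.1 (injective_twistedMul_left a)
  bijective_right a := Finite.injective_iff_bijective.1 (injective_twistedMul_right a)
  left_distrib := twistedMul_left_distrib
  right_distrib := twistedMul_right_distrib

end TwistedMul

/-! ### Coordinates -/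

theorem DistributiveForm.mul_eq_vadd_add {Q : Type*} [CommIPLoop Q] {mul : Q → Q → Q}
    (D : DistributiveForm mul) (x y : Q) :
    mul x y = (D.leftDefect x - D.leftDefect y - D.triple x) +ᵥ ((x + y) + (x + y)) := by
  rw [D.mul_eq_vadd, D.add_self, vadd_vadd, map_add]
  congr 1
  module

namespace HamiltonianForm

variable {Q : Type*} [CommIPLoop Q] {mul : Q → Q → Q} (H : HamiltonianForm mul)

theorem associator_nsmulRec_left (k : ℕ) (x y z : Q) :
    H.associator (nsmulRec k x) y z = k • H.associator x y z := by
  rw [map_nsmulRec]; rfl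

theorem associator_nsmulRec_middle (k : ℕ) (x y z : Q) :
    H.associator x (nsmulRec k y) z = k • H.associator x y z := by
  rw [map_nsmulRec]; rfl

theorem associator_nsmulRec_right (k : ℕ) (x y z : Q) :
    H.associator x y (nsmulRec k z) = k • H.associator x y z := by
  rw [map_nsmulRec]

include H in
theorem nsmulRec_add_nsmulRec (k l : ℕ) (x : Q) :
    nsmulRec k x + nsmulRec l x = nsmulRec (k + l) x := by
  induction l with
  | zero => exact add_zero _
  | succ l ih =>
    have := H.add_add (nsmulRec k x) (nsmulRec l x) x
    rw [ih, associator_nsmulRec_left, associator_nsmulRec_middle, H.associator_self_left,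
      nsmul_zero, nsmul_zero, zero_vadd] at this
    exact this.symm

theorem nsmulRec_add_three_mul (k s : ℕ) (x : Q) :
    nsmulRec (k + 3 * s) x = (s • H.triple x) +ᵥ nsmulRec k x := by
  have hthree : nsmulRec 3 x = H.triple x +ᵥ (0 : Q) := by
    change 0 + x + x + x = _
    rw [zero_add, H.add_self, vadd_add_assoc, CommIPLoop.neg_add_self]
  induction s with
  | zero => rw [zero_nsmul, zero_vadd]; rfl
  | succ s ih =>
    rw [Nat.mul_succ, ← Nat.add_assoc, ← H.nsmulRec_add_nsmulRec, ih, hthree, add_vadd_comm,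
      add_zero, vadd_vadd, succ_nsmul']

namespace Frame

variable {H} (F : H.Frame)

theorem three_dvd_of_zsmul_eq_zero {k : ℤ} (h : k • (3 • F.v) = 0) : 3 ∣ k :=
  (zsmul_eq_zero_iff_three_dvd F.three_nsmul_three_nsmul_v F.three_nsmul_v_ne_zero k).1 h

theorem zsmul_v_add_zsmul_u_eq_zero_iff (p q : ℤ) : p • F.v + q • F.u = 0 ↔ 9 ∣ p ∧ 3 ∣ q := by
  have hu : ∀ k : ℤ, (3 * k) • F.u = 0 := fun k => by
    linear_combination (norm := module) k • F.three_nsmul_u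
  constructor
  · intro h
    have hq := congrArg H.centerDefect h
    rw [map_add, map_zsmul, map_zsmul, F.centerDefect_u, F.centerDefect_v, zsmul_zero, zero_add,
      map_zero] at hq
    obtain ⟨q, rfl⟩ := F.three_dvd_of_zsmul_eq_zero hq
    rw [hu, add_zero] at h
    obtain ⟨p, rfl⟩ := F.three_dvd_of_zsmul_eq_zero
      (show p • (3 • F.v) = 0 by linear_combination (norm := module) 3 • h)
    have := F.three_dvd_of_zsmul_eq_zero
      (show p • (3 • F.v) = 0 by linear_combination (norm := module) h)
    omega
  · rintro ⟨⟨p, rfl⟩, ⟨q, rfl⟩⟩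
    rw [hu, add_zero]
    linear_combination (norm := module) p • F.three_nsmul_three_nsmul_v

/-- The point with coordinates `i`, `j`, `k` in a frame. -/
def point (i j k : ℕ) : Q := (nsmulRec i F.e₀ + nsmulRec j F.e₁) + nsmulRec k F.e₂

theorem defects_point (i j k : ℕ) :
    H.defects (F.point i j k) = (i • F.v + j • F.u, j • F.v + k • F.u) := by
  rw [point, map_add, map_add, map_nsmulRec, map_nsmulRec, map_nsmulRec, F.defects_e₀, F.defects_e₁,
    F.defects_e₂]
  simp only [Prod.smul_mk, Prod.mk_add_mk, smul_zero, add_zero, zero_add]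

theorem triple_point (i j k : ℕ) : H.triple (F.point i j k) = i • F.v + j • F.u :=
  congrArg Prod.fst (F.defects_point i j k)

theorem leftDefect_point (i j k : ℕ) : H.leftDefect (F.point i j k) = j • F.v + k • F.u :=
  congrArg Prod.snd (F.defects_point i j k)

theorem point_add_point (i j k i' j' k' : ℕ) : F.point i j k + F.point i' j' k' =
    ((((i : ℤ) * j' - j * i') * (k - k')) • H.associator F.e₀ F.e₁ F.e₂) +ᵥ
      F.point (i + i') (j + j') (k + k') := by
  have h₀₁ : (nsmulRec i F.e₀ + nsmulRec j F.e₁) + (nsmulRec i' F.e₀ + nsmulRec j' F.e₁) =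
      nsmulRec (i + i') F.e₀ + nsmulRec (j + j') F.e₁ := by
    rw [H.add_add_add_comm]
    simp only [associator_nsmulRec_left, associator_nsmulRec_middle, associator_nsmulRec_right,
      associator_self_left, associator_self_right, associator_self_outer, smul_zero, neg_zero,
      sub_zero, add_zero, zero_vadd, H.nsmulRec_add_nsmulRec]
  rw [point, point, H.add_add_add_comm, h₀₁, H.nsmulRec_add_nsmulRec, point]
  congr 1
  simp only [map_add, AddMonoidHom.add_apply, associator_nsmulRec_left, associator_nsmulRec_middle,
    associator_nsmulRec_right, associator_self_left, associator_self_right, associator_self_outer,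
    smul_zero]
  rw [H.associator_swap_right F.e₀ F.e₁ F.e₂, H.associator_swap_left F.e₀ F.e₁ F.e₂,
    H.associator_cycle F.e₀ F.e₁ F.e₂]
  module

theorem point_add_three_mul (i j k p q r : ℕ) :
    F.point (i + 3 * p) (j + 3 * q) (k + 3 * r) = (p • F.v + q • F.u) +ᵥ F.point i j k := by
  have htriple : H.triple F.e₀ = F.v ∧ H.triple F.e₁ = F.u ∧ H.triple F.e₂ = 0 :=
    ⟨congrArg Prod.fst F.defects_e₀, congrArg Prod.fst F.defects_e₁, congrArg Prod.fst F.defects_e₂⟩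
  simp only [point, H.nsmulRec_add_three_mul, htriple, vadd_add_vadd_comm, smul_zero, zero_vadd]
  rw [vadd_add_assoc]

theorem mul_point (i j k i' j' k' : ℕ) : mul (F.point i j k) (F.point i' j' k') =
    (((j : ℤ) - j' - i) • F.v + ((k : ℤ) - k' - j) • F.u +
      (2 * (((i : ℤ) * j' - j * i') * (k - k'))) • H.associator F.e₀ F.e₁ F.e₂) +ᵥ
      F.point (2 * (i + i')) (2 * (j + j')) (2 * (k + k')) := by
  rw [H.mul_eq_vadd_add, F.point_add_point, vadd_add_vadd_comm, F.point_add_point, vadd_vadd,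
    vadd_vadd, leftDefect_point, leftDefect_point, triple_point, ← two_mul, ← two_mul, ← two_mul]
  congr 1
  simp only [sub_self, mul_zero, zero_smul]
  module

/-- The parametrization of the quasigroup by `C'` given by a frame. -/
def coord (a : C') : Q := F.point a.1.val a.2.1.val a.2.2.val

theorem point_eq_coord (i j k : ℕ) : F.point i j k = F.coord (ofInt i j k) := by
  have hperiod : (9 * (i / 27)) • F.v + (3 * (j / 9)) • F.u = 0 := by
    have := (F.zsmul_v_add_zsmul_u_eq_zero_iff (9 * (i / 27 : ℕ)) (3 * (j / 9 : ℕ))).2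
      ⟨dvd_mul_right _ _, dvd_mul_right _ _⟩
    exact_mod_cast this
  have hpoint := F.point_add_three_mul (i % 27) (j % 9) (k % 3) (9 * (i / 27)) (3 * (j / 9)) (k / 3)
  rw [hperiod, zero_vadd, Nat.mod_add_div, show i % 27 + 3 * (9 * (i / 27)) = i by omega,
    show j % 9 + 3 * (3 * (j / 9)) = j by omega] at hpoint
  rw [hpoint, coord]
  simp only [ofInt, Int.cast_natCast, ZMod.val_natCast]

theorem vadd_coord_ofInt (p q x y z : ℤ) :
    (p • F.v + q • F.u) +ᵥ F.coord (ofInt x y z) = F.coord (ofInt (x + 3 * p) (y + 3 * q) z) := by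
  have exists_nat : ∀ (m : ℕ) (x : ℤ), 0 < m → ∃ i : ℕ, (m : ℤ) ∣ x - i := fun m x hm =>
    ⟨(x % m).toNat, by
      rw [Int.toNat_of_nonneg (Int.emod_nonneg x (by omega))]
      exact Int.dvd_self_sub_emod⟩
  obtain ⟨p', hp⟩ := exists_nat 9 p (by norm_num)
  obtain ⟨q', hq⟩ := exists_nat 3 q (by norm_num)
  obtain ⟨i, hi⟩ := exists_nat 27 x (by norm_num)
  obtain ⟨j, hj⟩ := exists_nat 9 y (by norm_num)
  obtain ⟨k, hk⟩ := exists_nat 3 z (by norm_num)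
  have hcentral : p • F.v + q • F.u = p' • F.v + q' • F.u := by
    have := (F.zsmul_v_add_zsmul_u_eq_zero_iff _ _).2 ⟨hp, hq⟩
    linear_combination (norm := module) this
  have hpoint := F.point_add_three_mul i j k p' q' 0
  rw [F.point_eq_coord, F.point_eq_coord, ← hcentral] at hpoint
  rw [ofInt_eq_iff.2 ⟨hi, hj, hk⟩, ← hpoint]
  refine congrArg F.coord (ofInt_eq_iff.2 ?_)
  push_cast at hp hq hi hj hk ⊢
  omega

theorem coord_injective : Function.Injective F.coord := by
  intro a b h
  have hdefects := congrArg H.defects h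
  rw [coord, coord, defects_point, defects_point, Prod.mk.injEq] at hdefects
  rw [← ofInt_val a, ← ofInt_val b] at h ⊢
  have ht : (9 : ℤ) ∣ a.1.val - b.1.val ∧ (3 : ℤ) ∣ a.2.1.val - b.2.1.val := by
    rw [← F.zsmul_v_add_zsmul_u_eq_zero_iff]
    linear_combination (norm := module) hdefects.1
  have hn : (9 : ℤ) ∣ a.2.1.val - b.2.1.val ∧ (3 : ℤ) ∣ a.2.2.val - b.2.2.val := by
    rw [← F.zsmul_v_add_zsmul_u_eq_zero_iff]
    linear_combination (norm := module) hdefects.2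
  obtain ⟨⟨m, hm⟩, -⟩ := ht
  have hshift : ofInt a.1.val a.2.1.val a.2.2.val =
      ofInt (b.1.val + 3 * (3 * m)) (b.2.1.val + 3 * 0) b.2.2.val :=
    ofInt_eq_iff.2 ⟨⟨0, by linear_combination hm⟩, by simpa using hn.1, hn.2⟩
  rw [hshift, ← F.vadd_coord_ofInt] at h
  have hm' := (F.zsmul_v_add_zsmul_u_eq_zero_iff _ _).1
    (vadd_left_injective _ (h.trans (zero_vadd _ _).symm))
  exact ofInt_eq_iff.2 ⟨by omega, hn⟩

theorem mul_coord {ε : ℤ} (hε : H.associator F.e₀ F.e₁ F.e₂ = ε • (3 • F.v)) (a b : C') :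
    mul (F.coord a) (F.coord b) = F.coord (twistedMul ε a b) := by
  rw [← ofInt_val a, ← ofInt_val b, twistedMul_ofInt, ← point_eq_coord, ← point_eq_coord,
    F.mul_point, point_eq_coord, hε]
  generalize a.1.val = i, a.2.1.val = j, a.2.2.val = k, b.1.val = i', b.2.1.val = j',
    b.2.2.val = k'
  have hcentral : ((j : ℤ) - j' - i) • F.v + ((k : ℤ) - k' - j) • F.u +
        (2 * (((i : ℤ) * j' - j * i') * (k - k'))) • ε • (3 • F.v) =
      ((j : ℤ) - j' - i + 6 * ε * ((i * j' - j * i') * (k - k'))) • F.v +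
        ((k : ℤ) - k' - j) • F.u := by
    module
  rw [hcentral, vadd_coord_ofInt]
  refine congrArg F.coord
    (ofInt_eq_iff.2 ⟨⟨ε * ((i * j' - j * i') * (k - k')), ?_⟩, ⟨0, ?_⟩, ⟨k, ?_⟩⟩)
  all_goals push_cast; ring

include F in
theorem exists_equiv [Finite Q] (hQ : Nat.card Q = 729) :
    ∃ ε ∈ ({0, 1, -1} : Set ℤ), ∃ φ : Q ≃ C', ∀ a b, φ (mul a b) = twistedMul ε (φ a) (φ b) := by
  have hbij : Function.Bijective F.coord :=
    (Nat.bijective_iff_injective_and_card _).2 ⟨F.coord_injective, card_C'.trans hQ.symm⟩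
  suffices h : ∃ ε ∈ ({0, 1, -1} : Set ℤ), H.associator F.e₀ F.e₁ F.e₂ = ε • (3 • F.v) by
    obtain ⟨ε, hmem, hε⟩ := h
    let ψ := Equiv.ofBijective F.coord hbij
    refine ⟨ε, hmem, ψ.symm, fun a b => ψ.symm_apply_eq.2 ?_⟩
    exact (congrArg₂ mul (ψ.apply_symm_apply a) (ψ.apply_symm_apply b)).symm.trans
      (F.mul_coord hε _ _)
  obtain h | h | h := eq_or_eq_neg_of_mem_zmultiples F.three_nsmul_three_nsmul_v
    (F.associator_mem_zmultiples F.e₀ F.e₁ F.e₂)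
  · exact ⟨0, by simp, by rw [h, zero_zsmul]⟩
  · exact ⟨1, by simp, by rw [h, one_zsmul]⟩
  · exact ⟨-1, by simp, by rw [h, neg_zsmul, one_zsmul]⟩

end Frame
end HamiltonianForm

theorem IsDistributiveQuasigroup.exists_equiv_twistedMul {Q : Type*} {mul : Q → Q → Q}
    (hmul : IsDistributiveQuasigroup mul) (hham : IsHamiltonian mul)
    (hmed : ¬ ∀ x y u v, mul (mul x y) (mul u v) = mul (mul x u) (mul y v))
    (hQ : Nat.card Q = 729) :
    ∃ ε ∈ ({1, -1} : Set ℤ), ∃ φ : Q ≃ C', ∀ a b, φ (mul a b) = twistedMul ε (φ a) (φ b) := by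
  have : Finite Q := Nat.finite_of_card_ne_zero (by lia)
  obtain ⟨e⟩ : Nonempty Q := Nat.card_pos_iff.1 (by lia) |>.1
  let _ := hmul.commIPLoop e
  obtain ⟨H⟩ := (hmul.distributiveForm e).nonempty_hamiltonianForm
    (fun a => ⟨(hmul.bijective_left a).1, (hmul.bijective_right a).1⟩) hham
  obtain ⟨F⟩ := H.nonempty_frame hQ fun hA => hmed (H.medial_of_associator_eq_zero hA)
  obtain ⟨ε, rfl | hε, φ, hφ⟩ := F.exists_equiv hQ
  · refine absurd (fun x y u v => φ.injective ?_) hmed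
    simp only [hφ, twistedMul_zero_medial]
  · exact ⟨ε, hε, φ, hφ⟩

/-! ### Normal subquasigroups -/

section NormalSubquasigroup

theorem rel_of_rel_map {Q : Type*} [Finite Q] (s : Setoid Q) {f : Q → Q}
    (hf : Function.Surjective f) (hrel : ∀ x y, s x y → s (f x) (f y)) {x y : Q}
    (h : s (f x) (f y)) : s x y := by
  let F : Quotient s → Quotient s := Quotient.map f hrel
  have hF : Function.Surjective F := Quotient.ind fun y => by
    obtain ⟨x, rfl⟩ := hf y
    exact ⟨⟦x⟧, rfl⟩
  exact Quotient.exact (Finite.injective_iff_surjective.2 hF (Quotient.sound h))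

variable {Q : Type*} {mul : Q → Q → Q}

theorem IsDistributiveQuasigroup.isQuasigroup [Nonempty Q] (h : IsDistributiveQuasigroup mul) :
    IsQuasigroup mul :=
  ⟨inferInstance, fun a => ⟨h.bijective_left a, h.bijective_right a⟩⟩

theorem isNormalCongruence_of_finite [Finite Q] (hmul : IsQuasigroup mul) (s : Setoid Q)
    (h : ∀ a b c d, s a b → s c d → s (mul a c) (mul b d)) : IsNormalCongruence mul s := by
  refine ⟨s.iseqv, h, fun a b c d hab hmul_rel => ?_, fun a b c d hcd hmul_rel => ?_⟩
  · exact rel_of_rel_map s (hmul.2 a).1.2 (fun x y => h a a x y (s.refl a))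
      (s.trans hmul_rel (h b a d d (s.symm hab) (s.refl d)))
  · exact rel_of_rel_map s (hmul.2 c).2.2 (fun x y hxy => h x y c c hxy (s.refl c))
      (s.trans hmul_rel (h b b d c (s.refl b) (s.symm hcd)))

variable {Q' : Type*} {mul' : Q' → Q' → Q'} {f : Q → Q'}

theorem IsSubquasigroup.preimage (hsurj : Function.Surjective f)
    (hf : ∀ x y, f (mul x y) = mul' (f x) (f y)) {P : Set Q'} (hP : IsSubquasigroup mul' P) :
    IsSubquasigroup mul (f ⁻¹' P) := by
  refine ⟨hP.1.preimage hsurj, fun a ha b hb => ⟨?_, fun x hx => ?_, fun y hy => ?_⟩⟩ <;>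
    obtain ⟨hmul, hleft, hright⟩ := hP.2 (f a) ha (f b) hb
  · rwa [Set.mem_preimage, hf]
  · exact hleft (f x) (by rw [← hf, hx])
  · exact hright (f y) (by rw [← hf, hy])

theorem IsNormalSubquasigroup.preimage (hsurj : Function.Surjective f)
    (hf : ∀ x y, f (mul x y) = mul' (f x) (f y)) {P : Set Q'} (hP : IsNormalSubquasigroup mul' P) :
    IsNormalSubquasigroup mul (f ⁻¹' P) := by
  obtain ⟨hsub, r, ⟨hr, h₁, h₂, h₃⟩, a, rfl⟩ := hP
  obtain ⟨a, rfl⟩ := hsurj a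
  refine ⟨hsub.preimage hsurj hf, fun x y => r (f x) (f y), ⟨hr.comap f, ?_, ?_, ?_⟩, a, rfl⟩ <;>
    simp only [hf]
  · exact fun _ _ _ _ => h₁ _ _ _ _
  · exact fun _ _ _ _ => h₂ _ _ _ _
  · exact fun _ _ _ _ => h₃ _ _ _ _

/-- Translations being automorphisms, every subquasigroup can be moved to contain `o`. -/
theorem IsDistributiveQuasigroup.isHamiltonian_of_mem (h : IsDistributiveQuasigroup mul) (o : Q)
    (hnormal : ∀ P, IsSubquasigroup mul P → o ∈ P → IsNormalSubquasigroup mul P) :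
    IsHamiltonian mul := by
  intro P hP
  obtain ⟨p, hp⟩ := hP.1
  obtain ⟨a, ha⟩ := (h.bijective_right p).2 o
  have hmem := h.leftPerm_mem_mulAut a
  have ho : (h.leftPerm a)⁻¹ o = p := Equiv.Perm.inv_eq_iff_eq.2 ha.symm
  have := (hnormal _ (hP.preimage (h.leftPerm a)⁻¹.surjective (inv_mem hmem))
    (show (h.leftPerm a)⁻¹ o ∈ P by rwa [ho])).preimage (h.leftPerm a).surjective hmem
  rwa [← Set.preimage_comp, ← Equiv.Perm.coe_mul, inv_mul_cancel] at this

end NormalSubquasigroup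

section TwistedAdd

variable {ε : ℤ}

/-- The loop of `twistedMul ε` at the base point `0`. -/
def twistedAdd (ε : ℤ) (a b : C') : C' :=
  a + b + (9 * ε * ((a.1 * (b.2.1.val : ZMod 27) - (a.2.1.val : ZMod 27) * b.1)
    * ((a.2.2.val : ZMod 27) - (b.2.2.val : ZMod 27))), 0, 0)

theorem twistedAdd_ofInt (a₀ a₁ a₂ b₀ b₁ b₂ : ℤ) :
    twistedAdd ε (ofInt a₀ a₁ a₂) (ofInt b₀ b₁ b₂) =
      ofInt (a₀ + b₀ + 9 * (ε * ((a₀ * b₁ - a₁ * b₀) * (a₂ - b₂)))) (a₁ + b₁) (a₂ + b₂) := by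
  simp only [twistedAdd, ofInt, natCast_val_intCast, Prod.mk_add_mk, add_zero, Prod.mk.injEq]
  push_cast
  exact ⟨by grind, rfl, rfl⟩

theorem twistedAdd_mul_zero_zero_mul (a b : C') :
    twistedAdd ε (twistedMul ε a 0) (twistedMul ε 0 b) = twistedMul ε a b := by
  obtain ⟨a₀, a₁, a₂, rfl⟩ := exists_ofInt_eq a
  obtain ⟨b₀, b₁, b₂, rfl⟩ := exists_ofInt_eq b
  rw [← ofInt_zero, twistedMul_ofInt, twistedMul_ofInt, twistedMul_ofInt, twistedAdd_ofInt]
  simp only [ofInt, Prod.mk.injEq]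
  push_cast
  exact ⟨by grind, by grind, by grind⟩

theorem ofInt_add_ofInt (x y z x' y' z' : ℤ) :
    ofInt x y z + ofInt x' y' z' = ofInt (x + x') (y + y') (z + z') := by
  simp only [ofInt, Prod.mk_add_mk, Int.cast_add]

theorem zsmul_ofInt (k x y z : ℤ) : k • ofInt x y z = ofInt (k * x) (k * y) (k * z) := by
  simp only [ofInt, Prod.smul_mk, zsmul_eq_mul, Int.cast_mul]

theorem exists_nat_zsmul_eq (k : ℤ) : ∃ n : ℕ, ∀ a : C', k • a = n • a := by
  refine ⟨(k % 27).toNat, fun a => ?_⟩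
  obtain ⟨x, y, z, rfl⟩ := exists_ofInt_eq a
  rw [← natCast_zsmul, Int.toNat_of_nonneg (Int.emod_nonneg k (by norm_num)), zsmul_ofInt,
    zsmul_ofInt, Int.emod_def, ofInt_eq_iff]
  exact ⟨⟨k / 27 * x, by ring⟩, ⟨3 * (k / 27) * y, by ring⟩, ⟨9 * (k / 27) * z, by ring⟩⟩

theorem twistedAdd_nsmul_self (n : ℕ) (a : C') : twistedAdd ε (n • a) a = (n + 1) • a := by
  obtain ⟨x, y, z, rfl⟩ := exists_ofInt_eq a
  rw [← natCast_zsmul, ← natCast_zsmul, zsmul_ofInt, zsmul_ofInt, twistedAdd_ofInt]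
  push_cast
  congr 1 <;> ring

/-- The map `(x, y, z) ↦ (3y, 3z, 0)`, for which `twistedMul ε a 0 = -a + N a`. -/
def nilpotentShift (a : C') : C' := (3 * a.2.1.val, 3 * a.2.2.val, 0)

theorem nilpotentShift_ofInt (x y z : ℤ) :
    nilpotentShift (ofInt x y z) = ofInt (3 * y) (3 * z) 0 := by
  simp only [nilpotentShift, ofInt, natCast_val_intCast, Prod.mk.injEq]
  push_cast
  exact ⟨by grind, by grind, rfl⟩

theorem twistedAdd_mul_zero_self (a : C') :
    twistedAdd ε (twistedMul ε a 0) a = nilpotentShift a := by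
  obtain ⟨x, y, z, rfl⟩ := exists_ofInt_eq a
  rw [← ofInt_zero, twistedMul_ofInt, twistedAdd_ofInt, nilpotentShift_ofInt]
  simp only [ofInt, Prod.mk.injEq]
  push_cast
  exact ⟨by grind, by grind, by grind⟩

end TwistedAdd

namespace IsSubquasigroup

variable {ε : ℤ} {P : Set C'} (hP : IsSubquasigroup (twistedMul ε) P) (h0 : 0 ∈ P)

include hP h0

theorem twistedAdd_mem {a b : C'} (ha : a ∈ P) (hb : b ∈ P) : twistedAdd ε a b ∈ P := by
  have hε := isDistributiveQuasigroup_twistedMul (ε := ε)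
  obtain ⟨a', rfl⟩ := (hε.bijective_right 0).2 a
  obtain ⟨b', rfl⟩ := (hε.bijective_left 0).2 b
  rw [twistedAdd_mul_zero_zero_mul]
  exact (hP.2 a' ((hP.2 0 h0 _ ha).2.2 a' rfl) b' ((hP.2 0 h0 _ hb).2.1 b' rfl)).1

theorem nilpotentShift_mem {a : C'} (ha : a ∈ P) : nilpotentShift a ∈ P := by
  rw [← twistedAdd_mul_zero_self (ε := ε)]
  exact hP.twistedAdd_mem h0 (hP.2 a ha 0 h0).1 ha

theorem zsmul_mem {a : C'} (ha : a ∈ P) (k : ℤ) : k • a ∈ P := by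
  obtain ⟨n, hn⟩ := exists_nat_zsmul_eq k
  rw [hn]
  clear hn
  induction n with
  | zero => rwa [zero_nsmul]
  | succ n ih =>
    rw [← twistedAdd_nsmul_self (ε := ε)]
    exact hP.twistedAdd_mem h0 ih ha

theorem nine_mem_of_not_dvd {s : ℤ} (h : ofInt (9 * s) 0 0 ∈ P) (hs : ¬ 3 ∣ s) :
    ofInt 9 0 0 ∈ P := by
  obtain ⟨k, hk⟩ : ∃ k, 3 ∣ 1 - k * s := by
    obtain hs | hs : s % 3 = 1 ∨ s % 3 = 2 := by omega
    exacts [⟨1, by omega⟩, ⟨2, by omega⟩]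
  convert hP.zsmul_mem h0 h k using 1
  rw [zsmul_ofInt, mul_left_comm, ofInt_eq_iff]
  omega

theorem three_dvd_of_mem (h9 : ofInt 9 0 0 ∉ P) {x y z : ℤ} (h : ofInt x y z ∈ P) :
    3 ∣ x ∧ 3 ∣ y ∧ 3 ∣ z := by
  have hN := hP.nilpotentShift_mem h0 h
  refine ⟨?_, ?_, ?_⟩ <;> by_contra hc <;> refine h9 (hP.nine_mem_of_not_dvd h0 ?_ hc)
  · convert hP.zsmul_mem h0 h 9 using 1
    rw [zsmul_ofInt, ofInt_eq_iff]
    omega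
  · convert hP.zsmul_mem h0 hN 3 using 1
    rw [nilpotentShift_ofInt, zsmul_ofInt, ofInt_eq_iff]
    omega
  · convert hP.nilpotentShift_mem h0 hN using 1
    rw [nilpotentShift_ofInt, nilpotentShift_ofInt, ofInt_eq_iff]
    omega

theorem ofInt_add_nine_mul_mem {x y z t : ℤ} (h : ofInt x y z ∈ P)
    (ht : ofInt 9 0 0 ∉ P → 3 ∣ t) : ofInt (x + 9 * t) y z ∈ P := by
  by_cases h9 : ofInt 9 0 0 ∈ P
  · convert hP.twistedAdd_mem h0 h (hP.zsmul_mem h0 h9 t) using 1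
    rw [zsmul_ofInt, twistedAdd_ofInt, ofInt_eq_iff]
    exact ⟨⟨ε * y * t * z * 3, by ring⟩, by simp, by simp⟩
  · convert h using 1
    rw [ofInt_eq_iff]
    have := ht h9
    omega

theorem add_mem {a b : C'} (ha : a ∈ P) (hb : b ∈ P) : a + b ∈ P := by
  obtain ⟨a₀, a₁, a₂, rfl⟩ := exists_ofInt_eq a
  obtain ⟨b₀, b₁, b₂, rfl⟩ := exists_ofInt_eq b
  have hadd := hP.twistedAdd_mem h0 ha hb
  rw [twistedAdd_ofInt] at hadd
  convert hP.ofInt_add_nine_mul_mem h0 hadd (t := -(ε * ((a₀ * b₁ - a₁ * b₀) * (a₂ - b₂))))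
    fun h9 => ?_ using 1
  · rw [ofInt_add_ofInt]
    congr 1
    ring
  · obtain ⟨⟨k, rfl⟩, ⟨l, rfl⟩, -⟩ := hP.three_dvd_of_mem h0 h9 ha
    exact ⟨-(ε * ((k * b₁ - l * b₀) * (a₂ - b₂))), by ring⟩

theorem neg_twistedMul_add_twistedMul_add_mem (a c : C') {p q : C'} (hp : p ∈ P) (hq : q ∈ P) :
    -twistedMul ε a c + twistedMul ε (a + p) (c + q) ∈ P := by
  obtain ⟨a₀, a₁, a₂, rfl⟩ := exists_ofInt_eq a
  obtain ⟨c₀, c₁, c₂, rfl⟩ := exists_ofInt_eq c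
  obtain ⟨p₀, p₁, p₂, rfl⟩ := exists_ofInt_eq p
  obtain ⟨q₀, q₁, q₂, rfl⟩ := exists_ofInt_eq q
  have hmul := (hP.2 _ hp _ hq).1
  rw [twistedMul_ofInt] at hmul
  convert hP.ofInt_add_nine_mul_mem h0 hmul
    (t := ε * (((a₀ + p₀) * (c₁ + q₁) - (a₁ + p₁) * (c₀ + q₀)) * (c₂ + q₂ - (a₂ + p₂)))
      - ε * ((a₀ * c₁ - a₁ * c₀) * (c₂ - a₂)) - ε * ((p₀ * q₁ - p₁ * q₀) * (q₂ - p₂)))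
    fun h9 => ?_ using 1
  · rw [ofInt_add_ofInt, ofInt_add_ofInt, twistedMul_ofInt, twistedMul_ofInt, ← neg_one_zsmul,
      zsmul_ofInt, ofInt_add_ofInt]
    congr 1 <;> ring
  · obtain ⟨⟨k₀, rfl⟩, ⟨k₁, rfl⟩, ⟨k₂, rfl⟩⟩ := hP.three_dvd_of_mem h0 h9 hp
    obtain ⟨⟨l₀, rfl⟩, ⟨l₁, rfl⟩, ⟨l₂, rfl⟩⟩ := hP.three_dvd_of_mem h0 h9 hq
    ring_nf
    omega

theorem isNormal_of_zero_mem : IsNormalSubquasigroup (twistedMul ε) P := by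
  let S : AddSubgroup C' :=
    { carrier := P
      add_mem' := hP.add_mem h0
      zero_mem' := h0
      neg_mem' := fun {x} hx => by simpa only [neg_one_zsmul] using hP.zsmul_mem h0 hx (-1) }
  refine ⟨hP, QuotientAddGroup.leftRel S, isNormalCongruence_of_finite
    isDistributiveQuasigroup_twistedMul.isQuasigroup _ fun a b c d hab hcd => ?_, 0, ?_⟩
  · rw [QuotientAddGroup.leftRel_apply] at hab hcd ⊢
    have := hP.neg_twistedMul_add_twistedMul_add_mem h0 a c hab hcd
    rwa [add_neg_cancel_left, add_neg_cancel_left] at this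
  · ext x
    rw [Set.mem_ofPred_eq, QuotientAddGroup.leftRel_apply, neg_zero, zero_add]
    rfl

end IsSubquasigroup

theorem isHamiltonian_twistedMul (ε : ℤ) : IsHamiltonian (twistedMul ε) :=
  isDistributiveQuasigroup_twistedMul.isHamiltonian_of_mem 0 fun _ hP h0 =>
    hP.isNormal_of_zero_mem h0

/-! ### Homomorphisms on `C'` -/

section Hom

variable {ε ε' : ℤ} {ψ : C' → C'}
  (hψ : ∀ a b, ψ (twistedMul ε a b) = twistedMul ε' (ψ a) (ψ b)) (h0 : ψ 0 = 0)

include hψ h0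

theorem map_twistedAdd (a b : C') : ψ (twistedAdd ε a b) = twistedAdd ε' (ψ a) (ψ b) := by
  have hε := isDistributiveQuasigroup_twistedMul (ε := ε)
  obtain ⟨a', rfl⟩ := (hε.bijective_right 0).2 a
  obtain ⟨b', rfl⟩ := (hε.bijective_left 0).2 b
  rw [twistedAdd_mul_zero_zero_mul, hψ, hψ, hψ, h0, twistedAdd_mul_zero_zero_mul]

theorem map_nilpotentShift (a : C') : ψ (nilpotentShift a) = nilpotentShift (ψ a) := by
  rw [← twistedAdd_mul_zero_self (ε := ε), map_twistedAdd hψ h0, hψ, h0, twistedAdd_mul_zero_self]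

theorem map_zsmul_of_twistedMul (k : ℤ) (a : C') : ψ (k • a) = k • ψ a := by
  obtain ⟨n, hn⟩ := exists_nat_zsmul_eq k
  rw [hn, hn]
  clear hn
  induction n with
  | zero => rw [zero_nsmul, zero_nsmul, h0]
  | succ n ih =>
    rw [← twistedAdd_nsmul_self (ε := ε), map_twistedAdd hψ h0, ih, twistedAdd_nsmul_self]

/-- Since `N` is `0`, `3 • (1, 0, 0)`, `3 • (0, 1, 0)` on the three basis vectors, a homomorphism
is triangular with constant diagonal modulo `3`. -/
theorem exists_map_basis_eq : ∃ p q r s : ℤ, ψ (ofInt 1 0 0) = ofInt p 0 0 ∧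
    ψ (ofInt 0 1 0) = ofInt q p 0 ∧ ψ (ofInt 0 0 1) = ofInt r s p := by
  obtain ⟨p₀, p₁, p₂, hp⟩ := exists_ofInt_eq (ψ (ofInt 1 0 0))
  obtain ⟨q₀, q₁, q₂, hq⟩ := exists_ofInt_eq (ψ (ofInt 0 1 0))
  obtain ⟨r₀, r₁, r₂, hr⟩ := exists_ofInt_eq (ψ (ofInt 0 0 1))
  have hN₀ : nilpotentShift (ψ (ofInt 1 0 0)) = ofInt 0 0 0 := by
    rw [← map_nilpotentShift hψ h0, nilpotentShift_ofInt, mul_zero, ofInt_zero, h0]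
  have hN₁ : nilpotentShift (ψ (ofInt 0 1 0)) = (3 : ℤ) • ψ (ofInt 1 0 0) := by
    rw [← map_nilpotentShift hψ h0, ← map_zsmul_of_twistedMul hψ h0, nilpotentShift_ofInt,
      zsmul_ofInt, mul_zero]
  have hN₂ : nilpotentShift (ψ (ofInt 0 0 1)) = (3 : ℤ) • ψ (ofInt 0 1 0) := by
    rw [← map_nilpotentShift hψ h0, ← map_zsmul_of_twistedMul hψ h0, nilpotentShift_ofInt,
      zsmul_ofInt, mul_zero]
  rw [← hp, nilpotentShift_ofInt, ofInt_eq_iff] at hN₀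
  rw [← hp, ← hq, nilpotentShift_ofInt, zsmul_ofInt, ofInt_eq_iff] at hN₁
  rw [← hq, ← hr, nilpotentShift_ofInt, zsmul_ofInt, ofInt_eq_iff] at hN₂
  refine ⟨p₀, q₀, r₀, r₁, ?_, ?_, ?_⟩
  · rw [← hp, ofInt_eq_iff]
    omega
  · rw [← hq, ofInt_eq_iff]
    omega
  · rw [← hr, ofInt_eq_iff]
    omega

theorem three_dvd_mul_sub_of_map_basis_eq {p q r s : ℤ} (h₀ : ψ (ofInt 1 0 0) = ofInt p 0 0)
    (h₁ : ψ (ofInt 0 1 0) = ofInt q p 0) (h₂ : ψ (ofInt 0 0 1) = ofInt r s p) :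
    3 ∣ p * (ε - ε' * p ^ 2) := by
  have hassoc : twistedAdd ε (twistedAdd ε (ofInt 1 0 0) (ofInt 0 1 0)) (ofInt 0 0 1) =
      twistedAdd ε (twistedAdd ε (ofInt 1 0 0) (twistedAdd ε (ofInt 0 1 0) (ofInt 0 0 1)))
        ((9 * ε) • ofInt 1 0 0) := by
    simp only [twistedAdd_ofInt, zsmul_ofInt, ofInt_eq_iff]
    exact ⟨⟨3 * ε ^ 2, by ring⟩, by norm_num, by norm_num⟩
  replace hassoc := congrArg ψ hassoc
  simp only [map_twistedAdd hψ h0, map_zsmul_of_twistedMul hψ h0, h₀, h₁, h₂] at hassoc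
  simp only [twistedAdd_ofInt, zsmul_ofInt, ofInt_eq_iff] at hassoc
  ring_nf at hassoc ⊢
  omega

theorem three_dvd_sub_of_injective_hom (hinj : Function.Injective ψ) : 3 ∣ ε - ε' := by
  obtain ⟨p, q, r, s, h₀, h₁, h₂⟩ := exists_map_basis_eq hψ h0
  have hp : ¬ 3 ∣ p := by
    rintro ⟨k, rfl⟩
    have h9 : ψ ((9 : ℤ) • ofInt 1 0 0) = ψ 0 := by
      rw [map_zsmul_of_twistedMul hψ h0, h₀, h0, zsmul_ofInt, ← ofInt_zero, ofInt_eq_iff]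
      omega
    have := hinj h9
    rw [zsmul_ofInt, ← ofInt_zero, ofInt_eq_iff] at this
    omega
  have hcube := three_dvd_mul_sub_of_map_basis_eq hψ h0 h₀ h₁ h₂
  have hcop : IsCoprime 3 p := (Int.prime_three.coprime_iff_not_dvd).2 hp
  have hsq : p ^ 2 ≡ 1 [ZMOD 3] := Int.ModEq.pow_card_sub_one_eq_one Nat.prime_three hcop.symm
  rw [show ε - ε' = (ε - ε' * p ^ 2) - ε' * (1 - p ^ 2) by ring]
  exact dvd_sub (hcop.dvd_of_dvd_mul_left hcube) (hsq.dvd.mul_left ε')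

end Hom

theorem three_dvd_sub_of_equiv {ε ε' : ℤ} (φ : C' ≃ C')
    (hφ : ∀ a b, φ (twistedMul ε a b) = twistedMul ε' (φ a) (φ b)) : 3 ∣ ε - ε' := by
  have hε' := isDistributiveQuasigroup_twistedMul (ε := ε')
  obtain ⟨a, ha⟩ := (hε'.bijective_right (φ 0)).2 0
  exact three_dvd_sub_of_injective_hom (ψ := fun x => twistedMul ε' a (φ x))
    (fun x y => by rw [hφ, hε'.left_distrib]) ha ((hε'.bijective_left a).1.comp φ.injective)

/-- `C(∇₁)` and `C(∇₂)` are, up to isomorphism, the only non-medial hamiltonian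
distributive quasigroups of order 729; they are not isomorphic, but they are
anti-isomorphic. -/
theorem classification_order_729 :
    (IsQuasigroup nabla₁ ∧
      (∀ x a b : C', nabla₁ x (nabla₁ a b) = nabla₁ (nabla₁ x a) (nabla₁ x b)) ∧
      (∀ x a b : C', nabla₁ (nabla₁ a b) x = nabla₁ (nabla₁ a x) (nabla₁ b x)) ∧
      IsHamiltonian nabla₁ ∧
      ¬ (∀ x y u v : C', nabla₁ (nabla₁ x y) (nabla₁ u v)
          = nabla₁ (nabla₁ x u) (nabla₁ y v)) ∧
      Nat.card C' = 729) ∧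
    (IsQuasigroup nabla₂ ∧
      (∀ x a b : C', nabla₂ x (nabla₂ a b) = nabla₂ (nabla₂ x a) (nabla₂ x b)) ∧
      (∀ x a b : C', nabla₂ (nabla₂ a b) x = nabla₂ (nabla₂ a x) (nabla₂ b x)) ∧
      IsHamiltonian nabla₂ ∧
      ¬ (∀ x y u v : C', nabla₂ (nabla₂ x y) (nabla₂ u v)
          = nabla₂ (nabla₂ x u) (nabla₂ y v))) ∧
    (∀ (Q : Type u) (mul : Q → Q → Q),
      IsQuasigroup mul →
      (∀ x a b : Q, mul x (mul a b) = mul (mul x a) (mul x b)) →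
      (∀ x a b : Q, mul (mul a b) x = mul (mul a x) (mul b x)) →
      IsHamiltonian mul →
      ¬ (∀ x y u v : Q, mul (mul x y) (mul u v) = mul (mul x u) (mul y v)) →
      Nat.card Q = 729 →
        (∃ φ : Q ≃ C', ∀ a b : Q, φ (mul a b) = nabla₁ (φ a) (φ b)) ∨
        (∃ φ : Q ≃ C', ∀ a b : Q, φ (mul a b) = nabla₂ (φ a) (φ b))) ∧
    (¬ ∃ φ : C' ≃ C', ∀ a b : C', φ (nabla₁ a b) = nabla₂ (φ a) (φ b)) ∧
    (∃ φ : C' ≃ C', ∀ a b : C', φ (nabla₁ a b) = nabla₂ (φ b) (φ a)) := by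
  rw [nabla₁_eq_twistedMul, nabla₂_eq_twistedMul]
  have hdist (ε : ℤ) := isDistributiveQuasigroup_twistedMul (ε := ε)
  have hnonmed (ε : ℤ) (hε : ¬ 3 ∣ ε) := mt (three_dvd_of_twistedMul_medial (ε := ε)) hε
  refine ⟨⟨(hdist 1).isQuasigroup, (hdist 1).left_distrib, (hdist 1).right_distrib,
      isHamiltonian_twistedMul 1, hnonmed 1 (by norm_num), card_C'⟩,
    ⟨(hdist (-1)).isQuasigroup, (hdist (-1)).left_distrib, (hdist (-1)).right_distrib,
      isHamiltonian_twistedMul (-1), hnonmed (-1) (by norm_num)⟩, ?_, ?_, ?_⟩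
  · intro Q mul hq ld rd hham hmed hQ
    have hmul : IsDistributiveQuasigroup mul := ⟨fun a => (hq.2 a).1, fun a => (hq.2 a).2, ld, rd⟩
    obtain ⟨ε, rfl | rfl, hφ⟩ := hmul.exists_equiv_twistedMul hham hmed hQ
    exacts [Or.inl hφ, Or.inr hφ]
  · rintro ⟨φ, hφ⟩
    exact absurd (three_dvd_sub_of_equiv φ hφ) (by norm_num)
  · exact ⟨.ofBijective (reverse 1) (Finite.injective_iff_bijective.1 injective_reverse),
      reverse_twistedMul⟩
end

section
/- On C = ℤ/27ℤ × ℤ/9ℤ × ℤ/3ℤ define the operations ∇₁ and ∇₂ by a∇₁b = (26a₀+3a₁+2b₀+24b₁+18a₀a₂b₁+9a₀b₁b₂+9a₁a₂b₀+18a₁b₀b₂, 8a₁+3a₂+2b₁+6b₂, 2a₂+2b₂) and a∇₂b = (26a₀+3a₁+2b₀+24b₁+9a₀a₂b₁+18a₀b₁b₂+18a₁a₂b₀+9a₁b₀b₂, 8a₁+3a₂+2b₁+6b₂, 2a₂+2b₂). Then the map ξ : C → C given by ξ(a) = (18a₀³+9a₀²a₁+18a₀a₁²+10a₀, a₀+8a₁,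 a₀+a₁+a₂) (components computed by lifting to integers and reducing) is a bijection satisfying ξ(a∇₁b) = ξ(b)∇₂ξ(a) for all a, b ∈ C; i.e., ξ is an anti-isomorphism of C(∇₁) onto C(∇₂). -/
/-- The map `ξ(a) = (18a₀³+9a₀²a₁+18a₀a₁²+10a₀, a₀+8a₁, a₀+a₁+a₂)`, components
computed by lifting to integers (via `ZMod.val`) and reducing. -/
def xi (a : C') : C' :=
  (18 * a.1 ^ 3 + 9 * a.1 ^ 2 * (a.2.1.val : ZMod 27)
      + 18 * a.1 * (a.2.1.val : ZMod 27) ^ 2 + 10 * a.1,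
   (a.1.val : ZMod 9) + 8 * a.2.1,
   (a.1.val : ZMod 3) + (a.2.1.val : ZMod 3) + a.2.2)

/-!
Write `e₀ = (1, 0, 0)` and let `S` be the shift `(a₀, a₁, a₂) ↦ (a₁, a₂, 0)`. On integer
representatives `∇₁` and `∇₂` are `2b - a + 3S(a - b) ± 9D(a, b)e₀` with
`D(a, b) = (a₂ - b₂)(a₁b₀ - a₀b₁)`, and, since `x³ ≡ x` modulo 3, `ξ` is the linear map
`(a₀, a₀ - a₁, a₀ + a₁ + a₂)` plus `9q(a)e₀` with `q(a) = a₀a₁(a₀ - a₁)`. The linear parts are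
compatible, `∇₁` is `-(a + b)` modulo 3, and what remains is an identity modulo 3: the polarization
`q(a + b) - q(a) - q(b)` of the cubic form is `D(a, b) + D(ξ b, ξ a)`.
-/

theorem natCast_mul_val_intCast {N n k : ℕ} [NeZero n] (h : N ∣ k * n) (x : ℤ) :
    (k : ZMod N) * ((x : ZMod n).val : ZMod N) = k * (x : ZMod N) := by
  have hmod : (k : ℤ) * (x % n) ≡ k * x [ZMOD N] :=
    (Int.mod_modEq x n).mul_left'.of_dvd (by exact_mod_cast h)
  rw [← ZMod.val_intCast, ← ZMod.intCast_eq_intCast_iff] at hmod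
  exact_mod_cast hmod

/-- The reduction map `ℤ³ → C`, through which the computations in `C` are lifted to `ℤ`. -/
def reduceC (a : ℤ × ℤ × ℤ) : C' := (a.1, a.2.1, a.2.2)

theorem reduceC_surjective : Function.Surjective reduceC :=
  ZMod.intCast_surjective.prodMap (ZMod.intCast_surjective.prodMap ZMod.intCast_surjective)

theorem reduceC_eq_reduceC_iff {a b : ℤ × ℤ × ℤ} :
    reduceC a = reduceC b ↔
      a.1 ≡ b.1 [ZMOD 27] ∧ a.2.1 ≡ b.2.1 [ZMOD 9] ∧ a.2.2 ≡ b.2.2 [ZMOD 3] := by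
  simp only [reduceC, Prod.mk.injEq, ZMod.intCast_eq_intCast_iff, Nat.cast_ofNat]

/-- The form `D(a, b)`, which carries the cubic terms of `∇₁` and `∇₂`. -/
def crossForm (a b : ℤ × ℤ × ℤ) : ℤ := (a.2.2 - b.2.2) * (a.2.1 * b.1 - a.1 * b.2.1)

/-- The cubic form `q(a)`, which carries the nonlinear part of `ξ`. -/
def cubicForm (a : ℤ × ℤ × ℤ) : ℤ := a.1 * a.2.1 * (a.1 - a.2.1)

/-- The common integer model of the operations: `ε = 1` reduces to `∇₁` and `ε = -1` to `∇₂`. -/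
def nablaInt (ε : ℤ) (a b : ℤ × ℤ × ℤ) : ℤ × ℤ × ℤ :=
  (2 * b.1 - a.1 + 3 * (a.2.1 - b.2.1) + 9 * ε * crossForm a b,
   2 * b.2.1 - a.2.1 + 3 * (a.2.2 - b.2.2),
   2 * b.2.2 - a.2.2)

/-- The integer model of `ξ`, with its cubic term `18a₀³ + 9a₀` removed by `9x³ ≡ 9x [ZMOD 27]`. -/
def xiInt (a : ℤ × ℤ × ℤ) : ℤ × ℤ × ℤ :=
  (a.1 + 9 * cubicForm a, a.1 - a.2.1, a.1 + a.2.1 + a.2.2)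

theorem three_mul_val_intCast_zmod_three (x : ℤ) :
    3 * ((x : ZMod 3).val : ZMod 9) = 3 * x := by
  exact_mod_cast natCast_mul_val_intCast (N := 9) (k := 3) (by norm_num) x

theorem three_mul_val_intCast_zmod_nine (x : ℤ) :
    3 * ((x : ZMod 9).val : ZMod 27) = 3 * x := by
  exact_mod_cast natCast_mul_val_intCast (N := 27) (k := 3) (by norm_num) x

theorem nine_mul_val_intCast_zmod_three (x : ℤ) :
    9 * ((x : ZMod 3).val : ZMod 27) = 9 * x := by
  exact_mod_cast natCast_mul_val_intCast (N := 27) (k := 9) (by norm_num) x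

/-- `∇₁` and `∇₂` differ only in their first component, so this serves for both. -/
theorem nabla₁_reduceC_snd (ε : ℤ) (a b : ℤ × ℤ × ℤ) :
    (nabla₁ (reduceC a) (reduceC b)).2 = (reduceC (nablaInt ε a b)).2 := by
  simp only [nabla₁, reduceC, nablaInt]
  refine Prod.ext ?_ ?_ <;> push_cast
  · have h9 : (9 : ZMod 9) = 0 := rfl
    linear_combination three_mul_val_intCast_zmod_three a.2.2
      + 2 * three_mul_val_intCast_zmod_three b.2.2 + (a.2.1 + b.2.2 : ZMod 9) * h9
  · have h3 : (3 : ZMod 3) = 0 := rfl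
    linear_combination (a.2.2 : ZMod 3) * h3

theorem nabla₁_reduceC (a b : ℤ × ℤ × ℤ) :
    nabla₁ (reduceC a) (reduceC b) = reduceC (nablaInt 1 a b) := by
  refine Prod.ext ?_ (nabla₁_reduceC_snd 1 a b)
  obtain ⟨a₀, a₁, a₂⟩ := a
  obtain ⟨b₀, b₁, b₂⟩ := b
  have h27 : (27 : ZMod 27) = 0 := rfl
  have ha₁ := three_mul_val_intCast_zmod_nine a₁
  have hb₁ := three_mul_val_intCast_zmod_nine b₁
  have ha₂ := nine_mul_val_intCast_zmod_three a₂
  have hb₂ := nine_mul_val_intCast_zmod_three b₂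
  simp only [nabla₁, reduceC, nablaInt, crossForm]
  push_cast
  linear_combination ha₁ + 8 * hb₁
    + 2 * a₀ * ((b₁ : ZMod 9).val * ha₂ + 3 * a₂ * hb₁)
    + a₀ * ((b₁ : ZMod 9).val * hb₂ + 3 * b₂ * hb₁)
    + b₀ * ((a₁ : ZMod 9).val * ha₂ + 3 * a₂ * ha₁)
    + 2 * b₀ * ((a₁ : ZMod 9).val * hb₂ + 3 * b₂ * ha₁)
    + (a₀ + b₁ + a₀ * a₂ * b₁ + a₁ * b₀ * b₂) * h27

theorem nabla₂_reduceC (a b : ℤ × ℤ × ℤ) :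
    nabla₂ (reduceC a) (reduceC b) = reduceC (nablaInt (-1) a b) := by
  refine Prod.ext ?_ (nabla₁_reduceC_snd (-1) a b)
  obtain ⟨a₀, a₁, a₂⟩ := a
  obtain ⟨b₀, b₁, b₂⟩ := b
  have h27 : (27 : ZMod 27) = 0 := rfl
  have ha₁ := three_mul_val_intCast_zmod_nine a₁
  have hb₁ := three_mul_val_intCast_zmod_nine b₁
  have ha₂ := nine_mul_val_intCast_zmod_three a₂
  have hb₂ := nine_mul_val_intCast_zmod_three b₂
  simp only [nabla₂, reduceC, nablaInt, crossForm]
  push_cast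
  linear_combination ha₁ + 8 * hb₁
    + a₀ * ((b₁ : ZMod 9).val * ha₂ + 3 * a₂ * hb₁)
    + 2 * a₀ * ((b₁ : ZMod 9).val * hb₂ + 3 * b₂ * hb₁)
    + 2 * b₀ * ((a₁ : ZMod 9).val * ha₂ + 3 * a₂ * ha₁)
    + b₀ * ((a₁ : ZMod 9).val * hb₂ + 3 * b₂ * ha₁)
    + (a₀ + b₁ + a₀ * b₁ * b₂ + a₁ * a₂ * b₀) * h27

theorem xi_reduceC (a : ℤ × ℤ × ℤ) : xi (reduceC a) = reduceC (xiInt a) := by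
  obtain ⟨a₀, a₁, a₂⟩ := a
  have hcube : 9 * (a₀ : ZMod 27) ^ 3 = 9 * a₀ := by
    have hfermat := (Int.ModEq.pow_prime_eq_self Nat.prime_three a₀).mul_left' (c := 9)
    exact_mod_cast (ZMod.intCast_eq_intCast_iff _ _ 27).mpr hfermat
  simp only [xi, reduceC, xiInt, cubicForm]
  refine Prod.ext ?_ (Prod.ext ?_ ?_) <;> push_cast
  · have h27 : (27 : ZMod 27) = 0 := rfl
    have ha₁ := three_mul_val_intCast_zmod_nine a₁
    linear_combination 2 * hcube
      + (3 * a₀ ^ 2 + 6 * a₀ * ((a₁ : ZMod 9).val + a₁)) * ha₁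
      + (a₀ + a₀ * a₁ ^ 2) * h27
  · have h9 : (9 : ZMod 9) = 0 := rfl
    rw [ZMod.natCast_val, ZMod.cast_intCast (by norm_num)]
    linear_combination (a₁ : ZMod 9) * h9
  · rw [ZMod.natCast_val, ZMod.cast_intCast (by norm_num), ZMod.natCast_val,
      ZMod.cast_intCast (by norm_num)]

theorem cubicForm_congr {a b : ℤ × ℤ × ℤ} (h₀ : a.1 ≡ b.1 [ZMOD 3])
    (h₁ : a.2.1 ≡ b.2.1 [ZMOD 3]) : cubicForm a ≡ cubicForm b [ZMOD 3] :=
  (h₀.mul h₁).mul (h₀.sub h₁)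

theorem cubicForm_nablaInt_modEq (ε : ℤ) (a b : ℤ × ℤ × ℤ) :
    cubicForm (nablaInt ε a b) ≡ -cubicForm (a + b) [ZMOD 3] := by
  calc cubicForm (nablaInt ε a b) ≡ cubicForm (-(a + b)) [ZMOD 3] := by
        refine cubicForm_congr ?_ ?_
        · refine Int.modEq_iff_dvd.mpr ⟨-b.1 - (a.2.1 - b.2.1) - 3 * ε * crossForm a b, ?_⟩
          simp only [nablaInt, Prod.fst_add, Prod.fst_neg]; ring
        · refine Int.modEq_iff_dvd.mpr ⟨-b.2.1 - (a.2.2 - b.2.2), ?_⟩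
          simp only [nablaInt, Prod.snd_add, Prod.fst_add, Prod.fst_neg, Prod.snd_neg]; ring
    _ = -cubicForm (a + b) := by simp only [cubicForm, Prod.fst_neg, Prod.snd_neg]; ring

theorem crossForm_xiInt_modEq (a b : ℤ × ℤ × ℤ) :
    crossForm (xiInt a) (xiInt b) ≡
      ((a.1 + a.2.1 + a.2.2) - (b.1 + b.2.1 + b.2.2)) * (a.1 * b.2.1 - a.2.1 * b.1)
      [ZMOD 3] := by
  have hfst (c : ℤ × ℤ × ℤ) : (xiInt c).1 ≡ c.1 [ZMOD 3] := by
    refine Int.modEq_iff_dvd.mpr ⟨-3 * cubicForm c, ?_⟩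
    simp only [xiInt]; ring
  calc crossForm (xiInt a) (xiInt b)
      ≡ ((xiInt a).2.2 - (xiInt b).2.2) * ((xiInt a).2.1 * b.1 - a.1 * (xiInt b).2.1) [ZMOD 3] :=
        .mul_left _ (((hfst b).mul_left _).sub ((hfst a).mul_right _))
    _ = _ := by simp only [xiInt]; ring

theorem cubicForm_add_modEq (a b : ℤ × ℤ × ℤ) :
    cubicForm (a + b) ≡
      cubicForm a + cubicForm b + crossForm a b + crossForm (xiInt b) (xiInt a) [ZMOD 3] := by
  refine .trans ?_ ((crossForm_xiInt_modEq b a).symm.add_left _)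
  refine Int.modEq_iff_dvd.mpr ⟨a.2.1 * b.2.1 * (a.1 + b.1) - a.1 * b.1 * (a.2.1 + b.2.1), ?_⟩
  simp only [cubicForm, crossForm, Prod.fst_add, Prod.snd_add]; ring

theorem cubicForm_nablaInt_add_crossForm_modEq (ε : ℤ) (a b : ℤ × ℤ × ℤ) :
    cubicForm (nablaInt ε a b) + crossForm a b ≡
      2 * cubicForm a - cubicForm b - crossForm (xiInt b) (xiInt a) [ZMOD 3] := by
  calc cubicForm (nablaInt ε a b) + crossForm a b
      ≡ -cubicForm (a + b) + crossForm a b [ZMOD 3] :=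
        (cubicForm_nablaInt_modEq ε a b).add_right _
    _ ≡ -(cubicForm a + cubicForm b + crossForm a b + crossForm (xiInt b) (xiInt a))
          + crossForm a b [ZMOD 3] := (cubicForm_add_modEq a b).neg.add_right _
    _ ≡ 2 * cubicForm a - cubicForm b - crossForm (xiInt b) (xiInt a) [ZMOD 3] :=
        Int.modEq_iff_dvd.mpr ⟨cubicForm a, by ring⟩

theorem xiInt_nablaInt_fst_modEq (a b : ℤ × ℤ × ℤ) :
    (xiInt (nablaInt 1 a b)).1 ≡ (nablaInt (-1) (xiInt b) (xiInt a)).1 [ZMOD 27] := by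
  calc (xiInt (nablaInt 1 a b)).1
      = 2 * b.1 - a.1 + 3 * (a.2.1 - b.2.1)
          + 9 * (cubicForm (nablaInt 1 a b) + crossForm a b) := by
        simp only [xiInt, nablaInt]; ring
    _ ≡ 2 * b.1 - a.1 + 3 * (a.2.1 - b.2.1)
          + 9 * (2 * cubicForm a - cubicForm b - crossForm (xiInt b) (xiInt a)) [ZMOD 27] :=
        (cubicForm_nablaInt_add_crossForm_modEq 1 a b).mul_left'.add_left _
    _ = (nablaInt (-1) (xiInt b) (xiInt a)).1 := by simp only [xiInt, nablaInt]; ring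

theorem reduceC_xiInt_nablaInt (a b : ℤ × ℤ × ℤ) :
    reduceC (xiInt (nablaInt 1 a b)) = reduceC (nablaInt (-1) (xiInt b) (xiInt a)) := by
  refine reduceC_eq_reduceC_iff.mpr ⟨xiInt_nablaInt_fst_modEq a b, ?_, ?_⟩
  · refine Int.modEq_iff_dvd.mpr ⟨b.2.1 - a.2.1 - crossForm a b, ?_⟩
    simp only [xiInt, nablaInt]; ring
  · refine Int.modEq_iff_dvd.mpr ⟨a.1 - b.1 - 3 * crossForm a b, ?_⟩
    simp only [xiInt, nablaInt]; ring

theorem xi_surjective : Function.Surjective xi := by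
  intro c
  obtain ⟨⟨c₀, c₁, c₂⟩, rfl⟩ := reduceC_surjective c
  -- The first coordinate of `ξ(a)` is `a₀` modulo 9, so `q` at the preimage is read off from `c`.
  let y := c₀ - c₁
  let x := c₀ - 9 * cubicForm (c₀, y, 0)
  have hx : x ≡ c₀ [ZMOD 9] := Int.modEq_iff_dvd.mpr ⟨cubicForm (c₀, y, 0), by ring⟩
  have hq : cubicForm (x, y, c₂ - x - y) ≡ cubicForm (c₀, y, 0) [ZMOD 3] :=
    cubicForm_congr (hx.of_dvd (by norm_num)) rfl
  refine ⟨reduceC (x, y, c₂ - x - y), ?_⟩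
  rw [xi_reduceC, reduceC_eq_reduceC_iff]
  refine ⟨?_, ?_, ?_⟩
  · simpa [xiInt, x] using (hq.mul_left' (c := 9)).add_left x
  · simpa [xiInt, y] using hx.sub_right y
  · simp [xiInt]

/-- `ξ` is an anti-isomorphism of `C(∇₁)` onto `C(∇₂)`. -/
theorem xi_anti_isomorphism :
    Function.Bijective xi ∧ ∀ a b : C', xi (nabla₁ a b) = nabla₂ (xi b) (xi a) := by
  refine ⟨Finite.surjective_iff_bijective.mp xi_surjective, fun a b ↦ ?_⟩
  obtain ⟨a, rfl⟩ := reduceC_surjective a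
  obtain ⟨b, rfl⟩ := reduceC_surjective b
  simp only [nabla₁_reduceC, xi_reduceC, nabla₂_reduceC, reduceC_xiInt_nablaInt]
end

section
/- Let Q be a distributive quasigroup and P a finite minimal subquasigroup of Q; for a ∈ Q write Pa = {p·a : p ∈ P} and Pa·Pb = {(p·a)·(q·b) : p, q ∈ P}. Then: (i) the family {Pa : a ∈ Q} is a partition of Q (any two sets Pa and Pb are either disjoint or equal, and their union is Q); (ii) for all a, b ∈ Q, the cardinality |Pa·Pb| equals either |P| or |P|². -/
/-!
In a distributive quasigroup all translations are endomorphisms, and so is `y ↦ c / y` for every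
fixed `c`. A minimal subquasigroup `P` that meets a subquasigroup in two points is contained in it.

If `Pa` and `Pb` share a point, then they share a second one, produced by
`mul_mul_eq_of_mul_eq_mul_mul`, unless `a = b`; hence `Pa ⊆ Pb`, and equality holds by symmetry.
For minimal subquasigroups `A` and `B`, the left cosets `xB` with `x ∈ A` are likewise equal or
disjoint. If they are pairwise disjoint, multiplication is injective on `A × B`. If two of them
share a point `c`, then `A` meets `c / B` in two points, so that `A ⊆ c / B`: every `xB`
contains `c`, and all of them coincide.
-/

open scoped Cardinal

/-- A distributive quasigroup: a quasigroup whose left and right translations are endomorphisms. -/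
structure IsDistributiveQuasigroup_s10 {Q : Type*} (mul : Q → Q → Q) : Prop where
  isQuasigroup : IsQuasigroup mul
  left_distrib : ∀ x a b : Q, mul x (mul a b) = mul (mul x a) (mul x b)
  right_distrib : ∀ x a b : Q, mul (mul a b) x = mul (mul a x) (mul b x)

/-- A minimal subquasigroup: its only proper subquasigroups are singletons. In contrast to the
usual definition, `P` may itself be a singleton. -/
structure IsMinimalSubquasigroup {Q : Type*} (mul : Q → Q → Q) (P : Set Q) : Prop where
  isSubquasigroup : IsSubquasigroup mul P
  eq_singleton_of_ne : ∀ S : Set Q, IsSubquasigroup mul S → S ⊆ P → S ≠ P → ∃ x : Q, S = {x}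

section

variable {Q : Type*} {mul : Q → Q → Q}

local infixl:70 " ⋆ " => mul

namespace IsQuasigroup

variable {a x y : Q}

theorem left_cancel (hQ : IsQuasigroup mul) (h : a ⋆ x = a ⋆ y) : x = y :=
  (hQ.2 a).1.injective h

theorem right_cancel (hQ : IsQuasigroup mul) (h : x ⋆ a = y ⋆ a) : x = y :=
  (hQ.2 a).2.injective h

theorem exists_mul_left_eq (hQ : IsQuasigroup mul) (a b : Q) : ∃ x, a ⋆ x = b :=
  (hQ.2 a).1.surjective b

theorem exists_mul_right_eq (hQ : IsQuasigroup mul) (a b : Q) : ∃ x, x ⋆ a = b :=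
  (hQ.2 a).2.surjective b

protected theorem flip (hQ : IsQuasigroup mul) : IsQuasigroup (flip mul) :=
  ⟨hQ.1, fun a => (hQ.2 a).symm⟩

theorem iUnion_image_mul_right (hQ : IsQuasigroup mul) {P : Set Q} (hP : P.Nonempty) :
    ⋃ a : Q, (fun p => p ⋆ a) '' P = Set.univ := by
  obtain ⟨p, hp⟩ := hP
  refine Set.eq_univ_of_forall fun c => ?_
  obtain ⟨a, ha⟩ := hQ.exists_mul_left_eq p c
  exact Set.mem_iUnion.2 ⟨a, p, hp, ha⟩

end IsQuasigroup

namespace IsSubquasigroup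

variable {P S : Set Q} {Q' : Type*} {mul' : Q' → Q' → Q'} {f : Q → Q'}

protected theorem flip (hP : IsSubquasigroup mul P) : IsSubquasigroup (flip mul) P :=
  ⟨hP.1, fun a ha b hb => ⟨(hP.2 b hb a ha).1, (hP.2 a ha b hb).2.symm⟩⟩

protected theorem inter (hP : IsSubquasigroup mul P) (hS : IsSubquasigroup mul S)
    (hne : (P ∩ S).Nonempty) : IsSubquasigroup mul (P ∩ S) := by
  refine ⟨hne, fun a ha b hb => ?_⟩
  obtain ⟨mulP, leftP, rightP⟩ := hP.2 a ha.1 b hb.1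
  obtain ⟨mulS, leftS, rightS⟩ := hS.2 a ha.2 b hb.2
  exact ⟨⟨mulP, mulS⟩, fun x h => ⟨leftP x h, leftS x h⟩, fun y h => ⟨rightP y h, rightS y h⟩⟩

protected theorem preimage_s10 {T : Set Q'} (hT : IsSubquasigroup mul' T)
    (hf : ∀ x y, f (x ⋆ y) = mul' (f x) (f y)) (hne : (f ⁻¹' T).Nonempty) :
    IsSubquasigroup mul (f ⁻¹' T) := by
  refine ⟨hne, fun a ha b hb => ?_⟩
  obtain ⟨mul_mem, left_mem, right_mem⟩ := hT.2 (f a) ha (f b) hb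
  refine ⟨?_, fun x h => left_mem (f x) (by rw [← hf, h]),
    fun y h => right_mem (f y) (by rw [← hf, h])⟩
  rwa [Set.mem_preimage, hf]

protected theorem image (hQ : IsQuasigroup mul) (hQ' : IsQuasigroup mul')
    (hP : IsSubquasigroup mul P) (hf : ∀ x y, f (x ⋆ y) = mul' (f x) (f y)) :
    IsSubquasigroup mul' (f '' P) := by
  refine ⟨hP.1.image f, ?_⟩
  rintro _ ⟨a, ha, rfl⟩ _ ⟨b, hb, rfl⟩
  obtain ⟨mul_mem, left_mem, right_mem⟩ := hP.2 a ha b hb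
  refine ⟨⟨a ⋆ b, mul_mem, hf a b⟩, fun x hx => ?_, fun y hy => ?_⟩
  · obtain ⟨z, hz⟩ := hQ.exists_mul_left_eq a b
    exact ⟨z, left_mem z hz, hQ'.left_cancel (by rw [← hf, hz, hx])⟩
  · obtain ⟨z, hz⟩ := hQ.exists_mul_right_eq a b
    exact ⟨z, right_mem z hz, hQ'.right_cancel (by rw [← hf, hz, hy])⟩

end IsSubquasigroup

namespace IsMinimalSubquasigroup

variable {P S : Set Q} {Q' : Type*} {mul' : Q' → Q' → Q'} {f : Q → Q'}

protected theorem flip (hP : IsMinimalSubquasigroup mul P) :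
    IsMinimalSubquasigroup (flip mul) P :=
  ⟨hP.isSubquasigroup.flip, fun S hS => hP.eq_singleton_of_ne S hS.flip⟩

theorem subset_of_nontrivial_inter (hP : IsMinimalSubquasigroup mul P)
    (hS : IsSubquasigroup mul S) (hPS : (P ∩ S).Nontrivial) : P ⊆ S := by
  rw [← Set.inter_eq_left]
  by_contra hne
  obtain ⟨x, hx⟩ := hP.eq_singleton_of_ne _ (hP.isSubquasigroup.inter hS hPS.nonempty)
    Set.inter_subset_left hne
  exact Set.not_nontrivial_singleton (hx ▸ hPS)

protected theorem image (hQ : IsQuasigroup mul) (hQ' : IsQuasigroup mul')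
    (hP : IsMinimalSubquasigroup mul P) (hf : ∀ x y, f (x ⋆ y) = mul' (f x) (f y)) :
    IsMinimalSubquasigroup mul' (f '' P) := by
  refine ⟨hP.isSubquasigroup.image hQ hQ' hf, fun S hS hSP hne => ?_⟩
  have image_inter : f '' (P ∩ f ⁻¹' S) = S := by
    rw [Set.image_inter_preimage, Set.inter_eq_right.2 hSP]
  have inter_nonempty : (P ∩ f ⁻¹' S).Nonempty := Set.image_nonempty.1 (image_inter ▸ hS.1)
  have inter_isSubquasigroup : IsSubquasigroup mul (P ∩ f ⁻¹' S) :=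
    hP.isSubquasigroup.inter (hS.preimage_s10 hf inter_nonempty.right) inter_nonempty
  have inter_ne : P ∩ f ⁻¹' S ≠ P := fun h => hne (by rw [← image_inter, h])
  obtain ⟨x, hx⟩ :=
    hP.eq_singleton_of_ne _ inter_isSubquasigroup Set.inter_subset_left inter_ne
  exact ⟨f x, by rw [← image_inter, hx, Set.image_singleton]⟩

end IsMinimalSubquasigroup

namespace IsDistributiveQuasigroup_s10

variable {P A B : Set Q}

protected theorem flip (hQ : IsDistributiveQuasigroup_s10 mul) :
    IsDistributiveQuasigroup_s10 (flip mul) :=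
  ⟨hQ.isQuasigroup.flip, fun x a b => hQ.right_distrib x b a,
    fun x a b => hQ.left_distrib x b a⟩

theorem mul_self_s10 (hQ : IsDistributiveQuasigroup_s10 mul) (a : Q) : a ⋆ a = a :=
  (hQ.isQuasigroup.right_cancel (hQ.left_distrib a a a)).symm

theorem mul_eq_left_iff (hQ : IsDistributiveQuasigroup_s10 mul) {a b : Q} : a ⋆ b = a ↔ b = a :=
  ⟨fun h => hQ.isQuasigroup.left_cancel (h.trans (hQ.mul_self_s10 a).symm),
    fun h => h ▸ hQ.mul_self_s10 b⟩

/- A case of the medial law `(uv)(xy) = (ux)(vy)`, which fails in general. -/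
theorem mul_mul_mul_eq (hQ : IsDistributiveQuasigroup_s10 mul) {u v x y c : Q}
    (hux : u ⋆ x = c) (hvy : v ⋆ y = c) : (u ⋆ v) ⋆ (x ⋆ y) = c := by
  obtain ⟨w, hw⟩ := hQ.isQuasigroup.exists_mul_left_eq v x
  have hxy : x ⋆ y = u ⋆ w := hQ.isQuasigroup.left_cancel <|
    calc v ⋆ (x ⋆ y) = (v ⋆ x) ⋆ (u ⋆ x) := by rw [hQ.left_distrib, hvy, hux]
      _ = (v ⋆ u) ⋆ (v ⋆ w) := by rw [← hQ.right_distrib, hw]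
      _ = v ⋆ (u ⋆ w) := (hQ.left_distrib v u w).symm
  rw [hxy, ← hQ.left_distrib, hw, hux]

theorem mul_mul_eq_of_mul_eq_mul_mul (hQ : IsDistributiveQuasigroup_s10 mul) {p q a b : Q}
    (h : p ⋆ a = (q ⋆ p) ⋆ b) : (p ⋆ q) ⋆ a = q ⋆ b := by
  obtain ⟨d, rfl⟩ := hQ.isQuasigroup.exists_mul_right_eq b a
  have hpd : p ⋆ d = q ⋆ b := hQ.isQuasigroup.right_cancel <|
    calc (p ⋆ d) ⋆ (p ⋆ b) = (q ⋆ p) ⋆ b := by rw [← hQ.left_distrib, h]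
      _ = (q ⋆ b) ⋆ (p ⋆ b) := hQ.right_distrib b q p
  exact hQ.mul_mul_mul_eq hpd rfl

theorem isSubquasigroup_setOf_exists_mul_eq (hQ : IsDistributiveQuasigroup_s10 mul)
    (hB : IsSubquasigroup mul B) (c : Q) : IsSubquasigroup mul {x | ∃ y ∈ B, x ⋆ y = c} := by
  choose div div_mul using fun y => hQ.isQuasigroup.exists_mul_right_eq y c
  have div_hom (y z : Q) : div (y ⋆ z) = div y ⋆ div z := hQ.isQuasigroup.right_cancel <|
    (div_mul (y ⋆ z)).trans (hQ.mul_mul_mul_eq (div_mul y) (div_mul z)).symm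
  convert hB.image hQ.isQuasigroup hQ.isQuasigroup div_hom using 1
  ext x
  refine exists_congr fun y => and_congr_right fun _ => ⟨fun h => ?_, fun h => h ▸ div_mul y⟩
  exact hQ.isQuasigroup.right_cancel ((div_mul y).trans h.symm)

theorem image_mul_right_subset (hQ : IsDistributiveQuasigroup_s10 mul)
    (hP : IsMinimalSubquasigroup mul P) {p r a b : Q} (hp : p ∈ P) (hr : r ∈ P)
    (h : p ⋆ a = r ⋆ b) : (fun x => x ⋆ a) '' P ⊆ (fun x => x ⋆ b) '' P := by
  obtain ⟨q, rfl⟩ := hQ.isQuasigroup.exists_mul_right_eq p r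
  have hq : q ∈ P := (hP.isSubquasigroup.2 p hp _ hr).2.2 q rfl
  obtain rfl | hqp := eq_or_ne q p
  · rw [hQ.mul_self_s10] at h
    rw [hQ.isQuasigroup.left_cancel h]
  have hpq : p ⋆ q ∈ P := (hP.isSubquasigroup.2 p hp q hq).1
  have p_mem : p ∈ (fun x => x ⋆ a) ⁻¹' ((fun x => x ⋆ b) '' P) := ⟨q ⋆ p, hr, h.symm⟩
  have pq_mem : p ⋆ q ∈ (fun x => x ⋆ a) ⁻¹' ((fun x => x ⋆ b) '' P) :=
    ⟨q, hq, (hQ.mul_mul_eq_of_mul_eq_mul_mul h).symm⟩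
  rw [Set.image_subset_iff]
  refine hP.subset_of_nontrivial_inter ?_
    ⟨p ⋆ q, ⟨hpq, pq_mem⟩, p, ⟨hp, p_mem⟩, hQ.mul_eq_left_iff.not.2 hqp⟩
  have coset_isSubquasigroup : IsSubquasigroup mul ((fun x => x ⋆ b) '' P) :=
    hP.isSubquasigroup.image hQ.isQuasigroup hQ.isQuasigroup (hQ.right_distrib b)
  exact coset_isSubquasigroup.preimage_s10 (hQ.right_distrib a) ⟨p, p_mem⟩

theorem image_mul_right_eq_or_disjoint (hQ : IsDistributiveQuasigroup_s10 mul)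
    (hP : IsMinimalSubquasigroup mul P) (a b : Q) :
    (fun x => x ⋆ a) '' P = (fun x => x ⋆ b) '' P ∨
      Disjoint ((fun x => x ⋆ a) '' P) ((fun x => x ⋆ b) '' P) := by
  rw [or_iff_not_imp_right, Set.not_disjoint_iff]
  rintro ⟨_, ⟨p, hp, rfl⟩, ⟨r, hr, h⟩⟩
  exact (hQ.image_mul_right_subset hP hp hr h.symm).antisymm (hQ.image_mul_right_subset hP hr hp h)

theorem image_mul_left_eq_or_disjoint (hQ : IsDistributiveQuasigroup_s10 mul)
    (hP : IsMinimalSubquasigroup mul P) (a b : Q) :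
    (fun x => a ⋆ x) '' P = (fun x => b ⋆ x) '' P ∨
      Disjoint ((fun x => a ⋆ x) '' P) ((fun x => b ⋆ x) '' P) :=
  hQ.flip.image_mul_right_eq_or_disjoint hP.flip a b

theorem image_mul_left_eq_of_not_pairwiseDisjoint (hQ : IsDistributiveQuasigroup_s10 mul)
    (hA : IsMinimalSubquasigroup mul A) (hB : IsMinimalSubquasigroup mul B)
    (h : ¬ A.PairwiseDisjoint fun x => (fun y => x ⋆ y) '' B) {x x' : Q} (hx : x ∈ A)
    (hx' : x' ∈ A) : (fun y => x ⋆ y) '' B = (fun y => x' ⋆ y) '' B := by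
  obtain ⟨u, hu, v, hv, huv, hdisj⟩ : ∃ u ∈ A, ∃ v ∈ A, u ≠ v ∧
      ¬ Disjoint ((fun y => u ⋆ y) '' B) ((fun y => v ⋆ y) '' B) := by
    simpa only [Set.PairwiseDisjoint, Set.Pairwise, Function.onFun, not_forall, exists_prop]
      using h
  obtain ⟨c, huc, hvc⟩ := Set.not_disjoint_iff.1 hdisj
  have c_mem : A ⊆ {x | c ∈ (fun y => x ⋆ y) '' B} := hA.subset_of_nontrivial_inter
    (hQ.isSubquasigroup_setOf_exists_mul_eq hB.isSubquasigroup c)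
    ⟨u, ⟨hu, huc⟩, v, ⟨hv, hvc⟩, huv⟩
  exact (hQ.image_mul_left_eq_or_disjoint hB x x').resolve_right
    (Set.not_disjoint_iff.2 ⟨c, c_mem hx, c_mem hx'⟩)

theorem mk_image2_mul_eq_or (hQ : IsDistributiveQuasigroup_s10 mul)
    (hA : IsMinimalSubquasigroup mul A) (hB : IsMinimalSubquasigroup mul B) :
    #(Set.image2 mul A B) = #B ∨ #(Set.image2 mul A B) = #A * #B := by
  have mul_left_injective (x : Q) : Function.Injective (mul x) := (hQ.isQuasigroup.2 x).1.injective
  by_cases h : A.PairwiseDisjoint fun x => (fun y => x ⋆ y) '' B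
  · right
    rw [Set.pairwiseDisjoint_image_right_iff fun x _ => mul_left_injective x] at h
    rw [← Set.image_prod, Cardinal.mk_image_eq_of_injOn _ _ h, Cardinal.mk_setProd]
  · left
    obtain ⟨x, hx⟩ := hA.isSubquasigroup.1
    have image2_eq : Set.image2 mul A B = mul x '' B :=
      calc Set.image2 mul A B = ⋃ x' ∈ A, mul x' '' B := (Set.iUnion_image_left mul).symm
        _ = ⋃ x' ∈ A, mul x '' B := Set.iUnion₂_congr fun _ hx' =>
          hQ.image_mul_left_eq_of_not_pairwiseDisjoint hA hB h hx' hx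
        _ = mul x '' B := Set.biUnion_const ⟨x, hx⟩ _
    rw [image2_eq, Cardinal.mk_image_eq (mul_left_injective x)]

theorem mk_image2_mul_cosets_eq_or (hQ : IsDistributiveQuasigroup_s10 mul)
    (hP : IsMinimalSubquasigroup mul P) (a b : Q) :
    #(Set.image2 (fun p q => (p ⋆ a) ⋆ (q ⋆ b)) P P) = #P ∨
      #(Set.image2 (fun p q => (p ⋆ a) ⋆ (q ⋆ b)) P P) = #P ^ 2 := by
  have coset_isMinimal (c : Q) : IsMinimalSubquasigroup mul ((fun p => p ⋆ c) '' P) :=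
    hP.image hQ.isQuasigroup hQ.isQuasigroup (hQ.right_distrib c)
  have mk_coset (c : Q) : #((fun p => p ⋆ c) '' P) = #P :=
    Cardinal.mk_image_eq (hQ.isQuasigroup.2 c).2.injective
  have dichotomy := hQ.mk_image2_mul_eq_or (coset_isMinimal a) (coset_isMinimal b)
  rwa [mk_coset, mk_coset, Set.image2_image_left, Set.image2_image_right, ← sq] at dichotomy

end IsDistributiveQuasigroup_s10

end

theorem minimal_subquasigroup_cosets_general {Q : Type*} {mul : Q → Q → Q}
    (hQ : IsDistributiveQuasigroup_s10 mul) {P : Set Q} (hP : IsMinimalSubquasigroup mul P) :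
    ((∀ a b : Q,
        (fun p => mul p a) '' P = (fun p => mul p b) '' P ∨
        Disjoint ((fun p => mul p a) '' P) ((fun p => mul p b) '' P)) ∧
      (⋃ a : Q, (fun p => mul p a) '' P) = Set.univ) ∧
    (∀ a b : Q,
      #(Set.image2 (fun p q => mul (mul p a) (mul q b)) P P) = #P ∨
      #(Set.image2 (fun p q => mul (mul p a) (mul q b)) P P) = #P ^ 2) :=
  ⟨⟨hQ.image_mul_right_eq_or_disjoint hP,
    hQ.isQuasigroup.iUnion_image_mul_right hP.isSubquasigroup.1⟩,
    hQ.mk_image2_mul_cosets_eq_or hP⟩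

/-- Let `P` be a finite minimal subquasigroup (with more than one element, and every
subquasigroup properly contained in `P` is a singleton) of a distributive quasigroup `Q`.
Then the left cosets `Pa` form a partition of `Q`, and `|Pa·Pb|` equals `|P|` or `|P|²`. -/
theorem minimal_subquasigroup_cosets {Q : Type*} (mul : Q → Q → Q)
    (hQ : IsQuasigroup mul)
    (hld : ∀ x a b : Q, mul x (mul a b) = mul (mul x a) (mul x b))
    (hrd : ∀ x a b : Q, mul (mul a b) x = mul (mul a x) (mul b x))
    (P : Set Q) (hP : IsSubquasigroup mul P) (hPfin : P.Finite)
    (hPcard : 1 < P.ncard)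
    (hmin : ∀ S : Set Q, IsSubquasigroup mul S → S ⊆ P → S ≠ P → ∃ x : Q, S = {x}) :
    ((∀ a b : Q,
        (fun p => mul p a) '' P = (fun p => mul p b) '' P ∨
        Disjoint ((fun p => mul p a) '' P) ((fun p => mul p b) '' P)) ∧
      (⋃ a : Q, (fun p => mul p a) '' P) = Set.univ) ∧
    (∀ a b : Q,
      (Set.image2 (fun p q => mul (mul p a) (mul q b)) P P).ncard = P.ncard ∨
      (Set.image2 (fun p q => mul (mul p a) (mul q b)) P P).ncard = P.ncard ^ 2) := by
  obtain ⟨partition, card⟩ := minimal_subquasigroup_cosets_general ⟨hQ, hld, hrd⟩ ⟨hP, hmin⟩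
  exact ⟨partition, fun a b => (card a b).imp (congrArg Cardinal.toNat)
    fun h => (congrArg Cardinal.toNat h).trans (map_pow Cardinal.toNat _ 2)⟩
end

section
/- Let R be a commutative ring, Φ : R → ℤ/3ℤ a surjective ring homomorphism with kernel I, A an R-module, and τ : A × A × A → A an R-trilinear map satisfying: (T0) r·τ(x,y,z) = 0 for all r ∈ I and x, y, z ∈ A; (T1) τ(x,x,y) = 0; (T2) τ(τ(x,y,z),u,v) = 0; (T3) τ(u,v,τ(x,y,z)) = 0, for all x, y, z, u, v ∈ A. Define x⊛y = x + y + τ(x,y,x−y). Then: (1) ⊛ is commutative with two-sided identity 0; (2) for all x, b ∈ A there is a unique y with x⊛y = b (so (A,⊛) is a commutative loop); (3) (x⊛x)⊛(y⊛z) = (x⊛y)⊛(x⊛z) for all x, y, z (so (A,⊛) is a commutative Moufang loop); (4) r·(x⊛y) = (r·x)⊛(r·y) for all r ∈ R; (5) ((r·x)⊛y)⊛z = (r·x)⊛(y⊛z) for all r ∈ I and x, y, z ∈ A; (6) the centre {a ∈ A : (a⊛x)⊛y = a⊛(x⊛y) for all x, y ∈ A} equals {a ∈ A : τ(a,x,y)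 + τ(x,y,a) + τ(y,a,x) = 0 for all x, y ∈ A}. -/
/-!
Since nested values of `τ` vanish, the deviation of `⊛` from associativity can be computed exactly:
`(a ⊛ x) ⊛ y = a ⊛ (x ⊛ y) + σ a x y`, where `σ` is the cyclic sum of `τ`. The map `σ` is
trilinear, alternating, killed by `3`, and does not see the difference between `⊛` and `+` in its
arguments. Moving the brackets in both sides of the Moufang identity to the common value
`w = (x ⊛ (x ⊛ y)) ⊛ z` gives `w - 2 σ x y z` on the left and `w + σ x y z` on the right, and
these agree because `3 σ x y z = 0`.
-/

theorem natCast_mem_ker {R S : Type*} [Semiring R] [Semiring S] (p : ℕ) [CharP S p]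
    (Φ : R →+* S) : (p : R) ∈ RingHom.ker Φ := by
  rw [RingHom.mem_ker, map_natCast, CharP.cast_eq_zero]

theorem pow_sub_self_mem_ker {R : Type*} [Ring R] {p : ℕ} [Fact p.Prime] (Φ : R →+* ZMod p)
    (r : R) : r ^ p - r ∈ RingHom.ker Φ := by
  rw [RingHom.mem_ker, map_sub, map_pow, ZMod.pow_card, sub_self]

section

variable {R A : Type*} [CommRing R] [AddCommGroup A] [Module R A]

/-- The product `x + y + τ(x, y, x - y)` attached to a trilinear map `τ`, written `x ⊛[τ] y`. -/
def bracketMul (τ : A →ₗ[R] A →ₗ[R] A →ₗ[R] A) (x y : A) : A :=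
  x + y + τ x y (x - y)

local notation:65 x:66 "⊛[" τ "]" y:66 => bracketMul τ x y

/-- The sum of a trilinear map over the cyclic permutations of its arguments; it turns out to be
the additive associator of `bracketMul`. -/
def cyclicSum (τ : A →ₗ[R] A →ₗ[R] A →ₗ[R] A) (x y z : A) : A :=
  τ x y z + τ y z x + τ z x y

/-- Trilinear maps whose product `bracketMul` is a commutative Moufang loop: alternating in the
first two arguments, killed by `3`, and vanishing on their own values. Vanishing in the middle
argument is not a field, as it follows by antisymmetry. -/
structure IsMoufangBracket (τ : A →ₗ[R] A →ₗ[R] A →ₗ[R] A) : Prop where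
  isAlt : τ.IsAlt
  apply_apply_left : ∀ x y z u v, τ (τ x y z) u v = 0
  apply_apply_right : ∀ x y z u v, τ u v (τ x y z) = 0
  three_nsmul_apply : ∀ x y z, 3 • τ x y z = 0

/-- The bundled trilinear map with underlying function `τ`. -/
def trilinearMap (τ : A → A → A → A)
    (hadd₁ : ∀ x x' y z, τ (x + x') y z = τ x y z + τ x' y z)
    (hadd₂ : ∀ x y y' z, τ x (y + y') z = τ x y z + τ x y' z)
    (hadd₃ : ∀ x y z z', τ x y (z + z') = τ x y z + τ x y z')
    (hsmul₁ : ∀ (r : R) x y z, τ (r • x) y z = r • τ x y z)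
    (hsmul₂ : ∀ (r : R) x y z, τ x (r • y) z = r • τ x y z)
    (hsmul₃ : ∀ (r : R) x y z, τ x y (r • z) = r • τ x y z) :
    A →ₗ[R] A →ₗ[R] A →ₗ[R] A :=
  LinearMap.mk₂ R
    (fun x y ↦ { toFun := τ x y, map_add' := hadd₃ x y, map_smul' := fun r ↦ hsmul₃ r x y })
    (fun x x' y ↦ LinearMap.ext (hadd₁ x x' y))
    (fun r x y ↦ LinearMap.ext (hsmul₁ r x y))
    (fun x y y' ↦ LinearMap.ext (hadd₂ x y y'))
    (fun r x y ↦ LinearMap.ext (hsmul₂ r x y))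

variable {τ : A →ₗ[R] A →ₗ[R] A →ₗ[R] A}

theorem isAlt_apply_swap (hτ : τ.IsAlt) (x y z : A) : τ x y z = -τ y x z := by
  simpa using (LinearMap.congr_fun (hτ.neg y x) z).symm

theorem bracketMul_comm (hτ : τ.IsAlt) (x y : A) : x ⊛[τ] y = y ⊛[τ] x := by
  rw [bracketMul, bracketMul, isAlt_apply_swap hτ x y, ← map_neg, neg_sub, add_comm x y]

theorem zero_bracketMul (x : A) : 0 ⊛[τ] x = x := by
  simp [bracketMul]

theorem bracketMul_zero (x : A) : x ⊛[τ] 0 = x := by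
  simp [bracketMul]

theorem neg_bracketMul_self (hτ : τ.IsAlt) (x : A) : (-x) ⊛[τ] x = 0 := by
  simp [bracketMul, hτ.self_eq_zero x]

theorem smul_bracketMul {r : R} (hr : ∀ x y z, r ^ 3 • τ x y z = r • τ x y z) (x y : A) :
    r • (x ⊛[τ] y) = (r • x) ⊛[τ] (r • y) := by
  calc r • (x ⊛[τ] y)
    _ = r • x + r • y + r • τ x y (x - y) := by simp only [bracketMul, smul_add]
    _ = r • x + r • y + r ^ 3 • τ x y (x - y) := by rw [hr]
    _ = (r • x) ⊛[τ] (r • y) := by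
      simp only [bracketMul, ← smul_sub, map_smul, LinearMap.smul_apply, smul_smul, pow_three]

theorem cyclicSum_add_left (x x' y z : A) :
    cyclicSum τ (x + x') y z = cyclicSum τ x y z + cyclicSum τ x' y z := by
  simp only [cyclicSum, map_add, LinearMap.add_apply]
  abel

theorem cyclicSum_smul_left (r : R) (x y z : A) :
    cyclicSum τ (r • x) y z = r • cyclicSum τ x y z := by
  simp only [cyclicSum, map_smul, LinearMap.smul_apply, smul_add]

theorem cyclicSum_self (hτ : τ.IsAlt) (x y : A) : cyclicSum τ x x y = 0 := by
  simp [cyclicSum, hτ.self_eq_zero x, isAlt_apply_swap hτ y x]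

theorem cyclicSum_neg_self (hτ : τ.IsAlt) (x y : A) : cyclicSum τ (-x) x y = 0 := by
  rw [← neg_one_smul R x, cyclicSum_smul_left, cyclicSum_self hτ, smul_zero]

theorem cyclicSum_swap (hτ : τ.IsAlt) (x y z : A) :
    cyclicSum τ x y z = -cyclicSum τ y x z := by
  simp only [cyclicSum, isAlt_apply_swap hτ y x, isAlt_apply_swap hτ x z, isAlt_apply_swap hτ z y]
  abel

namespace IsMoufangBracket

variable (hτ : IsMoufangBracket τ)
include hτ

theorem apply_apply_middle (x y z u v : A) : τ u (τ x y z) v = 0 := by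
  rw [isAlt_apply_swap hτ.isAlt, hτ.apply_apply_left, neg_zero]

theorem apply_bracketMul_left (x y u v : A) : τ (x ⊛[τ] y) u v = τ x u v + τ y u v := by
  simp [bracketMul, -map_sub, hτ.apply_apply_left]

theorem apply_bracketMul_middle (x y u v : A) : τ u (x ⊛[τ] y) v = τ u x v + τ u y v := by
  simp [bracketMul, -map_sub, hτ.apply_apply_middle]

theorem apply_bracketMul_right (x y u v : A) : τ u v (x ⊛[τ] y) = τ u v x + τ u v y := by
  simp [bracketMul, -map_sub, hτ.apply_apply_right]

theorem cyclicSum_bracketMul_left (x x' y z : A) :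
    cyclicSum τ (x ⊛[τ] x') y z = cyclicSum τ x y z + cyclicSum τ x' y z := by
  rw [← cyclicSum_add_left]
  simp only [cyclicSum, hτ.apply_bracketMul_left, hτ.apply_bracketMul_middle,
    hτ.apply_bracketMul_right, map_add, LinearMap.add_apply]

theorem three_nsmul_cyclicSum (x y z : A) : 3 • cyclicSum τ x y z = 0 := by
  simp only [cyclicSum, smul_add, hτ.three_nsmul_apply, add_zero]

theorem bracketMul_assoc_add_cyclicSum (a x y : A) :
    (a ⊛[τ] x) ⊛[τ] y = a ⊛[τ] (x ⊛[τ] y) + cyclicSum τ a x y := by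
  have left : (a ⊛[τ] x) ⊛[τ] y
      = a + x + τ a x (a - x) + y + (τ a y (a + x - y) + τ x y (a + x - y)) := by
    rw [bracketMul, hτ.apply_bracketMul_left]
    simp only [map_sub, map_add, hτ.apply_bracketMul_right]
    simp only [bracketMul, map_sub]
  have right : a ⊛[τ] (x ⊛[τ] y)
      = a + (x + y + τ x y (x - y)) + (τ a x (a - (x + y)) + τ a y (a - (x + y))) := by
    rw [bracketMul, hτ.apply_bracketMul_middle]
    simp only [map_sub, map_add, hτ.apply_bracketMul_right]
    simp only [bracketMul, map_sub]
  rw [left, right, cyclicSum, isAlt_apply_swap hτ.isAlt y a]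
  simp only [map_sub, map_add]
  linear_combination (norm := module) hτ.three_nsmul_apply a y x

theorem bracketMul_assoc_iff (a x y : A) :
    (a ⊛[τ] x) ⊛[τ] y = a ⊛[τ] (x ⊛[τ] y) ↔ cyclicSum τ a x y = 0 := by
  rw [hτ.bracketMul_assoc_add_cyclicSum, add_eq_left]

theorem neg_bracketMul_cancel_left (x y : A) : (-x) ⊛[τ] (x ⊛[τ] y) = y := by
  rw [← (hτ.bracketMul_assoc_iff (-x) x y).2 (cyclicSum_neg_self hτ.isAlt x y),
    neg_bracketMul_self hτ.isAlt, zero_bracketMul]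

theorem existsUnique_bracketMul_eq (x b : A) : ∃! y, x ⊛[τ] y = b := by
  refine ⟨(-x) ⊛[τ] b, ?_, ?_⟩
  · simpa only [neg_neg] using hτ.neg_bracketMul_cancel_left (-x) b
  · rintro y rfl
    exact (hτ.neg_bracketMul_cancel_left x y).symm

theorem bracketMul_moufang (x y z : A) :
    (x ⊛[τ] x) ⊛[τ] (y ⊛[τ] z) = (x ⊛[τ] y) ⊛[τ] (x ⊛[τ] z) := by
  have left : (x ⊛[τ] (x ⊛[τ] y)) ⊛[τ] z
      = (x ⊛[τ] x) ⊛[τ] (y ⊛[τ] z) + 2 • cyclicSum τ x y z := by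
    rw [← (hτ.bracketMul_assoc_iff x x y).2 (cyclicSum_self hτ.isAlt x y),
      hτ.bracketMul_assoc_add_cyclicSum, hτ.cyclicSum_bracketMul_left, two_nsmul]
  have right : (x ⊛[τ] (x ⊛[τ] y)) ⊛[τ] z
      = (x ⊛[τ] y) ⊛[τ] (x ⊛[τ] z) - cyclicSum τ x y z := by
    rw [bracketMul_comm hτ.isAlt x (x ⊛[τ] y), hτ.bracketMul_assoc_add_cyclicSum,
      hτ.cyclicSum_bracketMul_left, cyclicSum_self hτ.isAlt, zero_add,
      cyclicSum_swap hτ.isAlt y x, sub_eq_add_neg]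
  linear_combination (norm := module)
    right - left - hτ.three_nsmul_cyclicSum x y z

theorem smul_bracketMul_assoc {r : R} (hr : ∀ x y z, r • τ x y z = 0) (x y z : A) :
    ((r • x) ⊛[τ] y) ⊛[τ] z = (r • x) ⊛[τ] (y ⊛[τ] z) := by
  rw [hτ.bracketMul_assoc_iff, cyclicSum_smul_left]
  simp only [cyclicSum, smul_add, hr, add_zero]

theorem setOf_bracketMul_assoc :
    {a | ∀ x y, (a ⊛[τ] x) ⊛[τ] y = a ⊛[τ] (x ⊛[τ] y)}
      = {a | ∀ x y, τ a x y + τ x y a + τ y a x = 0} :=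
  Set.ext fun a ↦ forall₂_congr (hτ.bracketMul_assoc_iff a)

end IsMoufangBracket

/-- For instance, `R ⧸ I` may be any product of copies of `ZMod 3`. -/
theorem ternary_algebra_gives_commutative_Moufang_loop_general
    (τ : A →ₗ[R] A →ₗ[R] A →ₗ[R] A) (I : Ideal R)
    (h_three : (3 : R) ∈ I) (h_cube : ∀ r : R, r ^ 3 - r ∈ I)
    (hT0 : ∀ r ∈ I, ∀ x y z : A, r • τ x y z = 0) (hT1 : τ.IsAlt)
    (hT2 : ∀ x y z u v : A, τ (τ x y z) u v = 0)
    (hT3 : ∀ x y z u v : A, τ u v (τ x y z) = 0) :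
    (∀ x y : A, x ⊛[τ] y = y ⊛[τ] x) ∧
    (∀ x : A, 0 ⊛[τ] x = x ∧ x ⊛[τ] 0 = x) ∧
    (∀ x b : A, ∃! y : A, x ⊛[τ] y = b) ∧
    (∀ x y z : A, (x ⊛[τ] x) ⊛[τ] (y ⊛[τ] z) = (x ⊛[τ] y) ⊛[τ] (x ⊛[τ] z)) ∧
    (∀ (r : R) (x y : A), r • (x ⊛[τ] y) = (r • x) ⊛[τ] (r • y)) ∧
    (∀ r ∈ I, ∀ x y z : A, ((r • x) ⊛[τ] y) ⊛[τ] z = (r • x) ⊛[τ] (y ⊛[τ] z)) ∧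
    ({a : A | ∀ x y : A, (a ⊛[τ] x) ⊛[τ] y = a ⊛[τ] (x ⊛[τ] y)}
      = {a : A | ∀ x y : A, τ a x y + τ x y a + τ y a x = 0}) := by
  have hτ : IsMoufangBracket τ :=
    ⟨hT1, hT2, hT3, fun x y z ↦ by simpa [ofNat_smul_eq_nsmul] using hT0 3 h_three x y z⟩
  have smul_cube (r : R) (x y z : A) : r ^ 3 • τ x y z = r • τ x y z :=
    sub_eq_zero.1 <| by rw [← sub_smul, hT0 _ (h_cube r)]
  exact ⟨bracketMul_comm hT1, fun x ↦ ⟨zero_bracketMul x, bracketMul_zero x⟩,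
    hτ.existsUnique_bracketMul_eq, hτ.bracketMul_moufang,
    fun r ↦ smul_bracketMul (smul_cube r), fun r hr ↦ hτ.smul_bracketMul_assoc (hT0 r hr),
    hτ.setOf_bracketMul_assoc⟩

end

/-- Let `R` be a commutative ring, `Φ : R → ℤ/3ℤ` a surjective ring homomorphism with
kernel `I`, `A` an `R`-module and `τ : A × A × A → A` an `R`-trilinear map satisfying
(T0) `r • τ(x,y,z) = 0` for `r ∈ I`; (T1) `τ(x,x,y) = 0`; (T2) `τ(τ(x,y,z),u,v) = 0`;
(T3) `τ(u,v,τ(x,y,z)) = 0`.  With `x ⊛ y = x + y + τ(x,y,x−y)` we have: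
(1) `⊛` is commutative with two-sided identity `0`;
(2) for all `x, b` there is a unique `y` with `x ⊛ y = b`;
(3) `(x⊛x)⊛(y⊛z) = (x⊛y)⊛(x⊛z)`;
(4) `r • (x⊛y) = (r•x) ⊛ (r•y)`;
(5) `((r•x)⊛y)⊛z = (r•x)⊛(y⊛z)` for `r ∈ I`;
(6) the centre of `(A,⊛)` is `{a | ∀ x y, τ(a,x,y) + τ(x,y,a) + τ(y,a,x) = 0}`. -/
theorem ternary_algebra_gives_commutative_Moufang_loop
    {R : Type*} [CommRing R] {A : Type*} [AddCommGroup A] [Module R A]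
    (Φ : R →+* ZMod 3) (hΦ : Function.Surjective Φ)
    (τ : A → A → A → A)
    (hadd₁ : ∀ x x' y z, τ (x + x') y z = τ x y z + τ x' y z)
    (hadd₂ : ∀ x y y' z, τ x (y + y') z = τ x y z + τ x y' z)
    (hadd₃ : ∀ x y z z', τ x y (z + z') = τ x y z + τ x y z')
    (hsmul₁ : ∀ (r : R) x y z, τ (r • x) y z = r • τ x y z)
    (hsmul₂ : ∀ (r : R) x y z, τ x (r • y) z = r • τ x y z)
    (hsmul₃ : ∀ (r : R) x y z, τ x y (r • z) = r • τ x y z)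
    (hT0 : ∀ r ∈ RingHom.ker Φ, ∀ x y z : A, r • τ x y z = 0)
    (hT1 : ∀ x y : A, τ x x y = 0)
    (hT2 : ∀ x y z u v : A, τ (τ x y z) u v = 0)
    (hT3 : ∀ x y z u v : A, τ u v (τ x y z) = 0)
    (op : A → A → A) (hop : ∀ x y : A, op x y = x + y + τ x y (x - y)) :
    (∀ x y : A, op x y = op y x) ∧
    (∀ x : A, op 0 x = x ∧ op x 0 = x) ∧
    (∀ x b : A, ∃! y : A, op x y = b) ∧
    (∀ x y z : A, op (op x x) (op y z) = op (op x y) (op x z)) ∧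
    (∀ (r : R) (x y : A), r • op x y = op (r • x) (r • y)) ∧
    (∀ r ∈ RingHom.ker Φ, ∀ x y z : A, op (op (r • x) y) z = op (r • x) (op y z)) ∧
    ({a : A | ∀ x y : A, op (op a x) y = op a (op x y)}
      = {a : A | ∀ x y : A, τ a x y + τ x y a + τ y a x = 0}) := by
  obtain rfl : op = bracketMul (trilinearMap τ hadd₁ hadd₂ hadd₃ hsmul₁ hsmul₂ hsmul₃) :=
    funext₂ hop
  exact ternary_algebra_gives_commutative_Moufang_loop_general _ (RingHom.ker Φ)
    (mod_cast natCast_mem_ker 3 Φ) (pow_sub_self_mem_ker Φ) hT0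
    (fun x ↦ LinearMap.ext (hT1 x)) hT2 hT3
end

section
/- Let R be a commutative noetherian ring, M an R-module, and N the R[X]-module of finitely supported sequences a : ℕ → M, where R acts componentwise and (X·a)(n) = a(n+1) for all n. Then the socle of N as an R[X]-module equals {a ∈ N : a(n) = 0 for all n ≥ 1 and a(0) ∈ Soc(M)}, i.e., the copy of the R-socle of M sitting in coordinate 0. -/
/-!
An element `m` lies in the socle exactly when the cyclic module it spans is semisimple, and over a
commutative ring the annihilator of a semisimple module is a radical ideal. Every element of
`M[X⁻¹]` is killed by a power of `X`, so `X` itself kills the socle. On the kernel of `X` a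
polynomial acts through its constant coefficient, so there the `R[X]`-socle and the `R`-socle
coincide, and this kernel is the copy of `M` in coordinate `0`.
-/

open Polynomial

/-- The shift endomorphism of the module of finitely supported sequences `ℕ → M`:
`(shift a) n = a (n + 1)`. -/
noncomputable def shiftMap (R M : Type*) [CommRing R] [AddCommGroup M] [Module R M] :
    (ℕ →₀ M) →ₗ[R] (ℕ →₀ M) :=
  Finsupp.lcomapDomain (fun n => n + 1) (fun _ _ h => Nat.succ_injective h)

/-- The module of divided powers `M[X⁻¹]`: the finitely supported sequences `ℕ → M`
with the `R[X]`-module structure in which `R` acts componentwise and `X` acts by the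
shift `(X • a) n = a (n + 1)`. -/
noncomputable abbrev DividedPowersModule (R M : Type*) [CommRing R] [AddCommGroup M]
    [Module R M] : Type _ :=
  Module.AEval' (shiftMap R M)

/-- The socle of a module: the sum of all its simple submodules. -/
def socle (R M : Type*) [Ring R] [AddCommGroup M] [Module R M] : Submodule R M :=
  sSup {S : Submodule R M | IsSimpleModule R ↥S}

section Socle

variable {R S M N : Type*} [Ring R] [Ring S] [AddCommGroup M] [Module R M] [AddCommGroup N]
  [Module S N]

theorem le_socle_iff_isSemisimpleModule {U : Submodule R M} :
    U ≤ socle R M ↔ IsSemisimpleModule R U := by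
  refine ⟨fun hU => ?_, fun _ => ?_⟩
  · have : IsSemisimpleModule R (socle R M) := by
      rw [socle, sSup_eq_iSup]
      exact isSemisimpleModule_biSup_of_isSemisimpleModule_submodule fun S hS =>
        have : IsSimpleModule R S := hS
        inferInstance
    exact .of_injective _ (Submodule.inclusion_injective hU)
  · rw [← U.map_subtype_top, ← IsSemisimpleModule.sSup_simples_eq_top R U,
      Submodule.map_le_iff_le_comap]
    refine sSup_le fun S hS => Submodule.map_le_iff_le_comap.mp (le_sSup ?_)
    exact (U.equivSubtypeMap S).isSimpleModule_iff.mp hS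

theorem mem_socle_iff_isSemisimpleModule_span {m : M} :
    m ∈ socle R M ↔ IsSemisimpleModule R (Submodule.span R {m}) := by
  rw [← le_socle_iff_isSemisimpleModule, Submodule.span_singleton_le_iff_mem]

theorem apply_mem_socle_iff {σ : R →+* S} [RingHomSurjective σ] {f : M →ₛₗ[σ] N}
    (hf : Function.Injective f) {m : M} : f m ∈ socle S N ↔ m ∈ socle R M := by
  rw [mem_socle_iff_isSemisimpleModule_span, mem_socle_iff_isSemisimpleModule_span,
    ← Set.image_singleton, ← Submodule.map_span]
  exact (LinearMap.isSemisimpleModule_iff_of_bijective (f.submoduleMap (Submodule.span R {m}))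
    ⟨fun x y h => Subtype.ext (hf (congrArg Subtype.val h)),
      f.submoduleMap_surjective _⟩).symm

theorem single_mem_socle_iff {ι : Type*} (i : ι) {m : M} :
    Finsupp.single i m ∈ socle R (ι →₀ M) ↔ m ∈ socle R M :=
  apply_mem_socle_iff (f := Finsupp.lsingle i) (Finsupp.single_injective i)

end Socle

theorem smul_eq_zero_of_mem_socle_of_pow_smul_eq_zero {R M : Type*} [CommRing R] [AddCommGroup M]
    [Module R M] {m : M} (hm : m ∈ socle R M) {r : R} {n : ℕ} (h : r ^ n • m = 0) :
    r • m = 0 := by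
  have : IsSemisimpleModule R (Submodule.span R {m}) :=
    mem_socle_iff_isSemisimpleModule_span.mp hm
  have hrad : (Submodule.span R {m}).annihilator.IsRadical :=
    IsSemisimpleModule.annihilator_isRadical _ R
  rw [← Submodule.mem_annihilator_span_singleton] at h ⊢
  exact hrad ⟨n, h⟩

theorem smul_eq_coeff_zero_smul_of_X_smul_eq_zero {R N : Type*} [CommSemiring R]
    [AddCommMonoid N] [Module R N] [Module R[X] N] [IsScalarTower R R[X] N] {v : N}
    (hv : (X : R[X]) • v = 0) (p : R[X]) : p • v = p.coeff 0 • v := by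
  rw [← algebraMap_smul R[X] (p.coeff 0), algebraMap_eq]
  nth_rewrite 1 [← divX_mul_X_add p]
  rw [add_smul, mul_smul, hv, smul_zero, zero_add]

section AEval

variable {R V : Type*} [CommRing R] [AddCommGroup V] [Module R V] (φ : Module.End R V)

/-- The inclusion of the kernel of `X`, which is `ker φ`, into `V`. It is encoded as a map
semilinear over `constantCoeff`, through which polynomials act on this kernel. -/
noncomputable def torsionByXToBase :
    Submodule.torsionBy R[X] (Module.AEval' φ) X →ₛₗ[constantCoeff (R := R)] V where
  toFun v := (Module.AEval'.of φ).symm v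
  map_add' _ _ := map_add _ _ _
  map_smul' p v := by
    rw [Submodule.coe_smul, smul_eq_coeff_zero_smul_of_X_smul_eq_zero v.2 p, map_smul]
    rfl

theorem torsionByXToBase_injective : Function.Injective (torsionByXToBase φ) :=
  (Module.AEval'.of φ).symm.injective.comp Subtype.val_injective

theorem of_mem_socle_iff_of_apply_eq_zero {v : V} (hv : φ v = 0) :
    Module.AEval'.of φ v ∈ socle R[X] (Module.AEval' φ) ↔ v ∈ socle R V := by
  have : RingHomSurjective (constantCoeff (R := R)) := ⟨constantCoeff_surjective⟩
  let K := Submodule.torsionBy R[X] (Module.AEval' φ) X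
  let k : K := ⟨Module.AEval'.of φ v, by
    rw [Submodule.mem_torsionBy_iff, Module.AEval'.X_smul_of, hv, map_zero]⟩
  calc Module.AEval'.of φ v ∈ socle R[X] (Module.AEval' φ)
    _ ↔ k ∈ socle R[X] K := apply_mem_socle_iff (m := k) K.injective_subtype
    _ ↔ torsionByXToBase φ k ∈ socle R V :=
      (apply_mem_socle_iff (torsionByXToBase_injective φ)).symm
    _ ↔ v ∈ socle R V := by rfl

theorem of_mem_socle_iff_of_pow_apply_eq_zero {v : V} {n : ℕ} (hv : (φ ^ n) v = 0) :
    Module.AEval'.of φ v ∈ socle R[X] (Module.AEval' φ) ↔ φ v = 0 ∧ v ∈ socle R V := by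
  refine ⟨fun h => ?_, fun h => (of_mem_socle_iff_of_apply_eq_zero φ h.1).mpr h.2⟩
  have hX : (X ^ n : R[X]) • Module.AEval'.of φ v = 0 := by
    rw [Module.AEval'.X_pow_smul_of, Module.End.smul_def, hv, map_zero]
  have hφ : φ v = 0 := by
    simpa only [Module.AEval'.X_smul_of, LinearEquiv.map_eq_zero_iff] using
      smul_eq_zero_of_mem_socle_of_pow_smul_eq_zero h hX
  exact ⟨hφ, (of_mem_socle_iff_of_apply_eq_zero φ hφ).mp h⟩

end AEval

section Shift

variable {R M : Type*} [CommRing R] [AddCommGroup M] [Module R M] (a : ℕ →₀ M)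

theorem shiftMap_apply (n : ℕ) : shiftMap R M a n = a (n + 1) := rfl

theorem shiftMap_pow_apply (n k : ℕ) : (shiftMap R M ^ n) a k = a (k + n) := by
  induction n generalizing k with
  | zero => rfl
  | succ n ih => rw [pow_succ', Module.End.mul_apply, shiftMap_apply, ih, add_right_comm, add_assoc]

theorem exists_shiftMap_pow_apply_eq_zero : ∃ n : ℕ, (shiftMap R M ^ n) a = 0 := by
  obtain ⟨n, hn⟩ := a.support.bddAbove
  refine ⟨n + 1, Finsupp.ext fun k => ?_⟩
  rw [shiftMap_pow_apply, Finsupp.zero_apply]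
  by_contra hk
  have : k + (n + 1) ≤ n := hn (Finsupp.mem_support_iff.mpr hk)
  omega

variable {a}

theorem shiftMap_eq_zero_iff : shiftMap R M a = 0 ↔ ∀ n : ℕ, 1 ≤ n → a n = 0 := by
  rw [Finsupp.ext_iff]
  refine ⟨fun h n hn => ?_, fun h n => h (n + 1) n.succ_pos⟩
  obtain ⟨k, rfl⟩ := Nat.exists_eq_add_of_le' hn
  exact h k

end Shift

theorem eq_single_zero_of_forall_one_le {M : Type*} [Zero M] {a : ℕ →₀ M}
    (h : ∀ n : ℕ, 1 ≤ n → a n = 0) : a = Finsupp.single 0 (a 0) := by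
  ext n
  cases n with
  | zero => rw [Finsupp.single_eq_same]
  | succ n => rw [h _ n.succ_pos, Finsupp.single_eq_of_ne n.succ_ne_zero]

theorem socle_dividedPowers_general (R M : Type*) [CommRing R] [AddCommGroup M] [Module R M]
    (a : ℕ →₀ M) :
    Module.AEval'.of (shiftMap R M) a ∈ socle (Polynomial R) (DividedPowersModule R M) ↔
      ((∀ n : ℕ, 1 ≤ n → a n = 0) ∧ a 0 ∈ socle R M) := by
  obtain ⟨n, hn⟩ := exists_shiftMap_pow_apply_eq_zero (R := R) a
  rw [of_mem_socle_iff_of_pow_apply_eq_zero _ hn, shiftMap_eq_zero_iff]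
  refine and_congr_right fun h => ?_
  rw [← single_mem_socle_iff (0 : ℕ) (m := a 0), ← eq_single_zero_of_forall_one_le h]

/-- For `R` commutative noetherian, the socle of the `R[X]`-module `N = M[X⁻¹]` is the
copy of the `R`-socle of `M` sitting in coordinate `0`. -/
theorem socle_dividedPowers (R M : Type*) [CommRing R] [IsNoetherianRing R]
    [AddCommGroup M] [Module R M] :
    ∀ a : ℕ →₀ M,
      Module.AEval'.of (shiftMap R M) a ∈ socle (Polynomial R) (DividedPowersModule R M) ↔
        ((∀ n : ℕ, 1 ≤ n → a n = 0) ∧ a 0 ∈ socle R M) :=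
  socle_dividedPowers_general R M
end
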